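/- (Lemma 2.7.) Let A := (π·λ₁(𝔻), π·μ₁(𝔻)) be the point of 𝓔 corresponding to the unit disc 𝔻 and let C := (π·λ₁(𝔻), 0). For every η > 0 there exists a continuous path γ : [0,1) → ℝ² such that γ(0) = A, γ(t) ∈ 𝓔 for every t ∈ [0,1), γ(t) ∈ [π·λ₁(𝔻), π·λ₁(𝔻) + η] × [0, π·μ₁(𝔻)] for every t ∈ [0,1), and γ(t) → C as t → 1⁻. -/

import Mathlib

open MeasureTheory Filter Set Real RealInnerProductSpace

noncomputable section

abbrev E2 : Type := EuclideanSpace ℝ (Fin 2)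

/-- First Dirichlet eigenvalue, variational characterization. -/
noncomputable def dEig1 (Ω : Set E2) : ℝ :=
  sInf { R : ℝ | ∃ u : E2 → ℝ, ContDiff ℝ (⊤ : ℕ∞) u ∧ HasCompactSupport u ∧
    tsupport u ⊆ Ω ∧ (∫ x, (u x)^2) ≠ 0 ∧
    R = (∫ x, ‖fderiv ℝ u x‖^2) / (∫ x, (u x)^2) }

/-- First nontrivial Neumann eigenvalue, variational characterization. -/
noncomputable def nEig1 (Ω : Set E2) : ℝ :=
  sInf { R : ℝ | ∃ u : E2 → ℝ, ContDiff ℝ (⊤ : ℕ∞) u ∧ (∫ x in Ω, u x) = 0 ∧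
    (∫ x in Ω, (u x)^2) ≠ 0 ∧
    R = (∫ x in Ω, ‖fderiv ℝ u x‖^2) / (∫ x in Ω, (u x)^2) }

/-- The cone C(y, ξ, ε). -/
def coneSet (y ξ : E2) (ε : ℝ) : Set E2 :=
  { z | Real.cos ε * ‖z - y‖ ≤ ⟪z - y, ξ⟫ ∧ 0 < ‖z - y‖ ∧ ‖z - y‖ < ε }

/-- The uniform ε-cone property. -/
def ConeProperty (Ω : Set E2) (ε : ℝ) : Prop :=
  ∀ x ∈ frontier Ω, ∃ ξ : E2, ‖ξ‖ = 1 ∧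
    ∀ y ∈ closure Ω ∩ Metric.ball x ε, coneSet y ξ ε ⊆ Ω

/-- The Blaschke–Santaló diagram 𝓔 for general (cone-property, i.e. Lipschitz) open sets. -/
def diagE : Set (ℝ × ℝ) :=
  { p | ∃ Ω : Set E2, Ω.Nonempty ∧ IsOpen Ω ∧ Bornology.IsBounded Ω ∧
      (∃ ε > 0, ConeProperty Ω ε) ∧
      p = ((volume Ω).toReal * dEig1 Ω, (volume Ω).toReal * nEig1 Ω) }

/-- The open unit disc in the plane. -/
def unitDisc : Set E2 := Metric.ball 0 1

/-- radial unit vector -/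
def er (θ : ℝ) : E2 := !₂[Real.cos θ, Real.sin θ]
/-- angular unit vector -/
def et (θ : ℝ) : E2 := !₂[-Real.sin θ, Real.cos θ]

lemma er_zero (θ : ℝ) : er θ 0 = Real.cos θ := by simp [er]
lemma er_one (θ : ℝ) : er θ 1 = Real.sin θ := by simp [er]
lemma norm_er (θ : ℝ) : ‖er θ‖ = 1 := by
  rw [EuclideanSpace.norm_eq]; simp [er]

lemma norm_smul_er {r : ℝ} (hr : 0 ≤ r) (θ : ℝ) : ‖r • er θ‖ = r := by
  rw [norm_smul, norm_er, mul_one, Real.norm_of_nonneg hr]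

lemma hasDerivAt_er (θ : ℝ) : HasDerivAt er (et θ) θ := by
  have e1 : er = fun θ => Real.cos θ • (!₂[1, 0] : E2) + Real.sin θ • (!₂[0, 1] : E2) := by
    funext θ; ext i; fin_cases i <;> simp [er]
  have e2 : et θ = (-Real.sin θ) • (!₂[1, 0] : E2) + Real.cos θ • (!₂[0, 1] : E2) := by
    ext i; fin_cases i <;> simp [et]
  rw [e1, e2]
  exact ((Real.hasDerivAt_cos θ).smul_const _).add ((Real.hasDerivAt_sin θ).smul_const _)

lemma contDiff_er : ContDiff ℝ (⊤ : ℕ∞) er := by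
  rw [contDiff_euclidean]
  intro i
  fin_cases i
  · simpa [er] using Real.contDiff_cos
  · simpa [er] using Real.contDiff_sin

lemma continuous_er : Continuous er := contDiff_er.continuous

lemma continuous_et : Continuous et := by
  have : ContDiff ℝ (⊤ : ℕ∞) et := by
    rw [contDiff_euclidean]
    intro i
    fin_cases i
    · simpa [et] using Real.contDiff_sin.neg
    · simpa [et] using Real.contDiff_cos
  exact this.continuous

lemma norm_sq_dual (l : E2 →L[ℝ] ℝ) (θ : ℝ) : ‖l‖ ^ 2 = l (er θ) ^ 2 + l (et θ) ^ 2 := by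
  obtain ⟨v, rfl⟩ := (InnerProductSpace.toDual ℝ E2).surjective l
  rw [LinearIsometryEquiv.norm_map]
  simp only [InnerProductSpace.toDual_apply_apply]
  rw [EuclideanSpace.norm_sq_eq]
  simp only [PiLp.inner_apply, Fin.sum_univ_two, er, et]
  simp
  nlinarith [Real.sin_sq_add_cos_sq θ]

lemma integral_E2 (g : E2 → ℝ) : ∫ x, g x = ∫ p : ℝ × ℝ, g !₂[p.1, p.2] := by
  have h1 := (PiLp.volume_preserving_toLp (Fin 2)).integral_comp
    (MeasurableEquiv.toLp 2 (Fin 2 → ℝ)).measurableEmbedding g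
  have h2 := ((volume_preserving_finTwoArrow ℝ).symm).integral_comp
    (MeasurableEquiv.finTwoArrow (α := ℝ)).symm.measurableEmbedding (fun y => g (WithLp.toLp 2 y))
  rw [← h1, ← h2]
  rfl

lemma exists_polar (x : E2) : ∃ r θ : ℝ, 0 ≤ r ∧ r = ‖x‖ ∧ x = r • er θ := by
  let z : ℂ := ⟨x 0, x 1⟩
  have hz : ‖z‖ = ‖x‖ := by
    rw [EuclideanSpace.norm_eq, Complex.norm_eq_sqrt_sq_add_sq]
    simp [z]
  refine ⟨‖x‖, Complex.arg z, norm_nonneg _, rfl, ?_⟩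
  ext i
  fin_cases i
  · simp [er, ← hz, Complex.norm_mul_cos_arg, z]
  · simp [er, ← hz, Complex.norm_mul_sin_arg, z]

lemma polar_ball (g : E2 → ℝ) (hg : Continuous g) (R : ℝ) (hR : 0 ≤ R) :
    ∫ x in Metric.ball (0 : E2) R, g x =
      ∫ r in (0:ℝ)..R, ∫ θ in (-π)..π, r * g (r • er θ) := by
  have hpi : -π ≤ π := by linarith [Real.pi_pos]
  rw [← integral_indicator Metric.isOpen_ball.measurableSet, integral_E2,
    ← integral_comp_polarCoord_symm]
  have e1 : ∀ p ∈ polarCoord.target,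
      p.1 • (Metric.ball (0 : E2) R).indicator g
        !₂[(polarCoord.symm p).1, (polarCoord.symm p).2] =
      (Ioo 0 R ×ˢ Ioo (-π) π).indicator (fun p : ℝ × ℝ => p.1 * g (p.1 • er p.2)) p := by
    rintro ⟨r, θ⟩ hp
    simp only [polarCoord_target, mem_prod, mem_Ioi] at hp
    have : (!₂[(polarCoord.symm (r, θ)).1, (polarCoord.symm (r, θ)).2] : E2) = r • er θ := by
      ext i; fin_cases i <;> simp [er, polarCoord_symm_apply]
    rw [this]
    by_cases h : r < R
    · rw [indicator_of_mem, indicator_of_mem]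
      · rfl
      · exact ⟨⟨hp.1, h⟩, hp.2⟩
      · simpa [norm_smul_er hp.1.le] using h
    · rw [indicator_of_notMem, indicator_of_notMem]
      · simp
      · simp [h]
      · simpa [norm_smul_er hp.1.le] using h
  rw [setIntegral_congr_fun polarCoord.open_target.measurableSet e1]
  have hms : MeasurableSet (Ioo 0 R ×ˢ Ioo (-π) π) := measurableSet_Ioo.prod measurableSet_Ioo
  rw [integral_indicator hms, Measure.restrict_restrict hms]
  have : Ioo 0 R ×ˢ Ioo (-π) π ∩ polarCoord.target = Ioo 0 R ×ˢ Ioo (-π) π := by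
    apply inter_eq_left.2
    rw [polarCoord_target]
    exact prod_mono Ioo_subset_Ioi_self le_rfl
  rw [this]
  have hc : Continuous (fun p : ℝ × ℝ => p.1 * g (p.1 • er p.2)) := by
    have := continuous_er
    fun_prop
  rw [Measure.volume_eq_prod, setIntegral_prod]
  · rw [intervalIntegral.integral_of_le hR, ← integral_Ioc_eq_integral_Ioo]
    congr 1; ext r
    rw [intervalIntegral.integral_of_le hpi, ← integral_Ioc_eq_integral_Ioo]
  · apply (hc.continuousOn.integrableOn_compact (isCompact_Icc.prod isCompact_Icc)).mono_set
    exact prod_mono Ioo_subset_Icc_self Ioo_subset_Icc_self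

/-- radial derivative -/
def Dr (u : E2 → ℝ) (r θ : ℝ) : ℝ := fderiv ℝ u (r • er θ) (er θ)
/-- angular derivative divided by r -/
def Dt (u : E2 → ℝ) (r θ : ℝ) : ℝ := fderiv ℝ u (r • er θ) (et θ)

lemma hasDerivAt_r {u : E2 → ℝ} (hu : ContDiff ℝ (⊤ : ℕ∞) u) (r θ : ℝ) :
    HasDerivAt (fun r => u (r • er θ)) (Dr u r θ) r := by
  have h := (hu.differentiable (by simp) (r • er θ)).hasFDerivAt
  have h2 : HasDerivAt (fun r : ℝ => r • er θ) (er θ) r := by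
    simpa using (hasDerivAt_id r).smul_const (er θ)
  exact h.comp_hasDerivAt r h2

lemma hasDerivAt_t {u : E2 → ℝ} (hu : ContDiff ℝ (⊤ : ℕ∞) u) (r θ : ℝ) :
    HasDerivAt (fun θ => u (r • er θ)) (r * Dt u r θ) θ := by
  have h := (hu.differentiable (by simp) (r • er θ)).hasFDerivAt
  have h2 : HasDerivAt (fun θ : ℝ => r • er θ) (r • et θ) θ := (hasDerivAt_er θ).const_smul r
  have := h.comp_hasDerivAt θ h2
  rw [map_smul, smul_eq_mul] at this
  exact this

lemma continuous_fderiv_of {u : E2 → ℝ} (hu : ContDiff ℝ (⊤ : ℕ∞) u) :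
    Continuous (fderiv ℝ u) := hu.continuous_fderiv (by simp)

lemma continuous_Dr {u : E2 → ℝ} (hu : ContDiff ℝ (⊤ : ℕ∞) u) :
    Continuous (fun p : ℝ × ℝ => Dr u p.1 p.2) := by
  have := continuous_fderiv_of hu
  have := continuous_er
  unfold Dr
  fun_prop

lemma continuous_Dt {u : E2 → ℝ} (hu : ContDiff ℝ (⊤ : ℕ∞) u) :
    Continuous (fun p : ℝ × ℝ => Dt u p.1 p.2) := by
  have := continuous_fderiv_of hu
  have := continuous_er
  have := continuous_et
  unfold Dt
  fun_prop

lemma continuous_U {u : E2 → ℝ} (hu : ContDiff ℝ (⊤ : ℕ∞) u) :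
    Continuous (fun p : ℝ × ℝ => u (p.1 • er p.2)) := by
  have := hu.continuous
  have := continuous_er
  fun_prop

lemma polar_energy {u : E2 → ℝ} (hu : ContDiff ℝ (⊤ : ℕ∞) u) (R : ℝ) (hR : 0 ≤ R) :
    ∫ x in Metric.ball (0 : E2) R, ‖fderiv ℝ u x‖ ^ 2 =
      ∫ r in (0:ℝ)..R, ∫ θ in (-π)..π, r * (Dr u r θ ^ 2 + Dt u r θ ^ 2) := by
  rw [polar_ball (fun x => ‖fderiv ℝ u x‖ ^ 2) ((continuous_fderiv_of hu).norm.pow 2) R hR]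
  congr 1; ext r; congr 1; ext θ
  rw [norm_sq_dual _ θ]; rfl

open scoped Topology

/-- smooth cutoff on (0,1) -/
def chi (δ r : ℝ) : ℝ :=
  Real.smoothTransition ((r - δ) / δ) * Real.smoothTransition ((1 - δ - r) / δ)

lemma chi_contDiff (δ : ℝ) : ContDiff ℝ (⊤ : ℕ∞) (chi δ) := by
  have h1 : ContDiff ℝ (⊤ : ℕ∞) (fun r : ℝ => (r - δ) / δ) := by fun_prop
  have h2 : ContDiff ℝ (⊤ : ℕ∞) (fun r : ℝ => (1 - δ - r) / δ) := by fun_prop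
  exact (Real.smoothTransition.contDiff.comp h1).mul (Real.smoothTransition.contDiff.comp h2)

lemma chi_nonneg (δ r : ℝ) : 0 ≤ chi δ r :=
  mul_nonneg (Real.smoothTransition.nonneg _) (Real.smoothTransition.nonneg _)

lemma chi_le_one (δ r : ℝ) : chi δ r ≤ 1 :=
  mul_le_one₀ (Real.smoothTransition.le_one _) (Real.smoothTransition.nonneg _)
    (Real.smoothTransition.le_one _)

lemma chi_left {δ r : ℝ} (hδ : 0 < δ) (h : r ≤ δ) : chi δ r = 0 := by
  unfold chi
  rw [Real.smoothTransition.zero_of_nonpos, zero_mul]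
  exact div_nonpos_of_nonpos_of_nonneg (by linarith) hδ.le

lemma chi_right {δ r : ℝ} (hδ : 0 < δ) (h : 1 - δ ≤ r) : chi δ r = 0 := by
  unfold chi
  rw [Real.smoothTransition.zero_of_nonpos (x := (1 - δ - r) / δ), mul_zero]
  exact div_nonpos_of_nonpos_of_nonneg (by linarith) hδ.le

lemma chi_mid {δ r : ℝ} (hδ : 0 < δ) (h : 2 * δ ≤ r) (h' : r ≤ 1 - 2 * δ) : chi δ r = 1 := by
  unfold chi
  rw [Real.smoothTransition.one_of_one_le, Real.smoothTransition.one_of_one_le, mul_one]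
  · rw [le_div_iff₀ hδ]; linarith
  · rw [le_div_iff₀ hδ]; linarith

/-- reparametrisation -/
def psi (δ r : ℝ) : ℝ := ∫ s in (0:ℝ)..r, chi δ s

lemma chi_cont (δ : ℝ) : Continuous (chi δ) := (chi_contDiff δ).continuous

lemma psi_hasDerivAt (δ r : ℝ) : HasDerivAt (psi δ) (chi δ r) r :=
  intervalIntegral.integral_hasDerivAt_right ((chi_cont δ).intervalIntegrable _ _)
    ((chi_cont δ).stronglyMeasurableAtFilter _ _) (chi_cont δ).continuousAt

lemma psi_contDiff (δ : ℝ) : ContDiff ℝ (⊤ : ℕ∞) (psi δ) := by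
  apply contDiff_infty_iff_deriv.2
  refine ⟨fun r => (psi_hasDerivAt δ r).differentiableAt, ?_⟩
  have : deriv (psi δ) = chi δ := funext fun r => (psi_hasDerivAt δ r).deriv
  rw [this]; exact chi_contDiff δ

lemma psi_left {δ r : ℝ} (hδ : 0 < δ) (h : r ≤ δ) : psi δ r = 0 := by
  unfold psi
  rw [intervalIntegral.integral_congr (g := fun _ => (0:ℝ))]
  · simp
  · intro x hx
    rw [uIcc, mem_Icc] at hx
    exact chi_left hδ (hx.2.trans (max_le hδ.le h))

lemma psi_right {δ r : ℝ} (hδ : 0 < δ) (h : 1 - δ ≤ r) : psi δ r = psi δ 1 := by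
  have h3 := intervalIntegral.integral_add_adjacent_intervals
    ((chi_cont δ).intervalIntegrable 0 r) ((chi_cont δ).intervalIntegrable (μ := volume) r 1)
  have : ∫ x in r..1, chi δ x = 0 := by
    rw [intervalIntegral.integral_congr (g := fun _ => (0:ℝ))]
    · simp
    · intro x hx
      rw [uIcc, mem_Icc] at hx
      exact chi_right hδ ((le_min h (by linarith)).trans hx.1)
  unfold psi
  rw [← h3, this, add_zero]

lemma psi_nonneg {δ r : ℝ} (hr : 0 ≤ r) : 0 ≤ psi δ r :=
  intervalIntegral.integral_nonneg hr fun x _ => chi_nonneg δ x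

lemma psi_le {δ r : ℝ} (hr : 0 ≤ r) : psi δ r ≤ r := by
  have := intervalIntegral.integral_mono_on hr ((chi_cont δ).intervalIntegrable 0 r)
    (intervalIntegrable_const (c := (1:ℝ)) (μ := volume)) (fun x _ => chi_le_one δ x)
  simpa [psi] using this

/-- scale sequence -/
def dl (n : ℕ) : ℝ := 1 / ((n : ℝ) + 3)

lemma dl_pos (n : ℕ) : 0 < dl n := by unfold dl; positivity
lemma dl_lt (n : ℕ) : dl n < 1 / 2 := by
  unfold dl; rw [div_lt_div_iff₀ (by positivity) (by norm_num)]
  have : (0:ℝ) ≤ n := by positivity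
  linarith

lemma dl_tendsto : Tendsto dl atTop (𝓝 0) := by
  have : Tendsto (fun n : ℕ => (n:ℝ) + 3) atTop atTop :=
    tendsto_atTop_add_const_right _ _ tendsto_natCast_atTop_atTop
  refine this.inv_tendsto_atTop.congr fun n => ?_
  simp [dl]

lemma chi_ev {r : ℝ} (h0 : 0 < r) (h1 : r < 1) : ∀ᶠ n in atTop, chi (dl n) r = 1 := by
  have h2 : Tendsto (fun n => 2 * dl n) atTop (𝓝 0) := by simpa using dl_tendsto.const_mul 2
  filter_upwards [h2.eventually_lt_const h0, h2.eventually_lt_const (sub_pos.2 h1)] with n a b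
  exact chi_mid (dl_pos n) a.le (by linarith)

lemma psi_tendsto {r : ℝ} (h0 : 0 ≤ r) (h1 : r ≤ 1) :
    Tendsto (fun n => psi (dl n) r) atTop (𝓝 r) := by
  have : Tendsto (fun n => ∫ s in (0:ℝ)..r, chi (dl n) s) atTop (𝓝 (∫ s in (0:ℝ)..r, (1:ℝ))) := by
    apply intervalIntegral.tendsto_integral_filter_of_dominated_convergence (fun _ => 1)
    · exact Eventually.of_forall fun n => (chi_cont _).aestronglyMeasurable
    · refine Eventually.of_forall fun n => Eventually.of_forall fun x _ => ?_
      rw [Real.norm_of_nonneg (chi_nonneg _ _)]; exact chi_le_one _ _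
    · exact intervalIntegrable_const
    · have : ∀ᵐ x : ℝ, x ≠ 1 := by simp [ae_iff]
      filter_upwards [this] with x hx hx2
      rw [uIoc_of_le h0] at hx2
      apply tendsto_const_nhds.congr'
      have hxl : x < 1 := lt_of_le_of_ne (hx2.2.trans h1) hx
      filter_upwards [chi_ev hx2.1 hxl] with n hn
      exact hn.symm
  rw [intervalIntegral.integral_const] at this
  simp only [sub_zero, smul_eq_mul, mul_one] at this
  exact this

lemma dct_psi (H : ℝ × ℝ × ℝ × ℝ × ℝ → ℝ) (hH : Continuous H) :
    Tendsto (fun n => ∫ r in (0:ℝ)..1,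
      H (r, psi (dl n) r, chi (dl n) r, psi (dl n) r / r, psi (dl n) 1)) atTop
      (𝓝 (∫ r in (0:ℝ)..1, H (r, r, 1, 1, 1))) := by
  have hK : IsCompact (Icc (0:ℝ) 1 ×ˢ Icc (0:ℝ) 1 ×ˢ Icc (0:ℝ) 1 ×ˢ Icc (0:ℝ) 1 ×ˢ Icc (0:ℝ) 1) :=
    isCompact_Icc.prod (isCompact_Icc.prod (isCompact_Icc.prod (isCompact_Icc.prod isCompact_Icc)))
  obtain ⟨C, hC⟩ := hK.exists_bound_of_continuousOn hH.continuousOn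
  apply intervalIntegral.tendsto_integral_filter_of_dominated_convergence (fun _ => C)
  · refine Eventually.of_forall fun n => Measurable.aestronglyMeasurable ?_
    have h1 := (psi_contDiff (dl n)).continuous.measurable
    have h2 := (chi_cont (dl n)).measurable
    apply hH.measurable.comp
    fun_prop
  · refine Eventually.of_forall fun n => Eventually.of_forall fun r hr => ?_
    rw [uIoc_of_le zero_le_one] at hr
    apply hC
    have hp0 := psi_nonneg (δ := dl n) hr.1.le
    have hp1 := psi_le (δ := dl n) hr.1.le
    refine ⟨⟨hr.1.le, hr.2⟩, ⟨hp0, hp1.trans hr.2⟩, ⟨chi_nonneg _ _, chi_le_one _ _⟩,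
      ⟨div_nonneg hp0 hr.1.le, (div_le_one hr.1).2 hp1⟩, ?_, ?_⟩
    · exact psi_nonneg zero_le_one
    · exact psi_le zero_le_one
  · exact intervalIntegrable_const
  · have : ∀ᵐ x : ℝ, x ≠ 1 := by simp [ae_iff]
    filter_upwards [this] with r hx hr
    rw [uIoc_of_le zero_le_one] at hr
    have hr1 : r < 1 := lt_of_le_of_ne hr.2 hx
    have hc : Tendsto (fun n => chi (dl n) r) atTop (𝓝 1) := by
      apply tendsto_const_nhds.congr'
      filter_upwards [chi_ev hr.1 hr1] with n hn
      exact hn.symm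
    have hp := psi_tendsto hr.1.le hr.2
    have hq : Tendsto (fun n => psi (dl n) r / r) atTop (𝓝 1) := by
      have := hp.div_const r
      rwa [div_self hr.1.ne'] at this
    have h1 := psi_tendsto zero_le_one le_rfl
    have := (tendsto_const_nhds (x := r)).prodMk_nhds
      (hp.prodMk_nhds (hc.prodMk_nhds (hq.prodMk_nhds h1)))
    exact (hH.tendsto _).comp this

/-! ### radial and mode one functions -/

/-- radial function -/
def radF (F : ℝ → ℝ) (x : E2) : ℝ := F ‖x‖
/-- mode one function -/
def modF (F : ℝ → ℝ) (x : E2) : ℝ := F ‖x‖ * (x 0 / ‖x‖)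

lemma radF_contDiff {F : ℝ → ℝ} (hF : ContDiff ℝ (⊤ : ℕ∞) F) {δ : ℝ} (hδ : 0 < δ)
    (h : ∀ r ≤ δ, F r = F 0) : ContDiff ℝ (⊤ : ℕ∞) (radF F) := by
  rw [contDiff_iff_contDiffAt]
  intro x
  by_cases hx : x = 0
  · subst hx
    apply (contDiffAt_const (c := F 0)).congr_of_eventuallyEq
    filter_upwards [Metric.ball_mem_nhds (0 : E2) hδ] with y hy
    rw [mem_ball_zero_iff] at hy
    exact h _ hy.le
  · exact hF.contDiffAt.comp x (contDiffAt_norm ℝ hx)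

lemma modF_contDiff {F : ℝ → ℝ} (hF : ContDiff ℝ (⊤ : ℕ∞) F) {δ : ℝ} (hδ : 0 < δ)
    (h : ∀ r ≤ δ, F r = 0) : ContDiff ℝ (⊤ : ℕ∞) (modF F) := by
  rw [contDiff_iff_contDiffAt]
  intro x
  by_cases hx : x = 0
  · subst hx
    apply (contDiffAt_const (c := (0:ℝ))).congr_of_eventuallyEq
    filter_upwards [Metric.ball_mem_nhds (0 : E2) hδ] with y hy
    rw [mem_ball_zero_iff] at hy
    simp [modF, h _ hy.le]
  · have h0 : ContDiff ℝ (⊤ : ℕ∞) (fun x : E2 => x 0) := by fun_prop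
    exact (hF.contDiffAt.comp x (contDiffAt_norm ℝ hx)).mul
      (h0.contDiffAt.div (contDiffAt_norm ℝ hx) (norm_ne_zero_iff.2 hx))

lemma radF_polar (F : ℝ → ℝ) {r : ℝ} (hr : 0 ≤ r) (θ : ℝ) : radF F (r • er θ) = F r := by
  simp [radF, norm_smul_er hr]

lemma modF_polar (F : ℝ → ℝ) {r : ℝ} (hr : 0 < r) (θ : ℝ) :
    modF F (r • er θ) = F r * Real.cos θ := by
  have := hr.ne'
  simp only [modF, norm_smul_er hr.le, PiLp.smul_apply, er_zero, smul_eq_mul]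
  field_simp

lemma radF_Dr {F : ℝ → ℝ} (hu : ContDiff ℝ (⊤ : ℕ∞) (radF F)) {F' r : ℝ}
    (hF : HasDerivAt F F' r) (hr : 0 < r) (θ : ℝ) : Dr (radF F) r θ = F' := by
  apply (hasDerivAt_r hu r θ).unique
  apply hF.congr_of_eventuallyEq
  filter_upwards [lt_mem_nhds hr] with s hs
  exact radF_polar F hs.le θ

lemma radF_Dt {F : ℝ → ℝ} (hu : ContDiff ℝ (⊤ : ℕ∞) (radF F)) {r : ℝ}
    (hr : 0 < r) (θ : ℝ) : Dt (radF F) r θ = 0 := by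
  have h1 := hasDerivAt_t hu r θ
  have h2 : HasDerivAt (fun θ => radF F (r • er θ)) 0 θ := by
    simp only [radF_polar F hr.le]
    exact hasDerivAt_const _ _
  have := h1.unique h2
  exact (mul_eq_zero.1 this).resolve_left hr.ne'

lemma modF_Dr {F : ℝ → ℝ} (hu : ContDiff ℝ (⊤ : ℕ∞) (modF F)) {F' r : ℝ}
    (hF : HasDerivAt F F' r) (hr : 0 < r) (θ : ℝ) : Dr (modF F) r θ = F' * Real.cos θ := by
  apply (hasDerivAt_r hu r θ).unique
  apply (hF.mul_const (Real.cos θ)).congr_of_eventuallyEq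
  filter_upwards [lt_mem_nhds hr] with s hs
  exact modF_polar F hs θ

lemma modF_Dt {F : ℝ → ℝ} (hu : ContDiff ℝ (⊤ : ℕ∞) (modF F)) {r : ℝ}
    (hr : 0 < r) (θ : ℝ) : Dt (modF F) r θ = - (F r / r) * Real.sin θ := by
  have h1 := hasDerivAt_t hu r θ
  have h2 : HasDerivAt (fun θ => modF F (r • er θ)) (F r * (-Real.sin θ)) θ := by
    simp only [modF_polar F hr]
    exact (Real.hasDerivAt_cos θ).const_mul _
  have := h1.unique h2
  field_simp
  linarith

lemma integral_cos_sq_pi : ∫ θ in (-π)..π, Real.cos θ ^ 2 = π := by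
  rw [integral_cos_sq]; simp

lemma integral_sin_sq_pi : ∫ θ in (-π)..π, Real.sin θ ^ 2 = π := by
  rw [integral_sin_sq]; simp

lemma radF_energy {F F' : ℝ → ℝ} (hu : ContDiff ℝ (⊤ : ℕ∞) (radF F))
    (hF : ∀ r, HasDerivAt F (F' r) r) :
    ∫ x in Metric.ball (0 : E2) 1, ‖fderiv ℝ (radF F) x‖ ^ 2
      = 2 * π * ∫ r in (0:ℝ)..1, r * F' r ^ 2 := by
  rw [polar_energy hu 1 zero_le_one, ← intervalIntegral.integral_const_mul]
  apply intervalIntegral.integral_congr_ae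
  refine Eventually.of_forall fun r hr => ?_
  rw [uIoc_of_le zero_le_one] at hr
  simp only [radF_Dr hu (hF r) hr.1, radF_Dt hu hr.1]
  simp
  ring

lemma radF_sq {F : ℝ → ℝ} (hu : ContDiff ℝ (⊤ : ℕ∞) (radF F)) :
    ∫ x in Metric.ball (0 : E2) 1, radF F x ^ 2 = 2 * π * ∫ r in (0:ℝ)..1, r * F r ^ 2 := by
  rw [polar_ball (fun x => radF F x ^ 2) (hu.continuous.pow 2) 1 zero_le_one, ← intervalIntegral.integral_const_mul]
  apply intervalIntegral.integral_congr_ae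
  refine Eventually.of_forall fun r hr => ?_
  rw [uIoc_of_le zero_le_one] at hr
  simp only [radF_polar F hr.1.le]
  simp
  ring

lemma modF_energy {F F' : ℝ → ℝ} (hu : ContDiff ℝ (⊤ : ℕ∞) (modF F))
    (hF : ∀ r, HasDerivAt F (F' r) r) :
    ∫ x in Metric.ball (0 : E2) 1, ‖fderiv ℝ (modF F) x‖ ^ 2
      = π * ∫ r in (0:ℝ)..1, (r * F' r ^ 2 + F r ^ 2 / r) := by
  rw [polar_energy hu 1 zero_le_one, ← intervalIntegral.integral_const_mul]
  apply intervalIntegral.integral_congr_ae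
  refine Eventually.of_forall fun r hr => ?_
  rw [uIoc_of_le zero_le_one] at hr
  simp only [modF_Dr hu (hF r) hr.1, modF_Dt hu hr.1]
  have e : ∀ θ, r * ((F' r * Real.cos θ) ^ 2 + (-(F r / r) * Real.sin θ) ^ 2)
    = r * F' r ^ 2 * Real.cos θ ^ 2 + r * (F r / r) ^ 2 * Real.sin θ ^ 2 := fun θ => by ring
  simp only [e]
  rw [intervalIntegral.integral_add, intervalIntegral.integral_const_mul,
    intervalIntegral.integral_const_mul, integral_cos_sq_pi, integral_sin_sq_pi]
  · have := hr.1.ne'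
    field_simp
  · exact Continuous.intervalIntegrable (by fun_prop) _ _
  · exact Continuous.intervalIntegrable (by fun_prop) _ _

lemma modF_sq {F : ℝ → ℝ} (hu : ContDiff ℝ (⊤ : ℕ∞) (modF F)) :
    ∫ x in Metric.ball (0 : E2) 1, modF F x ^ 2 = π * ∫ r in (0:ℝ)..1, r * F r ^ 2 := by
  rw [polar_ball (fun x => modF F x ^ 2) (hu.continuous.pow 2) 1 zero_le_one, ← intervalIntegral.integral_const_mul]
  apply intervalIntegral.integral_congr_ae
  refine Eventually.of_forall fun r hr => ?_
  rw [uIoc_of_le zero_le_one] at hr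
  simp only [modF_polar F hr.1]
  have e : ∀ θ, r * (F r * Real.cos θ) ^ 2 = r * F r ^ 2 * Real.cos θ ^ 2 := fun θ => by ring
  simp only [e]
  rw [intervalIntegral.integral_const_mul, integral_cos_sq_pi]
  ring

lemma modF_neg (F : ℝ → ℝ) (x : E2) : modF F (-x) = - modF F x := by
  simp [modF, neg_div]

lemma integral_odd {Ω : Set E2} (hs : ∀ x, x ∈ Ω ↔ -x ∈ Ω) (hm : MeasurableSet Ω)
    {v : E2 → ℝ} (hv : ∀ x, v (-x) = - v x) : ∫ x in Ω, v x = 0 := by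
  rw [← integral_indicator hm]
  have h := integral_neg_eq_self (fun x => Ω.indicator v x) (volume : Measure E2)
  have e : ∀ x, Ω.indicator v (-x) = - Ω.indicator v x := by
    intro x
    by_cases hx : x ∈ Ω
    · rw [indicator_of_mem hx, indicator_of_mem ((hs x).1 hx), hv]
    · rw [indicator_of_notMem hx, indicator_of_notMem (fun h => hx ((hs x).2 h)), neg_zero]
  simp only [e] at h
  rw [integral_neg] at h
  linarith

open scoped Topology

lemma dEig1_bdd (Ω : Set E2) : BddBelow { R : ℝ | ∃ u : E2 → ℝ, ContDiff ℝ (⊤ : ℕ∞) u ∧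
    HasCompactSupport u ∧ tsupport u ⊆ Ω ∧ (∫ x, (u x)^2) ≠ 0 ∧
    R = (∫ x, ‖fderiv ℝ u x‖^2) / (∫ x, (u x)^2) } := by
  refine ⟨0, ?_⟩
  rintro R ⟨u, -, -, -, -, rfl⟩
  exact div_nonneg (integral_nonneg fun x => sq_nonneg _) (integral_nonneg fun x => sq_nonneg _)

lemma nEig1_bdd (Ω : Set E2) : BddBelow { R : ℝ | ∃ u : E2 → ℝ, ContDiff ℝ (⊤ : ℕ∞) u ∧
    (∫ x in Ω, u x) = 0 ∧ (∫ x in Ω, (u x)^2) ≠ 0 ∧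
    R = (∫ x in Ω, ‖fderiv ℝ u x‖^2) / (∫ x in Ω, (u x)^2) } := by
  refine ⟨0, ?_⟩
  rintro R ⟨u, -, -, -, rfl⟩
  exact div_nonneg (integral_nonneg fun x => sq_nonneg _) (integral_nonneg fun x => sq_nonneg _)

lemma dEig1_nonneg (Ω : Set E2) : 0 ≤ dEig1 Ω := by
  apply Real.sInf_nonneg
  rintro R ⟨u, -, -, -, -, rfl⟩
  exact div_nonneg (integral_nonneg fun x => sq_nonneg _) (integral_nonneg fun x => sq_nonneg _)

lemma nEig1_nonneg (Ω : Set E2) : 0 ≤ nEig1 Ω := by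
  apply Real.sInf_nonneg
  rintro R ⟨u, -, -, -, rfl⟩
  exact div_nonneg (integral_nonneg fun x => sq_nonneg _) (integral_nonneg fun x => sq_nonneg _)

lemma dEig1_mul_le {Ω : Set E2} {u : E2 → ℝ} (hu : ContDiff ℝ (⊤ : ℕ∞) u)
    (hc : HasCompactSupport u) (hs : tsupport u ⊆ Ω) :
    dEig1 Ω * (∫ x, (u x)^2) ≤ ∫ x, ‖fderiv ℝ u x‖^2 := by
  by_cases h : (∫ x, (u x)^2) = 0
  · rw [h, mul_zero]; exact integral_nonneg fun x => sq_nonneg _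
  · have hp : 0 < ∫ x, (u x)^2 := lt_of_le_of_ne (integral_nonneg fun x => sq_nonneg _) (Ne.symm h)
    rw [← le_div_iff₀ hp]
    exact csInf_le (dEig1_bdd Ω) ⟨u, hu, hc, hs, h, rfl⟩

lemma nEig1_mul_le {Ω : Set E2} {u : E2 → ℝ} (hu : ContDiff ℝ (⊤ : ℕ∞) u)
    (hm : ∫ x in Ω, u x = 0) :
    nEig1 Ω * (∫ x in Ω, (u x)^2) ≤ ∫ x in Ω, ‖fderiv ℝ u x‖^2 := by
  by_cases h : (∫ x in Ω, (u x)^2) = 0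
  · rw [h, mul_zero]; exact integral_nonneg fun x => sq_nonneg _
  · have hp : 0 < ∫ x in Ω, (u x)^2 :=
      lt_of_le_of_ne (integral_nonneg fun x => sq_nonneg _) (Ne.symm h)
    rw [← le_div_iff₀ hp]
    exact csInf_le (nEig1_bdd Ω) ⟨u, hu, hm, h, rfl⟩

lemma exists_dTest {Ω : Set E2} (ho : IsOpen Ω) (hn : Ω.Nonempty) :
    ∃ u : E2 → ℝ, ContDiff ℝ (⊤ : ℕ∞) u ∧ HasCompactSupport u ∧
    tsupport u ⊆ Ω ∧ (∫ x, (u x)^2) ≠ 0 := by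
  obtain ⟨x, hx⟩ := hn
  obtain ⟨f, h1, h2, h3, h4, h5⟩ := exists_contDiff_tsupport_subset (n := (⊤ : ℕ∞)) (ho.mem_nhds hx)
  refine ⟨f, h3, h2, h1, ?_⟩
  have hc : Continuous (fun x => (f x)^2) := h3.continuous.pow 2
  have hcs : HasCompactSupport (fun x => (f x)^2) := by
    apply h2.comp_left (g := fun y : ℝ => y ^ 2); simp
  have := hc.integral_pos_of_hasCompactSupport_nonneg_nonzero (μ := volume) hcs
    (fun x => sq_nonneg _) (x := x) (by simp [h5])
  exact this.ne'

lemma le_dEig1 {Ω : Set E2} (ho : IsOpen Ω) (hn : Ω.Nonempty) {c : ℝ}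
    (h : ∀ u : E2 → ℝ, ContDiff ℝ (⊤ : ℕ∞) u → HasCompactSupport u → tsupport u ⊆ Ω →
      c * (∫ x, (u x)^2) ≤ ∫ x, ‖fderiv ℝ u x‖^2) : c ≤ dEig1 Ω := by
  apply le_csInf
  · obtain ⟨u, h1, h2, h3, h4⟩ := exists_dTest ho hn
    exact ⟨_, u, h1, h2, h3, h4, rfl⟩
  · rintro R ⟨u, h1, h2, h3, h4, rfl⟩
    have hp : 0 < ∫ x, (u x)^2 := lt_of_le_of_ne (integral_nonneg fun x => sq_nonneg _) (Ne.symm h4)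
    rw [le_div_iff₀ hp]
    exact h u h1 h2 h3

/-- integrals over the plane reduce to a ball -/
lemma int_ball_of_tsupport {u : E2 → ℝ} {R : ℝ} (hs : tsupport u ⊆ Metric.ball 0 R) :
    (∫ x, (u x)^2) = ∫ x in Metric.ball (0:E2) R, (u x)^2 := by
  rw [setIntegral_eq_integral_of_forall_compl_eq_zero]
  intro x hx
  rw [image_eq_zero_of_notMem_tsupport (fun h => hx (hs h))]; simp

lemma int_ball_of_tsupport' {u : E2 → ℝ} {R : ℝ} (hs : tsupport u ⊆ Metric.ball 0 R) :
    (∫ x, ‖fderiv ℝ u x‖^2) = ∫ x in Metric.ball (0:E2) R, ‖fderiv ℝ u x‖^2 := by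
  rw [setIntegral_eq_integral_of_forall_compl_eq_zero]
  intro x hx
  have : fderiv ℝ u x = 0 := by
    apply image_eq_zero_of_notMem_tsupport
    exact fun h => hx (hs (tsupport_fderiv_subset ℝ h))
  rw [this]; simp

lemma ray_lemma {f : ℝ → ℝ} (hf : ContDiff ℝ (⊤ : ℕ∞) f) :
    dEig1 unitDisc * ∫ r in (0:ℝ)..1, r * (f r - f 1)^2 ≤ ∫ r in (0:ℝ)..1, r * (deriv f r)^2 := by
  have hdc : Continuous (deriv f) := hf.continuous_deriv (by simp)
  have hfc := hf.continuous
  have l1 := dct_psi (fun p => p.1 * (f p.2.1 - f p.2.2.2.2)^2) (by fun_prop)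
  have l2 := dct_psi (fun p => p.1 * (deriv f p.2.1 * p.2.2.1)^2) (by fun_prop)
  simp only [mul_one] at l2
  apply le_of_tendsto_of_tendsto' (l1.const_mul (dEig1 unitDisc)) l2
  intro n
  set δ := dl n
  have hδ : 0 < δ := dl_pos n
  have hδ2 := dl_lt n
  let F : ℝ → ℝ := fun r => f (psi δ r) - f (psi δ 1)
  have hF : ContDiff ℝ (⊤ : ℕ∞) F := (hf.comp (psi_contDiff δ)).sub contDiff_const
  have hF' : ∀ r, HasDerivAt F (deriv f (psi δ r) * chi δ r) r := fun r => by
    apply HasDerivAt.sub_const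
    exact ((hf.differentiable (by simp)) (psi δ r)).hasDerivAt.comp r (psi_hasDerivAt δ r)
  have hu : ContDiff ℝ (⊤ : ℕ∞) (radF F) := radF_contDiff hF hδ fun r hr => by
    simp only [F, psi_left hδ hr, psi_left hδ hδ.le]
  have hts : tsupport (radF F) ⊆ Metric.closedBall 0 (1 - δ) := by
    apply closure_minimal _ Metric.isClosed_closedBall
    intro x hx
    by_contra h
    rw [mem_closedBall_zero_iff, not_le] at h
    apply hx
    simp only [radF, F, psi_right hδ h.le, sub_self]
  have hts2 : tsupport (radF F) ⊆ Metric.ball 0 1 :=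
    hts.trans (Metric.closedBall_subset_ball (by linarith))
  have hcs : HasCompactSupport (radF F) :=
    HasCompactSupport.of_support_subset_isCompact (isCompact_closedBall 0 (1 - δ))
      ((subset_tsupport _).trans hts)
  have := dEig1_mul_le hu hcs hts2
  rw [int_ball_of_tsupport hts2, int_ball_of_tsupport' hts2, radF_energy hu hF', radF_sq hu] at this
  have hpi : 0 < 2 * π := by positivity
  have h2 : dEig1 unitDisc * ∫ r in (0:ℝ)..1, r * F r ^ 2 ≤
      ∫ r in (0:ℝ)..1, r * (deriv f (psi δ r) * chi δ r) ^ 2 := by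
    refine le_of_mul_le_mul_left ?_ hpi
    calc _ = _ := by unfold unitDisc; ring
      _ ≤ _ := this
  exact h2

lemma swap_cont {f : ℝ → ℝ → ℝ} (hf : Continuous (fun p : ℝ × ℝ => f p.1 p.2)) {a b c d : ℝ}
    (hab : a ≤ b) (hcd : c ≤ d) :
    ∫ x in a..b, ∫ y in c..d, f x y = ∫ y in c..d, ∫ x in a..b, f x y := by
  simp only [intervalIntegral.integral_of_le hab, intervalIntegral.integral_of_le hcd]
  apply integral_integral_swap
  rw [Measure.prod_restrict, ← Measure.volume_eq_prod]
  have : IntegrableOn (Function.uncurry f) (Icc a b ×ˢ Icc c d) volume :=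
    (hf.continuousOn (s := Icc a b ×ˢ Icc c d)).integrableOn_compact (isCompact_Icc.prod isCompact_Icc)
  exact this.mono_set (prod_mono Ioc_subset_Icc_self Ioc_subset_Icc_self)

lemma cs_ind {g : ℝ → ℝ} (hg : Continuous g) {Θ : Set ℝ} (hΘ : MeasurableSet Θ) {m a b : ℝ}
    (hab : a ≤ b) (hm : 0 < m) (h0 : ∀ θ, θ ∉ Θ → g θ = 0)
    (hmΘ : ∫ θ in a..b, Θ.indicator (fun _ => (1:ℝ)) θ ≤ m) :
    (∫ θ in a..b, |g θ|)^2 ≤ m * ∫ θ in a..b, g θ ^ 2 := by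
  set J := ∫ θ in a..b, |g θ|
  have hi : IntervalIntegrable (Θ.indicator (fun _ => (1:ℝ))) volume a b := by
    have := intervalIntegrable_const (μ := volume) (a := a) (b := b) (c := (1:ℝ))
    exact ⟨this.1.indicator hΘ, this.2.indicator hΘ⟩
  have hga := hg.abs.intervalIntegrable (μ := volume) a b
  have hgs : IntervalIntegrable (fun θ => g θ ^ 2) volume a b :=
    (hg.pow 2).intervalIntegrable (μ := volume) a b
  have h1 : 0 ≤ ∫ θ in a..b, (g θ ^ 2 - 2 * (J / m) * |g θ| +
      (J/m)^2 * Θ.indicator (fun _ => (1:ℝ)) θ) := by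
    apply intervalIntegral.integral_nonneg hab
    intro θ _
    by_cases h : θ ∈ Θ
    · rw [indicator_of_mem h, ← sq_abs (g θ)]
      nlinarith [sq_nonneg (|g θ| - J / m)]
    · rw [indicator_of_notMem h, h0 θ h]; simp
  rw [intervalIntegral.integral_add (hgs.sub (hga.const_mul _)) (hi.const_mul _),
    intervalIntegral.integral_sub hgs (hga.const_mul _), intervalIntegral.integral_const_mul,
    intervalIntegral.integral_const_mul] at h1
  change 0 ≤ (∫ θ in a..b, g θ ^ 2) - 2 * (J / m) * J + _ at h1
  have h2 : (J/m)^2 * ∫ θ in a..b, Θ.indicator (fun _ => (1:ℝ)) θ ≤ (J/m)^2 * m :=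
    mul_le_mul_of_nonneg_left hmΘ (sq_nonneg _)
  have h3 : (J/m)^2 * m - 2 * (J/m) * J = - (J^2 / m) := by field_simp; ring
  have h4 : J^2 / m ≤ ∫ θ in a..b, g θ ^ 2 := by linarith
  rw [div_le_iff₀ hm] at h4
  linarith

lemma cs_full {g : ℝ → ℝ} (hg : Continuous g) {a b : ℝ} (hab : a < b) :
    (∫ θ in a..b, |g θ|)^2 ≤ (b - a) * ∫ θ in a..b, g θ ^ 2 := by
  apply cs_ind hg MeasurableSet.univ hab.le (sub_pos.2 hab)
  · intro θ h; exact absurd (mem_univ _) h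
  · simp

lemma diff_le_int_abs {h h' : ℝ → ℝ} (hd : ∀ x, HasDerivAt h (h' x) x) (hc : Continuous h')
    {a b x y : ℝ} (hx : x ∈ Icc a b) (hy : y ∈ Icc a b) :
    |h x - h y| ≤ ∫ θ in a..b, |h' θ| := by
  wlog hxy : y ≤ x
  · rw [abs_sub_comm]; exact this hd hc hy hx (le_of_not_ge hxy)
  rw [← intervalIntegral.integral_eq_sub_of_hasDerivAt (fun t _ => hd t) (hc.intervalIntegrable _ _)]
  refine (intervalIntegral.abs_integral_le_integral_abs hxy).trans ?_
  apply intervalIntegral.integral_mono_interval hy.1 hxy hx.2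
  · exact Eventually.of_forall fun _ => abs_nonneg _
  · exact hc.abs.intervalIntegrable _ _

lemma sup_bound {h h' : ℝ → ℝ} (hd : ∀ x, HasDerivAt h (h' x) x) (hc : Continuous h')
    {x : ℝ} (hx : x ∈ Icc (-π) π) :
    h x ^ 2 ≤ (1/π) * (∫ θ in (-π)..π, h θ ^ 2) + 4 * π * ∫ θ in (-π)..π, h' θ ^ 2 := by
  have hpi := Real.pi_pos
  have hhc : Continuous h := continuous_iff_continuousAt.2 fun x => (hd x).continuousAt
  have cs := cs_full hc (show -π < π by linarith)
  have key : ∫ y in (-π)..π, h x ^ 2 ≤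
      ∫ y in (-π)..π, (2 * h y ^ 2 + 4 * π * ∫ θ in (-π)..π, h' θ ^ 2) := by
    apply intervalIntegral.integral_mono_on (by linarith)
    · simp
    · exact Continuous.intervalIntegrable (by fun_prop) _ _
    · intro y hy
      have h1 := diff_le_int_abs hd hc hx hy
      have h2 : (h x - h y)^2 ≤ (∫ θ in (-π)..π, |h' θ|)^2 := by
        rw [← sq_abs (h x - h y)]; gcongr
      nlinarith [sq_nonneg (h x - 2 * h y)]
  rw [intervalIntegral.integral_const, intervalIntegral.integral_add
    (Continuous.intervalIntegrable (by fun_prop) _ _) (by simp),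
    intervalIntegral.integral_const_mul, intervalIntegral.integral_const] at key
  simp only [smul_eq_mul, sub_neg_eq_add] at key
  have e : (1/π) * (∫ θ in (-π)..π, h θ ^ 2) + 4 * π * (∫ θ in (-π)..π, h' θ ^ 2)
    = (2 * (∫ θ in (-π)..π, h θ ^ 2) + (π + π) * (4 * π * ∫ θ in (-π)..π, h' θ ^ 2)) / (2 * π) := by
    field_simp; ring
  rw [e, le_div_iff₀ (by positivity)]
  linarith

/-- angular set -/
def Th (w : ℝ) : Set ℝ := {θ | |Real.sin θ| < w}

lemma Th_meas (w : ℝ) : MeasurableSet (Th w) :=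
  (isOpen_lt (by fun_prop) continuous_const).measurableSet

lemma Th_int {w : ℝ} (hw : 0 ≤ w) :
    ∫ θ in (-π)..π, (Th w).indicator (fun _ => (1:ℝ)) θ ≤ 2 * π * w := by
  have hpi := Real.pi_pos
  have key : ∀ x, |x| ≤ π/2 → |Real.sin x| < w → |x| ≤ π * w / 2 := by
    intro x hx h
    have := Real.mul_abs_le_abs_sin hx
    have h2 : 2 / π * |x| ≤ w := by linarith
    rw [div_mul_eq_mul_div, div_le_iff₀ hpi] at h2
    linarith
  rw [intervalIntegral.integral_of_le (by linarith), integral_indicator (Th_meas w)]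
  simp only [integral_const, smul_eq_mul, mul_one, Measure.real, Measure.restrict_apply MeasurableSet.univ,
    univ_inter]
  rw [Measure.restrict_apply (Th_meas w)]
  have hsub : Th w ∩ Ioc (-π) π ⊆ Icc (-π) (-π + π*w/2) ∪ (Icc (-(π*w/2)) (π*w/2) ∪ Icc (π - π*w/2) π) := by
    rintro θ ⟨h, h1, h2⟩
    change |Real.sin θ| < w at h
    rcases le_or_gt (-(π/2)) θ with h3 | h3
    · rcases le_or_gt θ (π/2) with h4 | h4
      · have := abs_le.1 (key θ (abs_le.2 ⟨h3, h4⟩) h)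
        exact Or.inr (Or.inl this)
      · have := abs_le.1 (key (π - θ) (abs_le.2 ⟨by linarith, by linarith⟩) (by rwa [Real.sin_pi_sub]))
        exact Or.inr (Or.inr ⟨by linarith, h2⟩)
    · have := abs_le.1 (key (θ + π) (abs_le.2 ⟨by linarith, by linarith⟩)
        (by rwa [Real.sin_add_pi, abs_neg]))
      exact Or.inl ⟨h1.le, by linarith⟩
  have hw2 : 0 ≤ π * w / 2 := by positivity
  have h3 : volume (Th w ∩ Ioc (-π) π) ≤ ENNReal.ofReal (2 * π * w) := by
    refine (measure_mono hsub).trans ?_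
    refine (measure_union_le _ _).trans ?_
    refine (add_le_add le_rfl (measure_union_le _ _)).trans ?_
    rw [Real.volume_Icc, Real.volume_Icc, Real.volume_Icc, ← ENNReal.ofReal_add (by linarith) (by linarith),
      ← ENNReal.ofReal_add (by linarith) (by linarith)]
    apply ENNReal.ofReal_le_ofReal; linarith
  exact ENNReal.toReal_le_of_le_ofReal (by positivity) h3

open scoped Topology

set_option maxHeartbeats 1600000 in
lemma dir_core {U A B : ℝ → ℝ → ℝ} (hUc : Continuous (fun p : ℝ × ℝ => U p.1 p.2))
    (hAc : Continuous (fun p : ℝ × ℝ => A p.1 p.2)) (hBc : Continuous (fun p : ℝ × ℝ => B p.1 p.2))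
    {ρ w Λ : ℝ} (hρ : 1 ≤ ρ) (hw : 0 < w) (hw1 : w ≤ 1)
    (hdr : ∀ r θ, HasDerivAt (fun r => U r θ) (A r θ) r)
    (hdt : ∀ r θ, HasDerivAt (fun θ => U r θ) (r * B r θ) θ)
    (hU0 : ∀ r θ, 1 ≤ r → θ ∉ Th w → U r θ = 0)
    (hB0 : ∀ r θ, 1 ≤ r → θ ∉ Th w → B r θ = 0)
    (hUρ : ∀ θ, U ρ θ = 0)
    (hray : ∀ θ, Λ * ∫ r in (0:ℝ)..1, r * (U r θ - U 1 θ)^2 ≤ ∫ r in (0:ℝ)..1, r * (A r θ)^2)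
    (hΛ0 : 0 < Λ) {m q : ℝ} (hm : m = 2 * π * w) (hq : q = m * ρ)
    (h1 : 4 * π * Λ^2 * q * m ≤ 1) (h2 : Λ * q^2 ≤ 1/2) :
    Λ * (1 - Λ * q * m / π) * (∫ r in (0:ℝ)..ρ, ∫ θ in (-π)..π, r * (U r θ)^2)
      ≤ ∫ r in (0:ℝ)..ρ, ∫ θ in (-π)..π, r * (A r θ ^ 2 + B r θ ^ 2) := by
  have hpi := Real.pi_pos
  have hpp : -π ≤ π := by linarith
  have hm0 : 0 < m := by rw [hm]; positivity
  have hq0 : 0 < q := by rw [hq]; positivity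
  have hmq : m ≤ q := by rw [hq]; nlinarith
  obtain ⟨IU, hIU⟩ : ∃ I : ℝ → ℝ, I = fun r => ∫ θ in (-π)..π, U r θ ^ 2 := ⟨_, rfl⟩
  obtain ⟨IA, hIA⟩ : ∃ I : ℝ → ℝ, I = fun r => ∫ θ in (-π)..π, A r θ ^ 2 := ⟨_, rfl⟩
  obtain ⟨IB, hIB⟩ : ∃ I : ℝ → ℝ, I = fun r => ∫ θ in (-π)..π, B r θ ^ 2 := ⟨_, rfl⟩
  have cIU : Continuous IU := by rw [hIU]; fun_prop
  have cIA : Continuous IA := by rw [hIA]; fun_prop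
  have cIB : Continuous IB := by rw [hIB]; fun_prop
  have nIU : ∀ r, 0 ≤ IU r := fun r => by
    rw [hIU]; exact intervalIntegral.integral_nonneg hpp fun _ _ => sq_nonneg _
  have nIA : ∀ r, 0 ≤ IA r := fun r => by
    rw [hIA]; exact intervalIntegral.integral_nonneg hpp fun _ _ => sq_nonneg _
  have nIB : ∀ r, 0 ≤ IB r := fun r => by
    rw [hIB]; exact intervalIntegral.integral_nonneg hpp fun _ _ => sq_nonneg _
  have eU : ∀ r, ∫ θ in (-π)..π, r * (U r θ)^2 = r * IU r := fun r => by
    rw [hIU, intervalIntegral.integral_const_mul]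
  have eAB : ∀ r, ∫ θ in (-π)..π, r * (A r θ ^ 2 + B r θ ^ 2) = r * IA r + r * IB r := fun r => by
    rw [hIA, hIB, intervalIntegral.integral_const_mul, intervalIntegral.integral_add, mul_add]
    · exact Continuous.intervalIntegrable (by fun_prop) _ _
    · exact Continuous.intervalIntegrable (by fun_prop) _ _
  simp only [eU, eAB]
  have ii : ∀ (g : ℝ → ℝ) (a b : ℝ), Continuous g → IntervalIntegrable g volume a b :=
    fun g a b h => h.intervalIntegrable a b
  have hTi : IntervalIntegrable ((Th w).indicator (fun _ => (1:ℝ))) volume (-π) π := by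
    have := intervalIntegrable_const (μ := volume) (a := -π) (b := π) (c := (1:ℝ))
    exact ⟨this.1.indicator (Th_meas w), this.2.indicator (Th_meas w)⟩
  have hTm : ∫ θ in (-π)..π, (Th w).indicator (fun _ => (1:ℝ)) θ ≤ m := by rw [hm]; exact Th_int hw.le
  -- step a
  have sa : ∀ r, 1 ≤ r → IU r ≤ m^2 * (r^2 * IB r) := by
    intro r hr
    have hBr : Continuous (fun θ => r * B r θ) := by fun_prop
    have c1 := cs_ind hBr (Th_meas w) hpp hm0 (fun θ hθ => by rw [hB0 r θ hr hθ, mul_zero]) hTm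
    have e1 : ∫ θ in (-π)..π, (r * B r θ)^2 = r^2 * IB r := by
      rw [hIB, ← intervalIntegral.integral_const_mul]; congr 1; ext θ; ring
    rw [e1] at c1
    have c2 : ∀ θ ∈ Icc (-π) π, U r θ ^ 2 ≤ m * (r^2 * IB r) * (Th w).indicator (fun _ => (1:ℝ)) θ := by
      intro θ hθ
      by_cases h : θ ∈ Th w
      · rw [indicator_of_mem h, mul_one]
        have h0 : U r (π/2) = 0 := hU0 r _ hr (by simp [Th, hw1])
        have h3 := diff_le_int_abs (hdt r) hBr hθ (y := π/2) ⟨by linarith, by linarith⟩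
        rw [h0, sub_zero] at h3
        refine le_trans ?_ c1
        rw [← sq_abs (U r θ)]; gcongr
      · rw [indicator_of_notMem h, hU0 r θ hr h]; simp
    have c3 : IU r ≤ ∫ θ in (-π)..π, m * (r^2 * IB r) * (Th w).indicator (fun _ => (1:ℝ)) θ := by
      rw [hIU]
      exact intervalIntegral.integral_mono_on hpp (ii _ _ _ (by fun_prop)) (hTi.const_mul _) c2
    rw [intervalIntegral.integral_const_mul] at c3
    have h5 : 0 ≤ m * (r^2 * IB r) := by have := nIB r; positivity
    nlinarith [mul_le_mul_of_nonneg_left hTm h5]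
  -- split
  rw [← intervalIntegral.integral_add_adjacent_intervals (ii (fun r => r * IU r) 0 1 (by fun_prop))
    (ii _ 1 ρ (by fun_prop)),
    ← intervalIntegral.integral_add_adjacent_intervals
      (ii (fun r => r * IA r + r * IB r) 0 1 (by fun_prop)) (ii _ 1 ρ (by fun_prop))]
  set VD := ∫ r in (0:ℝ)..1, r * IU r with hVD
  set VT := ∫ r in (1:ℝ)..ρ, r * IU r with hVT
  set NT := ∫ r in (1:ℝ)..ρ, (r * IA r + r * IB r) with hNT
  have eND : ∫ r in (0:ℝ)..1, (r * IA r + r * IB r) =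
      (∫ r in (0:ℝ)..1, r * IA r) + ∫ r in (0:ℝ)..1, r * IB r :=
    intervalIntegral.integral_add (ii _ _ _ (by fun_prop)) (ii _ _ _ (by fun_prop))
  rw [eND]
  set NA := ∫ r in (0:ℝ)..1, r * IA r with hNA
  set NB := ∫ r in (0:ℝ)..1, r * IB r with hNB
  have nNT : 0 ≤ NT := intervalIntegral.integral_nonneg hρ fun r hr => by
    have := nIA r; have := nIB r; have : 0 ≤ r := by linarith [hr.1]
    positivity
  have nNB : 0 ≤ NB := intervalIntegral.integral_nonneg zero_le_one fun r hr =>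
    mul_nonneg hr.1 (nIB r)
  have nVD : 0 ≤ VD := intervalIntegral.integral_nonneg zero_le_one fun r hr =>
    mul_nonneg hr.1 (nIU r)
  have nVT : 0 ≤ VT := intervalIntegral.integral_nonneg hρ fun r hr =>
    mul_nonneg (by linarith [hr.1]) (nIU r)
  -- VT bound
  have bVT : VT ≤ q^2 * NT := by
    rw [hVT, hNT, ← intervalIntegral.integral_const_mul]
    apply intervalIntegral.integral_mono_on hρ (ii _ _ _ (by fun_prop)) (ii _ _ _ (by fun_prop))
    intro r hr
    have hr0 : 0 ≤ r := by linarith [hr.1]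
    have h3 := sa r hr.1
    have h4 : m^2 * (r^2 * IB r) ≤ q^2 * IB r := by
      rw [hq, mul_pow, ← mul_assoc]
      have : r^2 ≤ ρ^2 := pow_le_pow_left₀ hr0 hr.2 2
      have := nIB r
      gcongr
    calc r * IU r ≤ r * (q^2 * IB r) := by gcongr; linarith
      _ ≤ q^2 * (r * IA r + r * IB r) := by
        have := mul_nonneg (sq_nonneg q) (mul_nonneg hr0 (nIA r)); nlinarith
  -- boundary
  have bW : IU 1 ≤ q * NT := by
    have p1 : ∀ θ, U 1 θ ^ 2 ≤ ∫ r in (1:ℝ)..ρ, (q⁻¹ * U r θ ^ 2 + q * A r θ ^ 2) := by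
      intro θ
      have hd : ∀ r, HasDerivAt (fun r => U r θ ^ 2) (2 * U r θ * A r θ) r := fun r => by
        have := (hdr r θ).fun_pow 2
        simpa using this
      have h3 := intervalIntegral.integral_eq_sub_of_hasDerivAt (a := 1) (b := ρ) (fun r _ => hd r)
        (ii _ _ _ (by fun_prop))
      rw [hUρ θ] at h3
      have h4 : U 1 θ ^ 2 = ∫ r in (1:ℝ)..ρ, - (2 * U r θ * A r θ) := by
        rw [intervalIntegral.integral_neg, h3]; ring
      rw [h4]
      apply intervalIntegral.integral_mono_on hρ (ii _ _ _ (by fun_prop)) (ii _ _ _ (by fun_prop))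
      intro r _
      have : q⁻¹ * U r θ ^ 2 + q * A r θ ^ 2 + 2 * U r θ * A r θ = q⁻¹ * (U r θ + q * A r θ)^2 := by
        field_simp; ring
      have h5 : 0 ≤ q⁻¹ * (U r θ + q * A r θ)^2 := by positivity
      linarith
    have p2 : IU 1 ≤ ∫ θ in (-π)..π, ∫ r in (1:ℝ)..ρ, (q⁻¹ * U r θ ^ 2 + q * A r θ ^ 2) := by
      rw [hIU]
      apply intervalIntegral.integral_mono_on hpp (ii _ _ _ (by fun_prop)) (ii _ _ _ (by fun_prop))
      intro θ _; exact p1 θ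
    rw [swap_cont (by fun_prop) hpp hρ] at p2
    refine p2.trans ?_
    rw [hNT, ← intervalIntegral.integral_const_mul]
    apply intervalIntegral.integral_mono_on hρ (ii _ _ _ (by fun_prop)) (ii _ _ _ (by fun_prop))
    intro r hr
    have hr0 : 0 < r := by linarith [hr.1]
    rw [intervalIntegral.integral_add (ii _ _ _ (by fun_prop)) (ii _ _ _ (by fun_prop)),
      intervalIntegral.integral_const_mul, intervalIntegral.integral_const_mul]
    have e3 : q⁻¹ * (∫ θ in (-π)..π, U r θ ^ 2) ≤ q * (r * IB r) := by
      have h3 := sa r hr.1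
      have e5 : (∫ θ in (-π)..π, U r θ ^ 2) = IU r := by rw [hIU]
      rw [e5, inv_mul_le_iff₀ hq0]
      refine h3.trans ?_
      have : m^2 * (r^2 * IB r) = (m * m * r) * (r * IB r) := by ring
      have e7 : q * (q * (r * IB r)) = (q * q) * (r * IB r) := by ring
      rw [this, e7]
      have h6 : m * m * r ≤ q * q := by
        rw [hq]
        have : r ≤ ρ * ρ := by nlinarith [hr.2]
        nlinarith [mul_pos hm0 hm0]
      have := nIB r
      exact mul_le_mul_of_nonneg_right h6 (by positivity)
    have e4 : q * (∫ θ in (-π)..π, A r θ ^ 2) ≤ q * (r * IA r) := by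
      have e5 : (∫ θ in (-π)..π, A r θ ^ 2) = IA r := by rw [hIA]
      rw [e5]
      have := nIA r
      have := hr.1
      gcongr
      nlinarith
    linarith
  -- K bound
  set K := (1/π) * VD + 4 * π * NB with hK
  have nK : 0 ≤ K := by positivity
  have bG : ∀ θ ∈ Icc (-π) π, ∫ r in (0:ℝ)..1, r * U r θ ^ 2 ≤ K := by
    intro θ hθ
    have : K = ∫ r in (0:ℝ)..1, ((1/π) * (r * IU r) + 4 * π * (r * IB r)) := by
      rw [intervalIntegral.integral_add (ii _ _ _ (by fun_prop)) (ii _ _ _ (by fun_prop)),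
        intervalIntegral.integral_const_mul, intervalIntegral.integral_const_mul]
    rw [this]
    apply intervalIntegral.integral_mono_on zero_le_one (ii _ _ _ (by fun_prop))
      (ii _ _ _ (by fun_prop))
    intro r hr
    have h3 := sup_bound (hdt r) (by fun_prop) hθ
    have e1 : ∫ θ in (-π)..π, (r * B r θ)^2 = r^2 * IB r := by
      rw [hIB, ← intervalIntegral.integral_const_mul]; congr 1; ext θ; ring
    have e2 : (∫ θ in (-π)..π, U r θ ^ 2) = IU r := by rw [hIU]
    rw [e1, e2] at h3
    have h4 : r^2 * IB r ≤ IB r := by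
      have : r^2 ≤ 1 := pow_le_one₀ hr.1 hr.2
      exact mul_le_of_le_one_left (nIB r) this
    have h5 : U r θ ^ 2 ≤ 1 / π * IU r + 4 * π * IB r := by
      refine h3.trans ?_; gcongr
    calc r * U r θ ^ 2 ≤ r * (1 / π * IU r + 4 * π * IB r) := mul_le_mul_of_nonneg_left h5 hr.1
      _ = _ := by ring
  -- per theta inequality
  set τ := Λ * q with hτ
  have hτ0 : 0 < τ := by positivity
  have per : ∀ θ ∈ Icc (-π) π, Λ * (∫ r in (0:ℝ)..1, r * U r θ ^ 2) - Λ / (2 * τ) * U 1 θ ^ 2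
      - Λ * τ * K * (Th w).indicator (fun _ => (1:ℝ)) θ ≤ ∫ r in (0:ℝ)..1, r * A r θ ^ 2 := by
    intro θ hθ
    refine le_trans ?_ (hray θ)
    by_cases h : θ ∈ Th w
    · rw [indicator_of_mem h, mul_one]
      have h3 : ∫ r in (0:ℝ)..1, ((1 - τ) * (r * U r θ ^ 2) - (1/τ * U 1 θ ^ 2) * r) ≤
          ∫ r in (0:ℝ)..1, r * (U r θ - U 1 θ)^2 := by
        apply intervalIntegral.integral_mono_on zero_le_one (ii _ _ _ (by fun_prop))
          (ii _ _ _ (by fun_prop))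
        intro r hr
        have h4 : 0 ≤ τ * U r θ ^ 2 - 2 * U r θ * U 1 θ + 1/τ * U 1 θ ^ 2 := by
          have : τ * U r θ ^ 2 - 2 * U r θ * U 1 θ + 1/τ * U 1 θ ^ 2
            = 1/τ * (τ * U r θ - U 1 θ)^2 := by field_simp; ring
          rw [this]; positivity
        nlinarith [mul_nonneg hr.1 h4, mul_nonneg hr.1 (sq_nonneg (U 1 θ))]
      rw [intervalIntegral.integral_sub (ii _ _ _ (by fun_prop)) (ii _ _ _ (by fun_prop)),
        intervalIntegral.integral_const_mul, intervalIntegral.integral_const_mul, integral_id] at h3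
      have h4 := mul_le_mul_of_nonneg_left h3 hΛ0.le
      refine le_trans ?_ h4
      have h5 : Λ * τ * (∫ r in (0:ℝ)..1, r * U r θ ^ 2) ≤ Λ * τ * K :=
        mul_le_mul_of_nonneg_left (bG θ hθ) (by positivity)
      have e6 : Λ * (1 / τ * U 1 θ ^ 2 * ((1 ^ 2 - 0 ^ 2) / 2)) = Λ / (2 * τ) * U 1 θ ^ 2 := by
        field_simp; ring
      rw [mul_sub, e6]
      linarith
    · rw [indicator_of_notMem h, hU0 1 θ le_rfl h]; simp
  have tot := intervalIntegral.integral_mono_on hpp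
    (((ii (fun θ => Λ * (∫ r in (0:ℝ)..1, r * U r θ ^ 2) - Λ / (2 * τ) * U 1 θ ^ 2) (-π) π
      (by fun_prop))).sub (hTi.const_mul (Λ * τ * K)))
    (ii (fun θ => ∫ r in (0:ℝ)..1, r * A r θ ^ 2) _ _ (by fun_prop)) per
  rw [intervalIntegral.integral_sub (ii _ _ _ (by fun_prop)) (hTi.const_mul _),
    intervalIntegral.integral_sub (ii _ _ _ (by fun_prop)) (ii _ _ _ (by fun_prop)),
    intervalIntegral.integral_const_mul, intervalIntegral.integral_const_mul,
    intervalIntegral.integral_const_mul, ← swap_cont (by fun_prop) zero_le_one hpp,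
    ← swap_cont (by fun_prop) zero_le_one hpp] at tot
  have eA2 : ∫ x in (0:ℝ)..1, ∫ y in (-π)..π, x * A x y ^ 2 = NA := by
    rw [hNA, hIA]; simp only [intervalIntegral.integral_const_mul]
  have eU1 : ∫ θ in (-π)..π, U 1 θ ^ 2 = IU 1 := by rw [hIU]
  simp only [eU] at tot
  rw [eA2, eU1, ← hVD] at tot
  have f1 : Λ / (2 * τ) * IU 1 ≤ NT / 2 := by
    have : Λ / (2 * τ) = 1 / (2 * q) := by rw [hτ]; field_simp
    rw [this, div_mul_eq_mul_div, div_le_iff₀ (by positivity)]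
    nlinarith
  have f2 : Λ * τ * K * (∫ θ in (-π)..π, (Th w).indicator (fun _ => (1:ℝ)) θ) ≤ Λ * τ * K * m :=
    mul_le_mul_of_nonneg_left hTm (by positivity)
  have f3 : Λ * τ * K * m = Λ * (Λ * q * m / π) * VD + (4 * π * Λ^2 * q * m) * NB := by
    rw [hK, hτ]; field_simp
  have f4 : (4 * π * Λ^2 * q * m) * NB ≤ NB := by nlinarith
  have f5 : Λ * VT ≤ NT / 2 := by
    have := mul_le_mul_of_nonneg_left bVT hΛ0.le
    nlinarith
  have f6 : 0 ≤ Λ * (Λ * q * m / π) * VT := by positivity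
  nlinarith


lemma dir_lower {u : E2 → ℝ} (hu : ContDiff ℝ (⊤ : ℕ∞) u) {ρ w Λ : ℝ} (hρ : 1 ≤ ρ)
    (hw : 0 < w) (hw1 : w ≤ 1) (hts : tsupport u ⊆ Metric.ball 0 ρ)
    (hvan : ∀ r θ : ℝ, 1 ≤ r → w ≤ |Real.sin θ| → r • er θ ∉ tsupport u)
    (hΛ : Λ = dEig1 unitDisc) (hΛ0 : 0 < Λ) {m q : ℝ} (hm : m = 2 * π * w) (hq : q = m * ρ)
    (h1 : 4 * π * Λ^2 * q * m ≤ 1) (h2 : Λ * q^2 ≤ 1/2) :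
    Λ * (1 - Λ * q * m / π) * (∫ x, (u x)^2) ≤ ∫ x, ‖fderiv ℝ u x‖^2 := by
  have hpi := Real.pi_pos
  have hpp : -π ≤ π := by linarith
  have hm0 : 0 < m := by rw [hm]; positivity
  have hq0 : 0 < q := by rw [hq]; positivity
  rw [int_ball_of_tsupport hts, int_ball_of_tsupport' hts, polar_energy hu ρ (by linarith),
    polar_ball (fun x => (u x)^2) (hu.continuous.pow 2) ρ (by linarith)]
  -- abbreviations
  obtain ⟨U, hU⟩ : ∃ U : ℝ → ℝ → ℝ, U = fun r θ => u (r • er θ) := ⟨_, rfl⟩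
  have hUc : Continuous (fun p : ℝ × ℝ => U p.1 p.2) := by rw [hU]; exact continuous_U hu
  obtain ⟨A, hA⟩ : ∃ A : ℝ → ℝ → ℝ, A = Dr u := ⟨_, rfl⟩
  obtain ⟨B, hB⟩ : ∃ B : ℝ → ℝ → ℝ, B = Dt u := ⟨_, rfl⟩
  have hAc : Continuous (fun p : ℝ × ℝ => A p.1 p.2) := by rw [hA]; exact continuous_Dr hu
  have hBc : Continuous (fun p : ℝ × ℝ => B p.1 p.2) := by rw [hB]; exact continuous_Dt hu
  have hdr : ∀ r θ, HasDerivAt (fun r => U r θ) (A r θ) r := fun r θ => by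
    rw [hU, hA]; exact hasDerivAt_r hu r θ
  have hdt : ∀ r θ, HasDerivAt (fun θ => U r θ) (r * B r θ) θ := fun r θ => by
    rw [hU, hB]; exact hasDerivAt_t hu r θ
  have hU0 : ∀ r θ, 1 ≤ r → θ ∉ Th w → U r θ = 0 := fun r θ hr hθ => by
    rw [hU]; exact image_eq_zero_of_notMem_tsupport (hvan r θ hr (not_lt.1 hθ))
  have hf0 : ∀ r θ : ℝ, 1 ≤ r → θ ∉ Th w → fderiv ℝ u (r • er θ) = 0 := fun r θ hr hθ =>
    image_eq_zero_of_notMem_tsupport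
      (fun h => hvan r θ hr (not_lt.1 hθ) (tsupport_fderiv_subset ℝ h))
  have hB0 : ∀ r θ, 1 ≤ r → θ ∉ Th w → B r θ = 0 := fun r θ hr hθ => by
    rw [hB]; simp [Dt, hf0 r θ hr hθ]
  have hUρ : ∀ θ, U ρ θ = 0 := fun θ => by
    rw [hU]
    apply image_eq_zero_of_notMem_tsupport
    intro h
    have := hts h
    rw [mem_ball_zero_iff, norm_smul_er (by linarith)] at this
    exact lt_irrefl _ this
  have hray : ∀ θ, Λ * ∫ r in (0:ℝ)..1, r * (U r θ - U 1 θ)^2 ≤ ∫ r in (0:ℝ)..1, r * (A r θ)^2 := by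
    intro θ
    have hs : ContDiff ℝ (⊤ : ℕ∞) (fun r => U r θ) := by
      rw [hU]
      exact hu.comp (by fun_prop)
    have := ray_lemma hs
    rw [← hΛ] at this
    simpa only [(hdr _ θ).deriv] using this
  change Λ * (1 - Λ * q * m / π) * (∫ r in (0:ℝ)..ρ, ∫ θ in (-π)..π, r * (u (r • er θ))^2) ≤ _
  rw [show (fun r => ∫ θ in (-π)..π, r * (u (r • er θ))^2) = fun r => ∫ θ in (-π)..π, r * (U r θ)^2 by
    rw [hU]]
  rw [← hA, ← hB]
  exact dir_core hUc hAc hBc hρ hw hw1 hdr hdt hU0 hB0 hUρ hray hΛ0 hm hq h1 h2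

open scoped Topology

lemma coeff_form (g : ℝ → ℝ) (hab : -π < π) (n : ℤ) :
    fourierCoeffOn hab (fun x => (g x : ℂ)) n =
      ((1 / (2 * π) : ℝ) : ℂ) * ∫ x in (-π)..π, Complex.exp (-(n * x) * Complex.I) * (g x : ℂ) := by
  rw [fourierCoeffOn_eq_integral]
  have hpi : (π : ℂ) ≠ 0 := by exact_mod_cast Real.pi_ne_zero
  rw [Complex.real_smul]
  congr 1
  · congr 1; ring_nf
  · congr 1; ext x
    rw [fourier_coe_apply, smul_eq_mul]
    congr 2
    push_cast
    field_simp
    ring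

lemma coeff_deriv {g g' : ℝ → ℝ} (hd : ∀ x, HasDerivAt g (g' x) x) (hc : Continuous g')
    (hper : g π = g (-π)) (hab : -π < π) (n : ℤ) (hn : n ≠ 0) :
    ‖fourierCoeffOn hab (fun x => (g' x : ℂ)) n‖ ^ 2
      = (n:ℝ)^2 * ‖fourierCoeffOn hab (fun x => (g x : ℂ)) n‖ ^ 2 := by
  have h := fourierCoeffOn_of_hasDerivAt (f := fun x => (g x : ℂ)) (f' := fun x => (g' x : ℂ)) hab hn
    (fun x _ => (hd x).ofReal_comp) (Continuous.intervalIntegrable (by fun_prop) _ _)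
  rw [hper, sub_self, mul_zero, zero_sub] at h
  have hnn : (n : ℝ) ≠ 0 := by exact_mod_cast hn
  have hpi := Real.pi_pos
  rw [h]
  simp only [norm_mul, norm_neg, norm_div, norm_one, Complex.norm_I, mul_one]
  have e1 : ‖((π - -π : ℝ) : ℂ)‖ = 2 * π := by
    rw [Complex.norm_real, Real.norm_of_nonneg (by linarith)]; ring
  have e0 : ‖(π : ℂ) - ((-π : ℝ) : ℂ)‖ = 2 * π := by
    rw [← e1]; push_cast; rfl
  have e2 : ‖(n : ℂ)‖ = |(n:ℝ)| := by simp
  have e3 : ‖(π : ℂ)‖ = π := by rw [Complex.norm_real, Real.norm_of_nonneg hpi.le]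
  have e4 : ‖(2 : ℂ)‖ = 2 := by simp
  rw [e2, e3, e4]
  first | rw [e1] | rw [e0]
  have : (0:ℝ) < |(n:ℝ)| := abs_pos.2 hnn
  rw [← sq_abs (n:ℝ)]
  field_simp

lemma wirt2 {g g' : ℝ → ℝ} (hd : ∀ x, HasDerivAt g (g' x) x) (hc : Continuous g')
    (hper : g π = g (-π)) (i0 : ∫ x in (-π)..π, g x = 0) (i1 : ∫ x in (-π)..π, g x * Real.cos x = 0)
    (i2 : ∫ x in (-π)..π, g x * Real.sin x = 0) :
    4 * ∫ x in (-π)..π, g x ^ 2 ≤ ∫ x in (-π)..π, g' x ^ 2 := by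
  have hpi := Real.pi_pos
  have hab : -π < π := by linarith
  have hgc : Continuous g := continuous_iff_continuousAt.2 fun x => (hd x).continuousAt
  have mem : ∀ f : ℝ → ℝ, Continuous f →
      MemLp (fun x => (f x : ℂ)) 2 (volume.restrict (Ioc (-π) π)) := by
    intro f hf
    have hfc : Continuous (fun x => (f x : ℂ)) := by fun_prop
    obtain ⟨C, hC⟩ := (isCompact_Icc (a := -π) (b := π)).exists_bound_of_continuousOn hfc.continuousOn
    apply MemLp.of_bound hfc.aestronglyMeasurable C
    rw [ae_restrict_iff' measurableSet_Ioc]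
    exact Eventually.of_forall fun x hx => hC x ⟨hx.1.le, hx.2⟩
  have s1 := hasSum_sq_fourierCoeffOn hab (mem g hgc)
  have s2 := hasSum_sq_fourierCoeffOn hab (mem g' hc)
  have key : ∀ n : ℤ, 4 * ‖fourierCoeffOn hab (fun x => (g x : ℂ)) n‖ ^ 2 ≤
      ‖fourierCoeffOn hab (fun x => (g' x : ℂ)) n‖ ^ 2 := by
    intro n
    have zero_case : ∀ n : ℤ, n = 0 ∨ n = 1 ∨ n = -1 →
        fourierCoeffOn hab (fun x => (g x : ℂ)) n = 0 := by
      intro n hn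
      rw [coeff_form]
      have : ∫ x in (-π)..π, Complex.exp (-(n * x) * Complex.I) * (g x : ℂ) =
          ((∫ x in (-π)..π, Real.cos (n * x) * g x : ℝ) : ℂ)
          - ((∫ x in (-π)..π, Real.sin (n * x) * g x : ℝ) : ℂ) * Complex.I := by
        rw [← intervalIntegral.integral_ofReal, ← intervalIntegral.integral_ofReal,
          ← intervalIntegral.integral_mul_const, ← intervalIntegral.integral_sub]
        · congr 1; ext x
          rw [Complex.exp_mul_I]
          push_cast
          rw [Complex.cos_neg, Complex.sin_neg]
          ring
        · exact Continuous.intervalIntegrable (by fun_prop) _ _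
        · exact Continuous.intervalIntegrable (by fun_prop) _ _
      rw [this]
      have c1 : ∫ x in (-π)..π, Real.cos x * g x = 0 := by rw [← i1]; congr 1; ext x; ring
      have c2 : ∫ x in (-π)..π, Real.sin x * g x = 0 := by rw [← i2]; congr 1; ext x; ring
      rcases hn with rfl | rfl | rfl
      · simp [i0]
      · simp [c1, c2]
      · simp [c1, c2]
    by_cases h : n = 0 ∨ n = 1 ∨ n = -1
    · rw [zero_case n h]; simp
    · rw [coeff_deriv hd hc hper hab n (fun h0 => h (Or.inl h0))]
      apply mul_le_mul_of_nonneg_right _ (sq_nonneg _)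
      have : 2 ≤ |n| := by
        by_contra h3
        rw [not_le] at h3
        have := abs_lt.1 h3
        omega
      have h2 : (2:ℝ) ≤ |(n:ℝ)| := by exact_mod_cast this
      rw [← sq_abs (n:ℝ)]
      nlinarith
  have := hasSum_le key (s1.mul_left 4) s2
  simp only [smul_eq_mul, Complex.norm_real, Real.norm_eq_abs, sq_abs] at this
  have h3 : (0:ℝ) < (π - -π)⁻¹ := by rw [inv_pos]; linarith
  refine le_of_mul_le_mul_left ?_ h3
  linarith

lemma int_cos_pi : ∫ x in (-π)..π, Real.cos x = 0 := by simp
lemma int_sin_pi : ∫ x in (-π)..π, Real.sin x = 0 := by simp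
lemma int_sc_pi : ∫ x in (-π)..π, Real.sin x * Real.cos x = 0 := by
  rw [integral_sin_mul_cos₁]; simp

lemma expand_modes {h : ℝ → ℝ} (hc : Continuous h) {a0 a b : ℝ}
    (h0 : ∫ x in (-π)..π, h x = 2 * π * a0)
    (h1 : ∫ x in (-π)..π, h x * Real.cos x = π * a)
    (h2 : ∫ x in (-π)..π, h x * Real.sin x = π * b) :
    ∫ x in (-π)..π, (h x - a0 - a * Real.cos x - b * Real.sin x)^2 =
      (∫ x in (-π)..π, h x ^ 2) - 2 * π * a0^2 - π * (a^2 + b^2) := by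
  have ii : ∀ (g : ℝ → ℝ), Continuous g → IntervalIntegrable g volume (-π) π :=
    fun g h => h.intervalIntegrable _ _
  have e : ∀ x, (h x - a0 - a * Real.cos x - b * Real.sin x)^2 =
      h x ^ 2 + (-(2 * a0)) * h x + (-(2 * a)) * (h x * Real.cos x) + (-(2 * b)) * (h x * Real.sin x)
      + a0 ^ 2 + (2 * a0 * a) * Real.cos x + (2 * a0 * b) * Real.sin x
      + (2 * a * b) * (Real.sin x * Real.cos x) + a^2 * Real.cos x ^ 2 + b^2 * Real.sin x ^ 2 := by
    intro x; ring
  simp only [e]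
  iterate 9 rw [intervalIntegral.integral_add (ii _ (by fun_prop)) (ii _ (by fun_prop))]
  simp only [intervalIntegral.integral_const_mul, h0, h1, h2, int_cos_pi, int_sin_pi, int_sc_pi,
    integral_cos_sq_pi, integral_sin_sq_pi, intervalIntegral.integral_const, smul_eq_mul]
  ring

lemma bessel_modes {h : ℝ → ℝ} (hc : Continuous h) {a0 a b : ℝ}
    (h0 : ∫ x in (-π)..π, h x = 2 * π * a0)
    (h1 : ∫ x in (-π)..π, h x * Real.cos x = π * a)
    (h2 : ∫ x in (-π)..π, h x * Real.sin x = π * b) :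
    2 * π * a0^2 + π * (a^2 + b^2) ≤ ∫ x in (-π)..π, h x ^ 2 := by
  have := expand_modes hc h0 h1 h2
  have h3 : 0 ≤ ∫ x in (-π)..π, (h x - a0 - a * Real.cos x - b * Real.sin x)^2 :=
    intervalIntegral.integral_nonneg (by linarith [Real.pi_pos]) fun _ _ => sq_nonneg _
  linarith

lemma wirt_modes {h h' : ℝ → ℝ} (hd : ∀ x, HasDerivAt h (h' x) x) (hc' : Continuous h')
    (hper : h π = h (-π)) {a0 a b : ℝ}
    (h0 : ∫ x in (-π)..π, h x = 2 * π * a0)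
    (h1 : ∫ x in (-π)..π, h x * Real.cos x = π * a)
    (h2 : ∫ x in (-π)..π, h x * Real.sin x = π * b) :
    4 * (∫ x in (-π)..π, h x ^ 2) - 8 * π * a0^2 - 3 * π * (a^2 + b^2)
      ≤ ∫ x in (-π)..π, h' x ^ 2 := by
  have ii : ∀ (g : ℝ → ℝ), Continuous g → IntervalIntegrable g volume (-π) π :=
    fun g h => h.intervalIntegrable _ _
  have hc : Continuous h := continuous_iff_continuousAt.2 fun x => (hd x).continuousAt
  have d0 : ∫ x in (-π)..π, h' x = 2 * π * 0 := by
    rw [intervalIntegral.integral_eq_sub_of_hasDerivAt (fun x _ => hd x) (ii _ hc'), hper]; simp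
  have d1 : ∫ x in (-π)..π, h' x * Real.cos x = π * b := by
    have := intervalIntegral.integral_eq_sub_of_hasDerivAt (a := -π) (b := π)
      (fun x _ => (hd x).mul (Real.hasDerivAt_cos x)) (ii _ (by fun_prop))
    rw [intervalIntegral.integral_add (ii _ (by fun_prop)) (ii _ (by fun_prop))] at this
    simp only [mul_neg, intervalIntegral.integral_neg, h2, Pi.mul_apply, Real.cos_neg, hper] at this
    linarith
  have d2 : ∫ x in (-π)..π, h' x * Real.sin x = π * (-a) := by
    have := intervalIntegral.integral_eq_sub_of_hasDerivAt (a := -π) (b := π)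
      (fun x _ => (hd x).mul (Real.hasDerivAt_sin x)) (ii _ (by fun_prop))
    rw [intervalIntegral.integral_add (ii _ (by fun_prop)) (ii _ (by fun_prop))] at this
    simp only [h1, Pi.mul_apply, Real.sin_neg, Real.sin_pi, hper] at this
    linarith
  have x1 := expand_modes hc h0 h1 h2
  have x2 := expand_modes hc' d0 d1 d2
  have gd : ∀ x, HasDerivAt (fun x => h x - a0 - a * Real.cos x - b * Real.sin x)
      (h' x - 0 - b * Real.cos x - (-a) * Real.sin x) x := by
    intro x
    have := (((hd x).sub_const a0).sub ((Real.hasDerivAt_cos x).const_mul a)).sub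
      ((Real.hasDerivAt_sin x).const_mul b)
    refine HasDerivAt.congr_deriv this ?_
    ring
  have w := wirt2 gd (by fun_prop) (by simp [hper]) (by
      rw [intervalIntegral.integral_sub (ii _ (by fun_prop)) (ii _ (by fun_prop)),
        intervalIntegral.integral_sub (ii _ (by fun_prop)) (ii _ (by fun_prop)),
        intervalIntegral.integral_sub (ii _ (by fun_prop)) (ii _ (by fun_prop))]
      simp only [intervalIntegral.integral_const_mul, h0, int_cos_pi, int_sin_pi,
        intervalIntegral.integral_const, smul_eq_mul]
      ring) (by
      have e : ∀ x, (h x - a0 - a * Real.cos x - b * Real.sin x) * Real.cos x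
        = h x * Real.cos x - a0 * Real.cos x - a * Real.cos x ^ 2 - b * (Real.sin x * Real.cos x) := by
        intro x; ring
      simp only [e]
      rw [intervalIntegral.integral_sub (ii _ (by fun_prop)) (ii _ (by fun_prop)),
        intervalIntegral.integral_sub (ii _ (by fun_prop)) (ii _ (by fun_prop)),
        intervalIntegral.integral_sub (ii _ (by fun_prop)) (ii _ (by fun_prop))]
      simp only [intervalIntegral.integral_const_mul, h1, int_cos_pi, int_sc_pi, integral_cos_sq_pi]
      ring) (by
      have e : ∀ x, (h x - a0 - a * Real.cos x - b * Real.sin x) * Real.sin x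
        = h x * Real.sin x - a0 * Real.sin x - a * (Real.sin x * Real.cos x) - b * Real.sin x ^ 2 := by
        intro x; ring
      simp only [e]
      rw [intervalIntegral.integral_sub (ii _ (by fun_prop)) (ii _ (by fun_prop)),
        intervalIntegral.integral_sub (ii _ (by fun_prop)) (ii _ (by fun_prop)),
        intervalIntegral.integral_sub (ii _ (by fun_prop)) (ii _ (by fun_prop))]
      simp only [intervalIntegral.integral_const_mul, h2, int_sin_pi, int_sc_pi, integral_sin_sq_pi]
      ring)
  rw [x1, x2] at w
  nlinarith

open scoped Topology

lemma par_hasDeriv {G G' : ℝ → ℝ → ℝ} (hc : Continuous (fun p : ℝ × ℝ => G p.1 p.2))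
    (hc' : Continuous (fun p : ℝ × ℝ => G' p.1 p.2))
    (hd : ∀ r θ, HasDerivAt (fun r => G r θ) (G' r θ) r) (a b r : ℝ) :
    HasDerivAt (fun r => ∫ θ in a..b, G r θ) (∫ θ in a..b, G' r θ) r := by
  obtain ⟨C, hC⟩ := ((isCompact_Icc (a := r - 1) (b := r + 1)).prod
    (isCompact_uIcc (a := a) (b := b))).exists_bound_of_continuousOn hc'.continuousOn
  refine (intervalIntegral.hasDerivAt_integral_of_dominated_loc_of_deriv_le (F := G) (F' := G')
    (s := Icc (r - 1) (r + 1)) (bound := fun _ => C) (Icc_mem_nhds (by linarith) (by linarith))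
    (Eventually.of_forall fun x => ?_) ?_ ?_ ?_ ?_ ?_).2
  · exact Continuous.aestronglyMeasurable (by fun_prop)
  · exact Continuous.intervalIntegrable (by fun_prop) _ _
  · exact Continuous.aestronglyMeasurable (by fun_prop)
  · exact Eventually.of_forall fun t ht x hx => hC (x, t) ⟨hx, uIoc_subset_uIcc ht⟩
  · exact intervalIntegrable_const
  · exact Eventually.of_forall fun t ht x hx => hd x t

lemma par_contDiff_nat (n : ℕ) : ∀ (G : ℝ → ℝ → ℝ),
    ContDiff ℝ (⊤ : ℕ∞) (fun p : ℝ × ℝ => G p.1 p.2) → ∀ a b : ℝ,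
    ContDiff ℝ n (fun r => ∫ θ in a..b, G r θ) := by
  induction n with
  | zero =>
    intro G hG a b
    have hc := hG.continuous
    apply contDiff_zero.2
    fun_prop
  | succ n ih =>
    intro G hG a b
    have hf : ContDiff ℝ (⊤ : ℕ∞) (fderiv ℝ (fun p : ℝ × ℝ => G p.1 p.2)) :=
      hG.fderiv_right (by simp)
    have hG' : ContDiff ℝ (⊤ : ℕ∞)
        (fun p : ℝ × ℝ => fderiv ℝ (fun p : ℝ × ℝ => G p.1 p.2) (p.1, p.2) (1, 0)) :=
      hf.clm_apply contDiff_const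
    have hd : ∀ r θ, HasDerivAt (fun r => G r θ)
        (fderiv ℝ (fun p : ℝ × ℝ => G p.1 p.2) (r, θ) (1, 0)) r := by
      intro r θ
      have h1 := (hG.differentiable (by simp) (r, θ)).hasFDerivAt
      have h2 : HasDerivAt (fun r : ℝ => (r, θ)) (1, 0) r :=
        (hasDerivAt_id r).prodMk (hasDerivAt_const r θ)
      exact h1.comp_hasDerivAt r h2
    have hD := par_hasDeriv hG.continuous
      (G' := fun r θ => fderiv ℝ (fun p : ℝ × ℝ => G p.1 p.2) (r, θ) (1, 0)) hG'.continuous hd a b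
    push_cast
    rw [contDiff_succ_iff_deriv]
    refine ⟨fun r => (hD r).differentiableAt, by simp, ?_⟩
    rw [show deriv (fun r => ∫ θ in a..b, G r θ) = _ from funext fun r => (hD r).deriv]
    exact ih _ hG' a b

lemma par_contDiff {G : ℝ → ℝ → ℝ} (hG : ContDiff ℝ (⊤ : ℕ∞) (fun p : ℝ × ℝ => G p.1 p.2)) (a b : ℝ) :
    ContDiff ℝ (⊤ : ℕ∞) (fun r => ∫ θ in a..b, G r θ) :=
  contDiff_infty.2 fun n => par_contDiff_nat n G hG a b

lemma cont_dslope {a : ℝ → ℝ} (ha : ContDiff ℝ (⊤ : ℕ∞) a) : Continuous (dslope a 0) := by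
  rw [← continuousOn_univ, continuousOn_dslope univ_mem]
  exact ⟨ha.continuous.continuousOn, ha.differentiable (by simp) 0⟩

lemma eq_dslope {a : ℝ → ℝ} (h0 : a 0 = 0) (r : ℝ) : a r = r * dslope a 0 r := by
  have := sub_smul_dslope a 0 r
  simp [h0] at this
  exact this.symm

lemma sq_div_eq {a : ℝ → ℝ} (h0 : a 0 = 0) (r : ℝ) : a r ^ 2 / r = r * dslope a 0 r ^ 2 := by
  by_cases hr : r = 0
  · simp [hr]
  · rw [eq_dslope h0 r]; field_simp

lemma cont_sq_div {a : ℝ → ℝ} (ha : ContDiff ℝ (⊤ : ℕ∞) a) (h0 : a 0 = 0) :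
    Continuous (fun r => a r ^ 2 / r) := by
  simp only [sq_div_eq h0]
  have := cont_dslope ha
  fun_prop

/-- radial mode inequality -/
lemma radial_mode {f : ℝ → ℝ} (hf : ContDiff ℝ (⊤ : ℕ∞) f) (h0 : ∫ r in (0:ℝ)..1, r * f r = 0) :
    4 * ∫ r in (0:ℝ)..1, r * f r ^ 2 ≤ ∫ r in (0:ℝ)..1, r * deriv f r ^ 2 := by
  have hdc : Continuous (deriv f) := hf.continuous_deriv (by simp)
  have hfc := hf.continuous
  have hd : ∀ r, HasDerivAt f (deriv f r) r := fun r => (hf.differentiable (by simp) r).hasDerivAt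
  have ii : ∀ (g : ℝ → ℝ), Continuous g → IntervalIntegrable g volume 0 1 :=
    fun g h => h.intervalIntegrable _ _
  have e1 : ∫ r in (0:ℝ)..1, r * (f r - f 1)^2 = (∫ r in (0:ℝ)..1, r * f r ^ 2) + f 1 ^ 2 / 2 := by
    have e : ∀ r, r * (f r - f 1)^2 = r * f r ^ 2 + (-(2 * f 1)) * (r * f r) + f 1 ^ 2 * r := by
      intro r; ring
    simp only [e]
    rw [intervalIntegral.integral_add (ii _ (by fun_prop)) (ii _ (by fun_prop)),
      intervalIntegral.integral_add (ii _ (by fun_prop)) (ii _ (by fun_prop)),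
      intervalIntegral.integral_const_mul, intervalIntegral.integral_const_mul, h0, integral_id]
    ring
  have n1 : 0 ≤ ∫ r in (0:ℝ)..1, r * (f r - f 1)^2 :=
    intervalIntegral.integral_nonneg zero_le_one fun r hr => mul_nonneg hr.1 (sq_nonneg _)
  have key : ∀ c : ℝ, 0 < c → c < 1 → c * (4 * ∫ r in (0:ℝ)..1, r * (f r - f 1)^2)
      ≤ ∫ r in (0:ℝ)..1, r * deriv f r ^ 2 := by
    intro c hc0 hc1
    let Φ : ℝ → ℝ := fun r => -(2 * c * r^2) / (1 - c * r^2) * (f r - f 1)^2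
    let Φ' : ℝ → ℝ := fun r => ((-(4 * c * r)) * (1 - c * r^2) - (-(2 * c * r^2)) * (-(2 * c * r)))
      / (1 - c * r^2)^2 * (f r - f 1)^2 + -(2 * c * r^2) / (1 - c * r^2) * (2 * (f r - f 1) * deriv f r)
    have hpos : ∀ r ∈ Icc (0:ℝ) 1, 0 < 1 - c * r^2 := by
      intro r hr
      have : r^2 ≤ 1 := pow_le_one₀ hr.1 hr.2
      nlinarith
    have hΦ : ∀ r ∈ Icc (0:ℝ) 1, HasDerivAt Φ (Φ' r) r := by
      intro r hr
      have hne := (hpos r hr).ne'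
      have a1 : HasDerivAt (fun r : ℝ => -(2 * c * r^2)) (-(4 * c * r)) r := by
        have := ((hasDerivAt_pow 2 r).const_mul (2 * c)).neg
        refine HasDerivAt.congr_deriv this ?_
        simp; ring
      have a2 : HasDerivAt (fun r : ℝ => 1 - c * r^2) (-(2 * c * r)) r := by
        have := ((hasDerivAt_pow 2 r).const_mul c).const_sub 1
        refine HasDerivAt.congr_deriv this ?_
        simp; ring
      have a3 : HasDerivAt (fun r => (f r - f 1)^2) (2 * (f r - f 1) * deriv f r) r := by
        have := ((hd r).sub_const (f 1)).fun_pow 2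
        refine HasDerivAt.congr_deriv this ?_
        simp
      exact (a1.fun_div a2 hne).fun_mul a3
    have hcont : ContinuousOn Φ' (Icc 0 1) := by
      have hne : ∀ r ∈ Icc (0:ℝ) 1, 1 - c * r^2 ≠ 0 := fun r hr => (hpos r hr).ne'
      have hne2 : ∀ r ∈ Icc (0:ℝ) 1, (1 - c * r^2)^2 ≠ 0 := fun r hr => pow_ne_zero 2 (hne r hr)
      apply ContinuousOn.add
      · apply ContinuousOn.mul _ (by fun_prop)
        exact ContinuousOn.div (by fun_prop) (by fun_prop) hne2
      · apply ContinuousOn.mul _ (by fun_prop)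
        exact ContinuousOn.div (by fun_prop) (by fun_prop) hne
    have hIntg : IntervalIntegrable Φ' volume 0 1 := by
      apply ContinuousOn.intervalIntegrable
      rwa [uIcc_of_le zero_le_one]
    have z : ∫ r in (0:ℝ)..1, Φ' r = 0 := by
      rw [intervalIntegral.integral_eq_sub_of_hasDerivAt (f := Φ) _ hIntg]
      · simp [Φ]
      · rw [uIcc_of_le zero_le_one]; exact hΦ
    have mono : ∫ r in (0:ℝ)..1, (Φ' r + 4 * c * (r * (f r - f 1)^2)) ≤
        ∫ r in (0:ℝ)..1, r * deriv f r ^ 2 := by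
      apply intervalIntegral.integral_mono_on zero_le_one (hIntg.add (ii _ (by fun_prop)))
        (ii _ (by fun_prop))
      intro r hr
      have hp := hpos r hr
      have id1 : r * deriv f r ^ 2 - Φ' r = r * (deriv f r + 2 * c * r / (1 - c * r^2) * (f r - f 1))^2
          + 4 * c * r / (1 - c * r^2) * (f r - f 1)^2 := by
        obtain ⟨d, hd'⟩ : ∃ d, d = 1 - c * r^2 := ⟨_, rfl⟩
        have hdn : d ≠ 0 := by rw [hd']; exact hp.ne'
        simp only [Φ']
        rw [← hd']
        have hcr : c * r ^ 2 = 1 - d := by rw [hd']; ring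
        have k1 : ((-(4 * c * r)) * d - (-(2 * c * r^2)) * (-(2 * c * r))) / d ^ 2
            = - (4 * c * r) / d ^ 2 := by
          congr 1
          linear_combination (-(4 * c * r)) * hcr
        have k2 : 4 * c * r / d ^ 2 = r * (2 * c * r / d) ^ 2 + 4 * c * r / d := by
          have : r * (2 * c * r / d) ^ 2 = 4 * c * r * (1 - d) / d ^ 2 := by
            rw [← hcr]; field_simp; ring
          rw [this]; field_simp; ring
        have k3 : -(4 * c * r) / d ^ 2 = - (4 * c * r / d ^ 2) := neg_div _ _
        rw [k1, k3, k2]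
        have k4 : -(2 * c * r ^ 2) / d = - (r * (2 * c * r / d)) := by field_simp
        rw [k4]
        ring
      have l1 : 4 * c * r ≤ 4 * c * r / (1 - c * r^2) := by
        rw [le_div_iff₀ hp]
        have : 0 ≤ 4 * c * r := by have := hr.1; positivity
        nlinarith [mul_nonneg hc0.le (sq_nonneg r)]
      have l2 := mul_le_mul_of_nonneg_right l1 (sq_nonneg (f r - f 1))
      have l3 := mul_nonneg hr.1 (sq_nonneg (deriv f r + 2 * c * r / (1 - c * r^2) * (f r - f 1)))
      linarith
    rw [intervalIntegral.integral_add hIntg (ii _ (by fun_prop)), z,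
      intervalIntegral.integral_const_mul] at mono
    linarith
  have lim : 1 * (4 * ∫ r in (0:ℝ)..1, r * (f r - f 1)^2) ≤ ∫ r in (0:ℝ)..1, r * deriv f r ^ 2 := by
    have t : Tendsto (fun c : ℝ => c * (4 * ∫ r in (0:ℝ)..1, r * (f r - f 1)^2)) (𝓝[<] 1)
        (𝓝 (1 * (4 * ∫ r in (0:ℝ)..1, r * (f r - f 1)^2))) :=
      ((continuous_id.mul continuous_const).tendsto 1).mono_left nhdsWithin_le_nhds
    apply le_of_tendsto t
    filter_upwards [Ioo_mem_nhdsLT (show (0:ℝ) < 1 by norm_num)] with c hc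
    exact key c hc.1 hc.2
  nlinarith [sq_nonneg (f 1)]

open scoped Topology

lemma contDiff_U {u : E2 → ℝ} (hu : ContDiff ℝ (⊤ : ℕ∞) u) :
    ContDiff ℝ (⊤ : ℕ∞) (fun p : ℝ × ℝ => u (p.1 • er p.2)) :=
  hu.comp (contDiff_fst.smul (contDiff_er.comp contDiff_snd))

lemma er_per : er π = er (-π) := by
  simp [er]

/-- decomposition into modes on the disc -/
lemma disc_dec {ν : ℝ} (hν0 : 0 ≤ ν) (hν : ν ≤ 4)
    (h1 : ∀ a : ℝ → ℝ, ContDiff ℝ (⊤ : ℕ∞) a → a 0 = 0 →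
      ν * (∫ r in (0:ℝ)..1, r * a r ^ 2) ≤ ∫ r in (0:ℝ)..1, (r * deriv a r ^ 2 + a r ^ 2 / r))
    {u : E2 → ℝ} (hu : ContDiff ℝ (⊤ : ℕ∞) u) (hm : ∫ x in unitDisc, u x = 0) :
    ν * (∫ x in unitDisc, u x ^ 2) ≤ ∫ x in unitDisc, ‖fderiv ℝ u x‖ ^ 2 := by
  have hπ := Real.pi_pos
  have cU := continuous_U hu
  have cA := continuous_Dr hu
  have cB := continuous_Dt hu
  have sU := contDiff_U hu
  have cer := continuous_er
  have cu := hu.continuous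
  unfold unitDisc at *
  rw [polar_ball _ hu.continuous 1 zero_le_one] at hm
  rw [polar_ball (fun x => u x ^ 2) (hu.continuous.pow 2) 1 zero_le_one, polar_energy hu 1 zero_le_one]
  obtain ⟨a0, ha0⟩ : ∃ f : ℝ → ℝ, f = fun r => (1/(2*π)) * ∫ θ in (-π)..π, u (r • er θ) := ⟨_, rfl⟩
  obtain ⟨a, ha⟩ : ∃ f : ℝ → ℝ, f = fun r => (1/π) * ∫ θ in (-π)..π, u (r • er θ) * Real.cos θ := ⟨_, rfl⟩
  obtain ⟨b, hb⟩ : ∃ f : ℝ → ℝ, f = fun r => (1/π) * ∫ θ in (-π)..π, u (r • er θ) * Real.sin θ := ⟨_, rfl⟩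
  have sa0 : ContDiff ℝ (⊤ : ℕ∞) a0 := by
    rw [ha0]; exact contDiff_const.mul (par_contDiff (G := fun r θ => u (r • er θ)) sU _ _)
  have sa : ContDiff ℝ (⊤ : ℕ∞) a := by
    rw [ha]
    exact contDiff_const.mul (par_contDiff (G := fun r θ => u (r • er θ) * Real.cos θ)
      (sU.mul (Real.contDiff_cos.comp contDiff_snd)) _ _)
  have sb : ContDiff ℝ (⊤ : ℕ∞) b := by
    rw [hb]
    exact contDiff_const.mul (par_contDiff (G := fun r θ => u (r • er θ) * Real.sin θ)
      (sU.mul (Real.contDiff_sin.comp contDiff_snd)) _ _)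
  have da0 : ∀ r, deriv a0 r = (1/(2*π)) * ∫ θ in (-π)..π, Dr u r θ := by
    intro r; rw [ha0]
    exact ((par_hasDeriv (G := fun r θ => u (r • er θ)) cU cA
      (fun r θ => hasDerivAt_r hu r θ) (-π) π r).const_mul _).deriv
  have da : ∀ r, deriv a r = (1/π) * ∫ θ in (-π)..π, Dr u r θ * Real.cos θ := by
    intro r; rw [ha]
    exact ((par_hasDeriv (G := fun r θ => u (r • er θ) * Real.cos θ)
      (G' := fun r θ => Dr u r θ * Real.cos θ) (by fun_prop) (by fun_prop)
      (fun r θ => (hasDerivAt_r hu r θ).mul_const _) (-π) π r).const_mul _).deriv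
  have db : ∀ r, deriv b r = (1/π) * ∫ θ in (-π)..π, Dr u r θ * Real.sin θ := by
    intro r; rw [hb]
    exact ((par_hasDeriv (G := fun r θ => u (r • er θ) * Real.sin θ)
      (G' := fun r θ => Dr u r θ * Real.sin θ) (by fun_prop) (by fun_prop)
      (fun r θ => (hasDerivAt_r hu r θ).mul_const _) (-π) π r).const_mul _).deriv
  have ia0 : ∀ r, ∫ θ in (-π)..π, u (r • er θ) = 2 * π * a0 r := by
    intro r; rw [ha0]; field_simp
  have ia : ∀ r, ∫ θ in (-π)..π, u (r • er θ) * Real.cos θ = π * a r := by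
    intro r; rw [ha]; field_simp
  have ib : ∀ r, ∫ θ in (-π)..π, u (r • er θ) * Real.sin θ = π * b r := by
    intro r; rw [hb]; field_simp
  have ja0 : ∀ r, ∫ θ in (-π)..π, Dr u r θ = 2 * π * deriv a0 r := by
    intro r; rw [da0]; field_simp
  have ja : ∀ r, ∫ θ in (-π)..π, Dr u r θ * Real.cos θ = π * deriv a r := by
    intro r; rw [da]; field_simp
  have jb : ∀ r, ∫ θ in (-π)..π, Dr u r θ * Real.sin θ = π * deriv b r := by
    intro r; rw [db]; field_simp
  have za : a 0 = 0 := by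
    rw [ha]; simp
  have zb : b 0 = 0 := by
    rw [hb]; simp
  have m0 : ∫ r in (0:ℝ)..1, r * a0 r = 0 := by
    simp only [intervalIntegral.integral_const_mul, ia0] at hm
    have : ∀ r, r * (2 * π * a0 r) = 2 * π * (r * a0 r) := by intro r; ring
    simp only [this, intervalIntegral.integral_const_mul] at hm
    have : 2 * π ≠ 0 := by positivity
    exact (mul_eq_zero.1 hm).resolve_left this
  have q0 := radial_mode sa0 m0
  have q1 := h1 a sa za
  have q2 := h1 b sb zb
  have ca0 := sa0.continuous
  have ca := sa.continuous
  have cb := sb.continuous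
  have ca0' : Continuous (deriv a0) := sa0.continuous_deriv (by simp)
  have ca' : Continuous (deriv a) := sa.continuous_deriv (by simp)
  have cb' : Continuous (deriv b) := sb.continuous_deriv (by simp)
  have cda := cont_sq_div sa za
  have cdb := cont_sq_div sb zb
  have cI : Continuous (fun r : ℝ => ∫ θ in (-π)..π, u (r • er θ) ^ 2) := by fun_prop
  have ii : ∀ (g : ℝ → ℝ), Continuous g → IntervalIntegrable g volume 0 1 :=
    fun g h => h.intervalIntegrable _ _
  have S0 : ∀ r : ℝ, 2 * π * a0 r^2 + π * (a r ^2 + b r^2) ≤ ∫ θ in (-π)..π, u (r • er θ) ^ 2 :=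
    fun r => bessel_modes (h := fun θ => u (r • er θ)) (by fun_prop) (ia0 r) (ia r) (ib r)
  have A0 : ∀ r, 2 * π * deriv a0 r^2 + π * (deriv a r ^2 + deriv b r^2) ≤ ∫ θ in (-π)..π, Dr u r θ ^ 2 :=
    fun r => bessel_modes (h := fun θ => Dr u r θ) (by fun_prop) (ja0 r) (ja r) (jb r)
  have B0 : ∀ r : ℝ, 4 * (∫ θ in (-π)..π, u (r • er θ) ^ 2) - 8 * π * a0 r ^2 - 3 * π * (a r ^2 + b r^2) ≤
      r ^ 2 * ∫ θ in (-π)..π, Dt u r θ ^ 2 := by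
    intro r
    have := wirt_modes (h := fun θ => u (r • er θ)) (h' := fun θ => r * Dt u r θ)
      (fun θ => hasDerivAt_t hu r θ) (by fun_prop) (by simp only [er_per]) (ia0 r) (ia r) (ib r)
    simpa only [mul_pow, intervalIntegral.integral_const_mul] using this
  have mono : ∫ r in (0:ℝ)..1, (2 * π * (r * deriv a0 r ^ 2) + π * (r * deriv a r ^ 2 + a r ^ 2 / r)
      + π * (r * deriv b r ^ 2 + b r ^ 2 / r)
      + 4 * (r * (∫ θ in (-π)..π, u (r • er θ) ^ 2) - 2 * π * (r * a0 r ^ 2) - π * (r * a r ^ 2)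
        - π * (r * b r ^ 2)))
      ≤ ∫ r in (0:ℝ)..1, ∫ θ in (-π)..π, r * (Dr u r θ ^ 2 + Dt u r θ ^ 2) := by
    apply intervalIntegral.integral_mono_on zero_le_one (ii _ (by fun_prop)) (ii _ (by fun_prop))
    intro r hr
    rw [intervalIntegral.integral_const_mul, intervalIntegral.integral_add
      (Continuous.intervalIntegrable (by fun_prop) _ _) (Continuous.intervalIntegrable (by fun_prop) _ _)]
    have s0 := S0 r
    have A1 := A0 r
    have B1 := B0 r
    generalize (∫ θ in (-π)..π, u (r • er θ) ^ 2) = I at *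
    generalize (∫ θ in (-π)..π, Dr u r θ ^ 2) = IA at *
    generalize (∫ θ in (-π)..π, Dt u r θ ^ 2) = IB at *
    rcases hr.1.eq_or_lt with h | h
    · rw [← h]; simp
    have hB : (4 * (I - 2 * π * a0 r^2 - π * (a r ^2 + b r^2)) + π * (a r ^2 + b r^2)) / r ≤ r * IB := by
      rw [div_le_iff₀ h]
      nlinarith
    rw [add_div] at hB
    have hS : 4 * (I - 2 * π * a0 r^2 - π * (a r ^2 + b r^2)) * r ≤
        4 * (I - 2 * π * a0 r^2 - π * (a r ^2 + b r^2)) / r := by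
      rw [le_div_iff₀ h]
      have : r * r ≤ 1 := by nlinarith [hr.2]
      nlinarith
    have e : π * (a r ^ 2 + b r ^ 2) / r = π * (a r ^ 2 / r) + π * (b r ^ 2 / r) := by ring
    have := mul_le_mul_of_nonneg_left A1 hr.1
    linarith
  rw [intervalIntegral.integral_add (ii _ (by fun_prop)) (ii _ (by fun_prop)),
    intervalIntegral.integral_add (ii _ (by fun_prop)) (ii _ (by fun_prop)),
    intervalIntegral.integral_add (ii _ (by fun_prop)) (ii _ (by fun_prop)),
    intervalIntegral.integral_const_mul, intervalIntegral.integral_const_mul,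
    intervalIntegral.integral_const_mul, intervalIntegral.integral_const_mul] at mono
  have Se : ∫ r in (0:ℝ)..1, (r * (∫ θ in (-π)..π, u (r • er θ) ^ 2) - 2 * π * (r * a0 r ^ 2) - π * (r * a r ^ 2)
        - π * (r * b r ^ 2)) = (∫ r in (0:ℝ)..1, r * (∫ θ in (-π)..π, u (r • er θ) ^ 2))
        - 2 * π * (∫ r in (0:ℝ)..1, (r * a0 r ^ 2)) - π * (∫ r in (0:ℝ)..1, (r * a r ^ 2))
        - π * (∫ r in (0:ℝ)..1, (r * b r ^ 2)) := by
    rw [intervalIntegral.integral_sub (ii _ (by fun_prop)) (ii _ (by fun_prop)),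
      intervalIntegral.integral_sub (ii _ (by fun_prop)) (ii _ (by fun_prop)),
      intervalIntegral.integral_sub (ii _ (by fun_prop)) (ii _ (by fun_prop)),
      intervalIntegral.integral_const_mul, intervalIntegral.integral_const_mul,
      intervalIntegral.integral_const_mul]
  have Sp : 0 ≤ ∫ r in (0:ℝ)..1, (r * (∫ θ in (-π)..π, u (r • er θ) ^ 2) - 2 * π * (r * a0 r ^ 2) - π * (r * a r ^ 2)
        - π * (r * b r ^ 2)) := by
    apply intervalIntegral.integral_nonneg zero_le_one
    intro r hr
    have := mul_le_mul_of_nonneg_left (S0 r) hr.1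
    linarith
  have p0 : 0 ≤ ∫ r in (0:ℝ)..1, (r * a0 r ^ 2) :=
    intervalIntegral.integral_nonneg zero_le_one fun r hr => mul_nonneg hr.1 (sq_nonneg _)
  simp only [intervalIntegral.integral_const_mul] at mono ⊢
  rw [Se] at Sp mono
  generalize (∫ r in (0:ℝ)..1, r * (∫ θ in (-π)..π, u (r • er θ) ^ 2)) = X at *
  generalize (∫ r in (0:ℝ)..1, (r * a0 r ^ 2)) = X0 at *
  generalize (∫ r in (0:ℝ)..1, (r * a r ^ 2)) = X1 at *
  generalize (∫ r in (0:ℝ)..1, (r * b r ^ 2)) = X2 at *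
  have e1 := mul_le_mul_of_nonneg_right hν Sp
  have e2 : 2 * π * (ν * X0) ≤ 2 * π * (4 * X0) :=
    mul_le_mul_of_nonneg_left (mul_le_mul_of_nonneg_right hν p0) (by positivity)
  have e3 := mul_le_mul_of_nonneg_left q0 (by positivity : 0 ≤ 2 * π)
  have e4 := mul_le_mul_of_nonneg_left q1 hπ.le
  have e5 := mul_le_mul_of_nonneg_left q2 hπ.le
  nlinarith

open scoped Topology

lemma intOn {Ω : Set E2} (hb : Bornology.IsBounded Ω) {g : E2 → ℝ} (hg : Continuous g) :
    IntegrableOn g Ω := by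
  obtain ⟨R, hR⟩ := hb.subset_closedBall 0
  exact (hg.continuousOn.integrableOn_compact (isCompact_closedBall (0:E2) R)).mono_set hR

lemma contDiff_x0 : ContDiff ℝ (⊤ : ℕ∞) (fun x : E2 => x 0) := by fun_prop

lemma x0_sq_pos {Ω : Set E2} (ho : IsOpen Ω) (hb : Bornology.IsBounded Ω) (hD : unitDisc ⊆ Ω) :
    0 < ∫ x in Ω, (x 0) ^ 2 := by
  rw [setIntegral_pos_iff_support_of_nonneg_ae (Eventually.of_forall fun x => sq_nonneg _)
    (intOn hb (by fun_prop))]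
  have hop : IsOpen ((Function.support fun x : E2 => (x 0)^2) ∩ Ω) :=
    IsOpen.inter (Continuous.isOpen_support (by fun_prop)) ho
  refine hop.measure_pos volume ?_
  refine ⟨(1/2 : ℝ) • er 0, ?_, hD ?_⟩
  · simp [er_zero]
  · simp only [unitDisc, Metric.mem_ball, dist_zero_right]
    rw [norm_smul_er (by norm_num)]; norm_num

lemma le_nEig1 {Ω : Set E2} (ho : IsOpen Ω) (hb : Bornology.IsBounded Ω) (hD : unitDisc ⊆ Ω)
    (hs : ∀ x, x ∈ Ω ↔ -x ∈ Ω) {c : ℝ}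
    (h : ∀ u : E2 → ℝ, ContDiff ℝ (⊤ : ℕ∞) u → ∫ x in Ω, u x = 0 →
      c * (∫ x in Ω, (u x)^2) ≤ ∫ x in Ω, ‖fderiv ℝ u x‖^2) : c ≤ nEig1 Ω := by
  apply le_csInf
  · exact ⟨_, fun x : E2 => x 0, contDiff_x0, integral_odd hs ho.measurableSet (by simp),
      (x0_sq_pos ho hb hD).ne', rfl⟩
  · rintro R ⟨u, hu, hm, hn, rfl⟩
    have : 0 < ∫ x in Ω, (u x)^2 :=
      lt_of_le_of_ne (integral_nonneg fun x => sq_nonneg _) hn.symm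
    rw [le_div_iff₀ this]
    exact h u hu hm

lemma disc_sym (x : E2) : x ∈ unitDisc ↔ -x ∈ unitDisc := by
  simp [unitDisc]

lemma disc_le_nEig1 {c : ℝ}
    (h : ∀ u : E2 → ℝ, ContDiff ℝ (⊤ : ℕ∞) u → ∫ x in unitDisc, u x = 0 →
      c * (∫ x in unitDisc, (u x)^2) ≤ ∫ x in unitDisc, ‖fderiv ℝ u x‖^2) : c ≤ nEig1 unitDisc :=
  le_nEig1 Metric.isOpen_ball Metric.isBounded_ball subset_rfl disc_sym h

lemma one_le_mu : 1 ≤ nEig1 unitDisc := by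
  apply disc_le_nEig1
  intro u hu hm
  refine disc_dec zero_le_one (by norm_num) ?_ hu hm
  intro a ha h0
  have hc := ha.continuous
  have hc' : Continuous (deriv a) := ha.continuous_deriv (by simp)
  have hd := cont_sq_div ha h0
  rw [one_mul]
  apply intervalIntegral.integral_mono_on zero_le_one (Continuous.intervalIntegrable (by fun_prop) _ _)
    (Continuous.intervalIntegrable (by fun_prop) _ _)
  intro r hr
  rcases hr.1.eq_or_lt with h | h
  · rw [← h]; simp
  · have : r * a r ^ 2 ≤ a r ^ 2 / r := by
      rw [le_div_iff₀ h]
      have : r * r ≤ 1 := by nlinarith [hr.2]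
      nlinarith [sq_nonneg (a r)]
    have := mul_nonneg hr.1 (sq_nonneg (deriv a r))
    linarith

lemma int_rr : ∫ r in (0:ℝ)..1, (r * 1 ^ 2 + r ^ 2 / r) = 1 := by
  have : ∀ r : ℝ, r * 1 ^ 2 + r ^ 2 / r = 2 * r := by
    intro r
    by_cases h : r = 0
    · simp [h]
    · field_simp; ring
  simp only [this]
  rw [intervalIntegral.integral_const_mul, integral_id]; norm_num

lemma int_r3 : ∫ r in (0:ℝ)..1, r * r ^ 2 = 1 / 4 := by
  have : ∀ r : ℝ, r * r ^ 2 = r ^ 3 := by intro r; ring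
  simp only [this, integral_pow]; norm_num

lemma mu_le_four : nEig1 unitDisc ≤ 4 := by
  have e : modF (fun r => r) = fun x : E2 => x 0 := by
    funext x
    unfold modF
    by_cases h : ‖x‖ = 0
    · rw [norm_eq_zero] at h; simp [h]
    · field_simp
  have hu : ContDiff ℝ (⊤ : ℕ∞) (modF (fun r => r)) := by rw [e]; exact contDiff_x0
  have h := nEig1_mul_le (Ω := unitDisc) hu
    (integral_odd disc_sym Metric.isOpen_ball.measurableSet (modF_neg _))
  unfold unitDisc at h ⊢
  rw [modF_sq hu, modF_energy hu (F' := fun _ => 1) (fun r => hasDerivAt_id r), int_rr, int_r3] at h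
  have := Real.pi_pos
  nlinarith

/-- admissible radial profiles -/
def GoodF (f : ℝ → ℝ) : Prop :=
  ContDiff ℝ (⊤ : ℕ∞) f ∧ ∃ δ : ℝ, 0 < δ ∧ δ < 1 / 2 ∧ (∀ r ≤ δ, f r = 0) ∧
    ∀ r, 1 - δ ≤ r → f r = f 1

lemma good_psi {a : ℝ → ℝ} (ha : ContDiff ℝ (⊤ : ℕ∞) a) (h0 : a 0 = 0) (n : ℕ) :
    GoodF (fun r => a (psi (dl n) r)) := by
  refine ⟨ha.comp (psi_contDiff _), dl n, dl_pos n, dl_lt n, ?_, ?_⟩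
  · intro r hr; simp only; rw [psi_left (dl_pos n) hr, h0]
  · intro r hr; simp only; rw [psi_right (dl_pos n) hr]

lemma good_limit {a : ℝ → ℝ} (ha : ContDiff ℝ (⊤ : ℕ∞) a) (h0 : a 0 = 0) {ν : ℝ}
    (H : ∀ f, GoodF f → ν * (∫ r in (0:ℝ)..1, r * f r ^ 2) ≤
      ∫ r in (0:ℝ)..1, (r * deriv f r ^ 2 + f r ^ 2 / r)) :
    ν * (∫ r in (0:ℝ)..1, r * a r ^ 2) ≤ ∫ r in (0:ℝ)..1, (r * deriv a r ^ 2 + a r ^ 2 / r) := by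
  have hc := ha.continuous
  have hc' : Continuous (deriv a) := ha.continuous_deriv (by simp)
  have hd := cont_dslope ha
  have t1 := dct_psi (fun p => p.1 * a p.2.1 ^ 2) (by fun_prop)
  have t2 := dct_psi (fun p => p.1 * (deriv a p.2.1 * p.2.2.1) ^ 2 +
    p.1 * (dslope a 0 p.2.1 * p.2.2.2.1) ^ 2) (by fun_prop)
  simp only [mul_one] at t1 t2
  simp only [sq_div_eq h0]
  refine le_of_tendsto_of_tendsto (t1.const_mul ν) t2 (Eventually.of_forall fun n => ?_)
  have := H _ (good_psi ha h0 n)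
  refine this.trans (le_of_eq ?_)
  congr 1
  funext r
  have d1 : deriv (fun r => a (psi (dl n) r)) r = deriv a (psi (dl n) r) * chi (dl n) r :=
    ((ha.differentiable (by simp) (psi (dl n) r)).hasDerivAt.comp r (psi_hasDerivAt (dl n) r)).deriv
  rw [d1]
  congr 1
  rw [eq_dslope h0 (psi (dl n) r)]
  by_cases hr : r = 0
  · simp [hr]
  · field_simp

lemma exists_good {ε : ℝ} (hε : 0 < ε) : ∃ f, GoodF f ∧ 0 < (∫ r in (0:ℝ)..1, r * f r ^ 2) ∧
    ∫ r in (0:ℝ)..1, (r * deriv f r ^ 2 + f r ^ 2 / r) ≤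
      (nEig1 unitDisc + ε) * ∫ r in (0:ℝ)..1, r * f r ^ 2 := by
  by_contra hcon
  push Not at hcon
  have H : ∀ f, GoodF f → (nEig1 unitDisc + ε) * (∫ r in (0:ℝ)..1, r * f r ^ 2) ≤
      ∫ r in (0:ℝ)..1, (r * deriv f r ^ 2 + f r ^ 2 / r) := by
    intro f hf
    have n1 : 0 ≤ ∫ r in (0:ℝ)..1, r * f r ^ 2 :=
      intervalIntegral.integral_nonneg zero_le_one fun r hr => mul_nonneg hr.1 (sq_nonneg _)
    rcases n1.eq_or_lt with h | h
    · rw [← h, mul_zero]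
      exact intervalIntegral.integral_nonneg zero_le_one fun r hr =>
        add_nonneg (mul_nonneg hr.1 (sq_nonneg _)) (div_nonneg (sq_nonneg _) hr.1)
    · exact (hcon f hf h).le
  have H2 := fun a ha h0 => good_limit (a := a) ha h0 H
  have h4 : nEig1 unitDisc + ε ≤ 4 := by
    have := H2 (fun r => r) contDiff_id rfl
    rw [int_r3] at this
    have e : ∀ r : ℝ, deriv (fun r : ℝ => r) r = 1 := fun r => (hasDerivAt_id r).deriv
    simp only [e, int_rr] at this
    linarith
  have := disc_le_nEig1 (c := nEig1 unitDisc + ε) fun u hu hm =>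
    disc_dec (by linarith [one_le_mu]) h4 H2 hu hm
  linarith

lemma good_bdry {f : ℝ → ℝ} (hf : GoodF f) {ε : ℝ} (hε1 : ε ≤ 1 / 100)
    (hV : 0 < (∫ r in (0:ℝ)..1, r * f r ^ 2))
    (hQ : ∫ r in (0:ℝ)..1, (r * deriv f r ^ 2 + f r ^ 2 / r) ≤
      (nEig1 unitDisc + ε) * ∫ r in (0:ℝ)..1, r * f r ^ 2) :
    (3 / 2) * (∫ r in (0:ℝ)..1, r * f r ^ 2) ≤ f 1 ^ 2 := by
  obtain ⟨hs, δ, hδ, hδ2, hl, hr⟩ := hf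
  have f0 : f 0 = 0 := hl 0 hδ.le
  have hc := hs.continuous
  have hc' : Continuous (deriv f) := hs.continuous_deriv (by simp)
  have hd := cont_sq_div hs f0
  have hder : ∀ r, HasDerivAt f (deriv f r) r := fun r => (hs.differentiable (by simp) r).hasDerivAt
  have ii : ∀ (g : ℝ → ℝ) (a b : ℝ), Continuous g → IntervalIntegrable g volume a b :=
    fun g a b h => h.intervalIntegrable _ _
  -- dilation
  have hg : ContDiff ℝ (⊤ : ℕ∞) (fun r => f (9/10 * r)) := by fun_prop
  have hu := modF_contDiff hg hδ (by intro r hr'; apply hl; rcases le_total 0 r with h | h <;> linarith)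
  have hgd : ∀ r, HasDerivAt (fun r => f (9/10 * r)) (9/10 * deriv f (9/10 * r)) r := by
    intro r
    have := (hder (9/10 * r)).comp r ((hasDerivAt_id r).const_mul (9/10))
    refine HasDerivAt.congr_deriv this ?_
    ring
  have h := nEig1_mul_le (Ω := unitDisc) hu
    (integral_odd disc_sym Metric.isOpen_ball.measurableSet (modF_neg _))
  have h1 := one_le_mu
  have h4 := mu_le_four
  generalize hμ : nEig1 unitDisc = μ at *
  unfold unitDisc at h
  rw [modF_sq hu, modF_energy hu hgd] at h
  have e1 : ∫ r in (0:ℝ)..1, r * f (9/10 * r) ^ 2 = (100/81) * ∫ r in (0:ℝ)..(9/10), r * f r ^ 2 := by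
    have : ∀ r : ℝ, r * f (9/10 * r) ^ 2 = (10/9) * ((9/10 * r) * f (9/10 * r) ^ 2) := by
      intro r; ring
    simp only [this]
    rw [intervalIntegral.integral_const_mul,
      intervalIntegral.integral_comp_mul_left (fun r => r * f r ^ 2) (by norm_num : (9/10:ℝ) ≠ 0)]
    simp only [smul_eq_mul, mul_zero, mul_one]; ring
  have e2 : ∫ r in (0:ℝ)..1, (r * (9/10 * deriv f (9/10 * r)) ^ 2 + f (9/10 * r) ^ 2 / r)
      = ∫ r in (0:ℝ)..(9/10), (r * deriv f r ^ 2 + f r ^ 2 / r) := by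
    have : ∀ r : ℝ, (r * (9/10 * deriv f (9/10 * r)) ^ 2 + f (9/10 * r) ^ 2 / r) =
        (9/10) * ((9/10 * r) * deriv f (9/10 * r) ^ 2 + f (9/10 * r) ^ 2 / (9/10 * r)) := by
      intro r
      by_cases h : r = 0
      · simp [h]
      · field_simp
    simp only [this]
    rw [intervalIntegral.integral_const_mul,
      intervalIntegral.integral_comp_mul_left (fun r => r * deriv f r ^ 2 + f r ^ 2 / r)
        (by norm_num : (9/10:ℝ) ≠ 0)]
    simp only [smul_eq_mul, mul_zero, mul_one]; ring
  rw [e1, e2] at h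
  have s1 : (∫ r in (0:ℝ)..(9/10), r * f r ^ 2) + (∫ r in (9/10:ℝ)..1, r * f r ^ 2)
      = ∫ r in (0:ℝ)..1, r * f r ^ 2 :=
    intervalIntegral.integral_add_adjacent_intervals (ii _ _ _ (by fun_prop)) (ii _ _ _ (by fun_prop))
  have s2 : (∫ r in (0:ℝ)..(9/10), (r * deriv f r ^ 2 + f r ^ 2 / r)) +
      (∫ r in (9/10:ℝ)..1, (r * deriv f r ^ 2 + f r ^ 2 / r))
      = ∫ r in (0:ℝ)..1, (r * deriv f r ^ 2 + f r ^ 2 / r) :=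
    intervalIntegral.integral_add_adjacent_intervals (ii _ _ _ (by fun_prop)) (ii _ _ _ (by fun_prop))
  have s3 : (∫ r in (9/10:ℝ)..1, r * deriv f r ^ 2) + (∫ r in (9/10:ℝ)..1, r * f r ^ 2) ≤
      ∫ r in (9/10:ℝ)..1, (r * deriv f r ^ 2 + f r ^ 2 / r) := by
    rw [← intervalIntegral.integral_add (ii _ _ _ (by fun_prop)) (ii _ _ _ (by fun_prop))]
    apply intervalIntegral.integral_mono_on (by norm_num) (ii _ _ _ (by fun_prop)) (ii _ _ _ (by fun_prop))
    intro r hr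
    have hp : 0 < r := by linarith [hr.1]
    have : r * f r ^ 2 ≤ f r ^ 2 / r := by
      rw [le_div_iff₀ hp]
      have : r * r ≤ 1 := by nlinarith [hr.2]
      nlinarith [sq_nonneg (f r)]
    linarith
  have j1 : (∫ r in (9/10:ℝ)..1, |deriv f r|) ^ 2 ≤ (1/9) * ∫ r in (9/10:ℝ)..1, r * deriv f r ^ 2 := by
    have a1 := cs_full hc' (show (9/10:ℝ) < 1 by norm_num)
    have a2 : (9/10) * (∫ r in (9/10:ℝ)..1, deriv f r ^ 2) ≤ ∫ r in (9/10:ℝ)..1, r * deriv f r ^ 2 := by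
      rw [← intervalIntegral.integral_const_mul]
      apply intervalIntegral.integral_mono_on (by norm_num) (ii _ _ _ (by fun_prop)) (ii _ _ _ (by fun_prop))
      intro r hr
      exact mul_le_mul_of_nonneg_right hr.1 (sq_nonneg _)
    linarith
  have v1 : (∫ r in (9/10:ℝ)..1, r * f r ^ 2) ≤
      (1/10) * ((4/3) * f 1 ^ 2 + (4/9) * ∫ r in (9/10:ℝ)..1, r * deriv f r ^ 2) := by
    have : (1/10) * ((4/3) * f 1 ^ 2 + (4/9) * ∫ r in (9/10:ℝ)..1, r * deriv f r ^ 2) =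
      ∫ _ in (9/10:ℝ)..1, ((4/3) * f 1 ^ 2 + (4/9) * ∫ r in (9/10:ℝ)..1, r * deriv f r ^ 2) := by
      rw [intervalIntegral.integral_const, smul_eq_mul]; ring
    rw [this]
    apply intervalIntegral.integral_mono_on (by norm_num) (ii _ _ _ (by fun_prop)) (ii _ _ _ (by fun_prop))
    intro r hr
    have k := diff_le_int_abs hder hc' hr (right_mem_Icc.2 (by norm_num : (9/10:ℝ) ≤ 1))
    have k2 : (f r - f 1) ^ 2 ≤ (∫ r in (9/10:ℝ)..1, |deriv f r|) ^ 2 := by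
      rw [← sq_abs (f r - f 1)]
      exact pow_le_pow_left₀ (abs_nonneg _) k 2
    have k3 : f r ^ 2 ≤ (4/3) * f 1 ^ 2 + 4 * (f r - f 1) ^ 2 := by
      nlinarith [sq_nonneg (f 1 / 3 + (f r - f 1)), sq_nonneg (f 1 - 3 * (f r - f 1))]
    have k4 : r * f r ^ 2 ≤ f r ^ 2 := by nlinarith [hr.2, sq_nonneg (f r)]
    linarith
  have P0 : 0 ≤ ∫ r in (9/10:ℝ)..1, r * deriv f r ^ 2 :=
    intervalIntegral.integral_nonneg (by norm_num) fun r hr =>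
      mul_nonneg (by linarith [hr.1]) (sq_nonneg _)
  generalize (∫ r in (9/10:ℝ)..1, r * deriv f r ^ 2) = P at *
  generalize (∫ r in (9/10:ℝ)..1, r * f r ^ 2) = V1 at *
  generalize (∫ r in (0:ℝ)..(9/10), r * f r ^ 2) = V0 at *
  generalize (∫ r in (0:ℝ)..(9/10), (r * deriv f r ^ 2 + f r ^ 2 / r)) = Q0 at *
  generalize (∫ r in (9/10:ℝ)..1, (r * deriv f r ^ 2 + f r ^ 2 / r)) = Q1 at *
  generalize (∫ r in (0:ℝ)..1, (r * deriv f r ^ 2 + f r ^ 2 / r)) = Q at *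
  generalize (∫ r in (0:ℝ)..1, r * f r ^ 2) = V at *
  generalize f 1 ^ 2 = F at *
  have h' : μ * (100/81 * V0) ≤ Q0 := by
    have hp := Real.pi_pos
    nlinarith
  have g1 : (19/81 * μ - ε) * V ≤ (100/81 * μ - 1) * V1 - P := by
    have : V0 = V - V1 := by linarith
    rw [this] at h'
    nlinarith
  have g2 : (100/81 * μ - 1) * V1 ≤ (100/81 * μ - 1) * (1/10 * (4/3 * F + 4/9 * P)) :=
    mul_le_mul_of_nonneg_left v1 (by linarith)
  have g3 : (100/81 * μ - 1) * P ≤ 4 * P := mul_le_mul_of_nonneg_right (by linarith) P0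
  have g4 : (19/81 * μ - ε) * V ≤ (100/81 * μ - 1) * (2/15) * F := by nlinarith
  by_contra hcon
  push Not at hcon
  have g5 : (100/81 * μ - 1) * (2/15) * F ≤ (100/81 * μ - 1) * (2/15) * (3/2 * V) :=
    mul_le_mul_of_nonneg_left hcon.le (by nlinarith)
  have g6 : 0 < (19/81 * μ - ε - (100/81 * μ - 1) * (1/5)) * V := mul_pos (by linarith) hV
  nlinarith

open scoped Topology

lemma vol_disc : (volume unitDisc).toReal = π := by
  unfold unitDisc
  rw [EuclideanSpace.volume_ball_fin_two]
  simp [Real.pi_pos.le]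

lemma vol_fin {Ω : Set E2} (hb : Bornology.IsBounded Ω) : volume Ω ≠ ⊤ := hb.measure_lt_top.ne

lemma good_outside {f : ℝ → ℝ} (hf : GoodF f) {x : E2} {w : ℝ} (hx : 1 ≤ ‖x‖) (hw : |x 1| ≤ w) :
    f 1 ^ 2 * (1 - w ^ 2) ≤ modF f x ^ 2 ∧ ‖fderiv ℝ (modF f) x‖ ^ 2 ≤ f 1 ^ 2 * w ^ 2 := by
  obtain ⟨hs, δ, hδ, hδ2, hl, hr⟩ := hf
  have hu := modF_contDiff hs hδ hl
  obtain ⟨r, θ, hr0, hrx, rfl⟩ := exists_polar x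
  rw [← hrx] at hx
  have hrp : 0 < r := by linarith
  have fr : f r = f 1 := hr r (by linarith)
  have hd : HasDerivAt f 0 r := by
    have : f =ᶠ[𝓝 r] fun _ => f 1 := by
      filter_upwards [lt_mem_nhds (show 1 - δ < r by linarith)] with y hy
      exact hr y hy.le
    exact (hasDerivAt_const r (f 1)).congr_of_eventuallyEq this
  have hsin : Real.sin θ ^ 2 ≤ w ^ 2 := by
    have h1 : |r * Real.sin θ| ≤ w := by simpa [er_one] using hw
    rw [abs_mul, abs_of_pos hrp] at h1
    have h2 : |Real.sin θ| ≤ w := by nlinarith [abs_nonneg (Real.sin θ)]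
    rw [← sq_abs (Real.sin θ)]
    exact pow_le_pow_left₀ (abs_nonneg _) h2 2
  constructor
  · rw [modF_polar f hrp, fr, mul_pow, Real.cos_sq']
    exact mul_le_mul_of_nonneg_left (by linarith) (sq_nonneg _)
  · rw [norm_sq_dual _ θ]
    have e1 := modF_Dr hu hd hrp θ
    have e2 := modF_Dt hu hrp θ
    unfold Dr at e1
    unfold Dt at e2
    rw [e1, e2, fr]
    have : (f 1 / r) ^ 2 ≤ f 1 ^ 2 := by
      rw [div_pow]
      exact div_le_self (sq_nonneg _) (one_le_pow₀ hx)
    calc (0 * Real.cos θ) ^ 2 + (-(f 1 / r) * Real.sin θ) ^ 2 = (f 1 / r) ^ 2 * Real.sin θ ^ 2 := by ring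
      _ ≤ f 1 ^ 2 * w ^ 2 := mul_le_mul this hsin (sq_nonneg _) (sq_nonneg _)

lemma neu_arith {A ε V F N μ w I1 I2 Q : ℝ} (hA0 : 0 ≤ A) (hA1 : A ≤ 1) (hε : 0 < ε) (hV : 0 < V)
    (hF : 3 / 2 * V ≤ F) (hN : 0 ≤ N) (hμ1 : 1 ≤ μ) (hw0 : 0 ≤ w) (hw1 : w ≤ 1 / 10)
    (b1 : A * (F * (1 - w ^ 2)) ≤ I1) (b2 : I2 ≤ A * (F * w ^ 2)) (hQ : Q ≤ (μ + ε) * V)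
    (h : N * (π * V + I1) ≤ π * Q + I2) : (π + A) * N ≤ π * μ + (π + A) * ε := by
  have hπ := Real.pi_pos
  have hπ3 := Real.pi_gt_three
  have hπ4 := Real.pi_lt_four
  have hF0 : 0 < F := by linarith
  have hw2 : w ^ 2 ≤ 1 / 100 := by nlinarith
  generalize w ^ 2 = ω at *
  by_contra hcon
  push Not at hcon
  -- N (pi + A) > pi mu + (pi + A) eps
  have m1 : N * (π * V + A * (F * (1 - ω))) ≤ π * ((μ + ε) * V) + A * (F * ω) := by
    have := mul_le_mul_of_nonneg_left b1 hN
    have := mul_le_mul_of_nonneg_left hQ hπ.le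
    linarith
  have X0 : 0 < π * V + A * (F * (1 - ω)) := by
    have : 0 ≤ A * (F * (1 - ω)) := mul_nonneg hA0 (mul_nonneg hF0.le (by linarith))
    have := mul_pos hπ hV
    linarith
  have m2 : (π * μ + (π + A) * ε) * (π * V + A * (F * (1 - ω))) <
      ((π + A) * N) * (π * V + A * (F * (1 - ω))) := mul_lt_mul_of_pos_right hcon X0
  have m3 : (π + A) * (N * (π * V + A * (F * (1 - ω)))) ≤
      (π + A) * (π * ((μ + ε) * V) + A * (F * ω)) := mul_le_mul_of_nonneg_left m1 (by linarith)
  have m4 : 0 ≤ (π + A) * ε * (A * (F * (1 - ω))) :=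
    mul_nonneg (by positivity) (mul_nonneg hA0 (mul_nonneg hF0.le (by linarith)))
  -- pi mu A (F (1-ω) - V) < (pi + A) A F ω
  have m5 : A * (π * μ * (F * (1 - ω) - V)) < A * ((π + A) * F * ω) := by nlinarith
  have m6 : (π + A) * F * ω ≤ π * μ * (F * (1 - ω) - V) := by
    have a1 : F * (32/100) ≤ F * (1 - ω) - V := by
      have := mul_le_mul_of_nonneg_left hw2 hF0.le
      linarith
    have a2 : 3 ≤ π * μ := by nlinarith
    have a3 : 3 * (F * (32/100)) ≤ π * μ * (F * (1 - ω) - V) :=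
      mul_le_mul a2 a1 (by positivity) (by positivity)
    have a4 : (π + A) * F * ω ≤ (5 * F) * (1/100) := by
      rcases le_total 0 ω with h0 | h0
      · exact mul_le_mul (by nlinarith) hw2 h0 (by positivity)
      · have : (π + A) * F * ω ≤ 0 := mul_nonpos_of_nonneg_of_nonpos (by positivity) h0
        linarith
    linarith
  have := mul_le_mul_of_nonneg_left m6 hA0
  linarith

lemma neu_upper {Ω : Set E2} (ho : IsOpen Ω) (hb : Bornology.IsBounded Ω) (hD : unitDisc ⊆ Ω)
    (hs : ∀ x, x ∈ Ω ↔ -x ∈ Ω) {w : ℝ} (hw0 : 0 ≤ w) (hw1 : w ≤ 1 / 10)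
    (hw : ∀ x ∈ Ω, 1 ≤ ‖x‖ → |x 1| ≤ w) (hv : (volume Ω).toReal ≤ π + 1) :
    (volume Ω).toReal * nEig1 Ω ≤ π * nEig1 unitDisc := by
  have hπ := Real.pi_pos
  have hπ3 := Real.pi_gt_three
  have hπ4 := Real.pi_lt_four
  have hDm : MeasurableSet unitDisc := Metric.isOpen_ball.measurableSet
  obtain ⟨A, hA⟩ : ∃ A, A = (volume (Ω \ unitDisc)).toReal := ⟨_, rfl⟩
  have hA0 : 0 ≤ A := hA ▸ ENNReal.toReal_nonneg
  have hvol : (volume Ω).toReal = π + A := by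
    rw [hA, ← vol_disc, ← ENNReal.toReal_add (vol_fin (hb.subset hD)) (vol_fin (hb.subset sdiff_subset)),
      ← measure_union disjoint_sdiff_self_right (ho.measurableSet.diff hDm), union_sdiff_cancel hD]
  rw [hvol] at hv ⊢
  have hA1 : A ≤ 1 := by linarith
  have split : ∀ g : E2 → ℝ, Continuous g →
      ∫ x in Ω, g x = (∫ x in unitDisc, g x) + ∫ x in Ω \ unitDisc, g x := by
    intro g hg
    rw [← setIntegral_union disjoint_sdiff_self_right (ho.measurableSet.diff hDm)
      ((intOn hb hg).mono_set hD) ((intOn hb hg).mono_set sdiff_subset), union_sdiff_cancel hD]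
  have key : ∀ ε : ℝ, 0 < ε → ε ≤ 1 / 100 → (π + A) * nEig1 Ω ≤ π * nEig1 unitDisc + (π + A) * ε := by
    intro ε hε hε1
    obtain ⟨f, hf, hV, hQ⟩ := exists_good hε
    have hF := good_bdry hf hε1 hV hQ
    have hout := fun x (hx : x ∈ Ω \ unitDisc) =>
      have h1 : 1 ≤ ‖x‖ := by
        have := hx.2
        simpa [unitDisc] using this
      good_outside hf h1 (hw x hx.1 h1)
    obtain ⟨hs', δ, hδ, hδ2, hl, hr⟩ := hf
    have hu := modF_contDiff hs' hδ hl
    have hder : ∀ r, HasDerivAt f (deriv f r) r := fun r => (hs'.differentiable (by simp) r).hasDerivAt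
    have h := nEig1_mul_le (Ω := Ω) hu (integral_odd hs ho.measurableSet (modF_neg _))
    have c1 : Continuous (fun x => modF f x ^ 2) := hu.continuous.pow 2
    have c2 : Continuous (fun x => ‖fderiv ℝ (modF f) x‖ ^ 2) := (continuous_fderiv_of hu).norm.pow 2
    rw [split _ c1, split _ c2] at h
    have b1 : A * (f 1 ^ 2 * (1 - w ^ 2)) ≤ ∫ x in Ω \ unitDisc, modF f x ^ 2 := by
      have : A * (f 1 ^ 2 * (1 - w ^ 2)) = ∫ x in Ω \ unitDisc, f 1 ^ 2 * (1 - w ^ 2) := by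
        rw [setIntegral_const, hA]; rfl
      rw [this]
      exact setIntegral_mono_on (intOn (hb.subset sdiff_subset) continuous_const)
        (intOn (hb.subset sdiff_subset) c1) (ho.measurableSet.diff hDm) fun x hx => (hout x hx).1
    have b2 : ∫ x in Ω \ unitDisc, ‖fderiv ℝ (modF f) x‖ ^ 2 ≤ A * (f 1 ^ 2 * w ^ 2) := by
      have : A * (f 1 ^ 2 * w ^ 2) = ∫ x in Ω \ unitDisc, f 1 ^ 2 * w ^ 2 := by
        rw [setIntegral_const, hA]; rfl
      rw [this]
      exact setIntegral_mono_on (intOn (hb.subset sdiff_subset) c2)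
        (intOn (hb.subset sdiff_subset) continuous_const) (ho.measurableSet.diff hDm)
        fun x hx => (hout x hx).2
    have d1 : ∫ x in unitDisc, modF f x ^ 2 = π * ∫ r in (0:ℝ)..1, r * f r ^ 2 := modF_sq hu
    have d2 : ∫ x in unitDisc, ‖fderiv ℝ (modF f) x‖ ^ 2
      = π * ∫ r in (0:ℝ)..1, (r * deriv f r ^ 2 + f r ^ 2 / r) := modF_energy hu hder
    rw [d1, d2] at h
    have hN := nEig1_nonneg Ω
    have hμ1 := one_le_mu
    generalize (∫ x in Ω \ unitDisc, modF f x ^ 2) = I1 at *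
    generalize (∫ x in Ω \ unitDisc, ‖fderiv ℝ (modF f) x‖ ^ 2) = I2 at *
    generalize (∫ r in (0:ℝ)..1, (r * deriv f r ^ 2 + f r ^ 2 / r)) = Q at *
    generalize (∫ r in (0:ℝ)..1, r * f r ^ 2) = V at *
    generalize f 1 ^ 2 = F at *
    generalize nEig1 Ω = N at *
    generalize nEig1 unitDisc = μ at *
    exact neu_arith hA0 hA1 hε hV hF hN hμ1 hw0 hw1 b1 b2 hQ h
  apply le_of_forall_pos_le_add
  intro e he
  have hpA : 0 < π + A := by linarith
  have := key (min (e / (π + A)) (1/100)) (by positivity) (min_le_right _ _)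
  have h2 : (π + A) * min (e / (π + A)) (1/100) ≤ (π + A) * (e / (π + A)) :=
    mul_le_mul_of_nonneg_left (min_le_left _ _) hpA.le
  have h3 : (π + A) * (e / (π + A)) = e := by field_simp
  linarith

open scoped Topology Pointwise

/-- admissible star-shaped domains -/
structure Adm (R : ℝ) (Ω : Set E2) : Prop where
  op : IsOpen Ω
  disc : unitDisc ⊆ Ω
  bd : Ω ⊆ Metric.closedBall 0 R
  sym : ∀ x, x ∈ Ω ↔ -x ∈ Ω
  star : ∀ x ∈ Ω, ∀ κ : ℝ, 0 ≤ κ → κ ≤ 1 → κ • x ∈ Ω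

lemma Adm.bdd {R : ℝ} {Ω : Set E2} (h : Adm R Ω) : Bornology.IsBounded Ω :=
  Metric.isBounded_closedBall.subset h.bd

lemma Adm.ne {R : ℝ} {Ω : Set E2} (h : Adm R Ω) : Ω.Nonempty :=
  ⟨0, h.disc (by simp [unitDisc])⟩

lemma Adm.meas {R : ℝ} {Ω : Set E2} (h : Adm R Ω) : MeasurableSet Ω := h.op.measurableSet

lemma Adm.vol_pos {R : ℝ} {Ω : Set E2} (h : Adm R Ω) : 0 < (volume Ω).toReal :=
  ENNReal.toReal_pos (h.op.measure_pos volume h.ne).ne' (vol_fin h.bdd)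

lemma scale_int (Ω : Set E2) (g : E2 → ℝ) {s : ℝ} (hs : 0 < s) :
    s ^ 2 * ∫ x in Ω, g (s • x) = ∫ x in s • Ω, g x := by
  rw [Measure.setIntegral_comp_smul_of_pos volume g Ω hs]
  simp only [finrank_euclideanSpace, Fintype.card_fin, smul_eq_mul]
  field_simp

lemma vol_smul (Ω : Set E2) (s : ℝ) :
    (volume (s • Ω)).toReal = s ^ 2 * (volume Ω).toReal := by
  rw [Measure.addHaar_smul, ENNReal.toReal_mul, ENNReal.toReal_ofReal (abs_nonneg _)]
  simp

lemma vol_sand {R : ℝ} {Ω Ω' : Set E2} (h : Adm R Ω) {κ : ℝ} (hκ : 0 < κ)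
    (hs : ∀ x ∈ Ω', κ • x ∈ Ω) : κ ^ 2 * (volume Ω').toReal ≤ (volume Ω).toReal := by
  rw [← vol_smul Ω' κ]
  apply ENNReal.toReal_mono (vol_fin h.bdd)
  apply measure_mono
  rintro _ ⟨x, hx, rfl⟩
  exact hs x hx

lemma fderiv_scale {u : E2 → ℝ} (hu : ContDiff ℝ (⊤ : ℕ∞) u) (s : ℝ) (x : E2) :
    fderiv ℝ (fun x => u (s • x)) x = s • fderiv ℝ u (s • x) := by
  have h1 : HasFDerivAt (fun x : E2 => s • x) (s • ContinuousLinearMap.id ℝ E2) x :=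
    (hasFDerivAt_id x).const_smul s
  have h2 := ((hu.differentiable (by simp) (s • x)).hasFDerivAt.comp x h1).fderiv
  rw [Function.comp_def] at h2
  rw [h2]
  ext y
  simp

lemma dEig_sand {Ω Ω' : Set E2} (ho : IsOpen Ω') (hn : Ω'.Nonempty) {κ : ℝ} (hκ : 0 < κ)
    (hs : ∀ x ∈ Ω', κ • x ∈ Ω) : κ ^ 2 * dEig1 Ω ≤ dEig1 Ω' := by
  apply le_dEig1 ho hn
  intro u hu hc ht
  have hv : ContDiff ℝ (⊤ : ℕ∞) (fun x => u (κ⁻¹ • x)) := by fun_prop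
  have hts : tsupport (fun x => u (κ⁻¹ • x)) = (fun x => κ⁻¹ • x) ⁻¹' tsupport u :=
    tsupport_comp_eq_preimage u (Homeomorph.smulOfNeZero κ⁻¹ (inv_ne_zero hκ.ne'))
  have hcv : HasCompactSupport (fun x => u (κ⁻¹ • x)) := by
    exact hc.comp_homeomorph (Homeomorph.smulOfNeZero κ⁻¹ (inv_ne_zero hκ.ne'))
  have h := dEig1_mul_le (Ω := Ω) hv hcv (by
    rw [hts]
    intro x hx
    have := hs _ (ht hx)
    rwa [smul_inv_smul₀ hκ.ne'] at this)
  simp only [fderiv_scale hu, norm_smul, mul_pow] at h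
  rw [Measure.integral_comp_inv_smul_of_nonneg volume (fun x => u x ^ 2) hκ.le, integral_const_mul,
    Measure.integral_comp_inv_smul_of_nonneg volume (fun x => ‖fderiv ℝ u x‖ ^ 2) hκ.le] at h
  simp only [finrank_euclideanSpace, Fintype.card_fin, smul_eq_mul, norm_inv, Real.norm_eq_abs,
    sq_abs, inv_pow] at h
  rw [← mul_assoc (κ ^ 2)⁻¹, inv_mul_cancel₀ (by positivity), one_mul] at h
  linarith

lemma cs_set {S : Set E2} (hb : Bornology.IsBounded S) {u : E2 → ℝ}
    (hu : Continuous u) : (∫ x in S, u x) ^ 2 ≤ (volume S).toReal * ∫ x in S, u x ^ 2 := by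
  have h : ∀ c : ℝ, 0 ≤ (∫ x in S, u x ^ 2) - 2 * c * (∫ x in S, u x) + c ^ 2 * (volume S).toReal := by
    intro c
    have e : ∫ x in S, (u x - c) ^ 2 =
        (∫ x in S, u x ^ 2) - 2 * c * (∫ x in S, u x) + c ^ 2 * (volume S).toReal := by
      have : ∀ x, (u x - c) ^ 2 = u x ^ 2 - 2 * c * u x + c ^ 2 := by intro x; ring
      simp only [this]
      rw [integral_add (intOn hb (by fun_prop)) (intOn hb (by fun_prop)),
        integral_sub (intOn hb (by fun_prop)) (intOn hb (by fun_prop)), integral_const_mul,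
        setIntegral_const, smul_eq_mul, Measure.real]
      ring
    rw [← e]
    exact integral_nonneg fun x => sq_nonneg _
  have hv : 0 ≤ (volume S).toReal := ENNReal.toReal_nonneg
  generalize (∫ x in S, u x) = a at *
  generalize (∫ x in S, u x ^ 2) = b at *
  generalize (volume S).toReal = v at *
  rcases hv.eq_or_lt with h0 | h0
  · rw [← h0] at h ⊢
    by_contra hc
    have ha : a ≠ 0 := by rintro rfl; simp at hc
    have := h ((b + 1) / (2 * a))
    have e : 2 * ((b + 1) / (2 * a)) * a = b + 1 := by field_simp
    rw [e] at this
    linarith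
  · have := h (a / v)
    have e : b - 2 * (a / v) * a + (a / v) ^ 2 * v = b - a ^ 2 / v := by field_simp; ring
    rw [e] at this
    have h2 : a ^ 2 / v ≤ b := by linarith
    rw [div_le_iff₀ h0] at h2
    linarith

lemma shell_est {R : ℝ} (hR : 0 ≤ R) {Ω : Set E2} (h : Adm R Ω) {u : E2 → ℝ}
    (hu : ContDiff ℝ (⊤ : ℕ∞) u) {σ : ℝ} (hσ : 1 / 2 ≤ σ) (hσ1 : σ ≤ 1) :
    (∫ x in Ω, u x ^ 2) - (∫ x in σ • Ω, u x ^ 2) ≤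
      (4 + R) * ((∫ x in Ω, u x ^ 2) + ∫ x in Ω, ‖fderiv ℝ u x‖ ^ 2) * (1 - σ) := by
  have cu := hu.continuous
  have cd := continuous_fderiv_of hu
  have hsub : ∀ s : ℝ, 0 ≤ s → s ≤ 1 → s • Ω ⊆ Ω := by
    rintro s h0 h1 _ ⟨x, hx, rfl⟩
    exact h.star x hx s h0 h1
  obtain ⟨k, hk⟩ : ∃ k : ℝ → ℝ, k = fun s => ∫ x in Ω, s ^ 2 * u (s • x) ^ 2 := ⟨_, rfl⟩
  obtain ⟨G, hG⟩ : ∃ G : ℝ → E2 → ℝ, G = fun s x => 2 * s * u (s • x) ^ 2 +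
      s ^ 2 * (2 * u (s • x) * fderiv ℝ u (s • x) x) := ⟨_, rfl⟩
  have cG : Continuous (fun p : ℝ × E2 => G p.1 p.2) := by
    rw [hG]; fun_prop
  have hder : ∀ s, HasDerivAt k (∫ x in Ω, G s x) s := by
    intro s
    obtain ⟨C, hC⟩ := ((isCompact_Icc (a := s - 1) (b := s + 1)).prod
      (isCompact_closedBall (0:E2) R)).exists_bound_of_continuousOn cG.continuousOn
    rw [hk]
    refine (hasDerivAt_integral_of_dominated_loc_of_deriv_le (F := fun s x => s ^ 2 * u (s • x) ^ 2)
      (F' := G) (s := Icc (s - 1) (s + 1)) (bound := fun _ => C)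
      (Icc_mem_nhds (by linarith) (by linarith))
      (Eventually.of_forall fun x => ?_) ?_ ?_ ?_ ?_ ?_).2
    · exact Continuous.aestronglyMeasurable (by fun_prop)
    · exact intOn h.bdd (by fun_prop)
    · exact Continuous.aestronglyMeasurable (by fun_prop)
    · filter_upwards [ae_restrict_mem h.meas] with x hx t ht
      exact hC (t, x) ⟨ht, h.bd hx⟩
    · exact intOn h.bdd continuous_const
    · refine Eventually.of_forall fun x t _ => ?_
      have h1 : HasDerivAt (fun t : ℝ => t • x) x t := by
        simpa using (hasDerivAt_id t).smul_const x
      have h2 := (hu.differentiable (by simp) (t • x)).hasFDerivAt.comp_hasDerivAt t h1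
      have h3 := (hasDerivAt_pow 2 t).fun_mul (h2.fun_pow 2)
      refine h3.congr_deriv ?_
      simp [hG]
  have ks : ∀ s, 0 < s → k s = ∫ x in s • Ω, u x ^ 2 := by
    intro s hs
    rw [hk, ← scale_int Ω (fun x => u x ^ 2) hs, ← integral_const_mul]
  have mono : ∀ s, 0 < s → s ≤ 1 → ∀ g : E2 → ℝ, Continuous g → (∀ x, 0 ≤ g x) →
      s ^ 2 * ∫ x in Ω, g (s • x) ≤ ∫ x in Ω, g x := by
    intro s h0 h1 g hg hp
    rw [scale_int Ω g h0]
    exact setIntegral_mono_set (intOn h.bdd hg) (Eventually.of_forall hp)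
      (LE.le.eventuallyLE (hsub s h0.le h1))
  have bound : ∀ s ∈ Icc (1/2:ℝ) 1, ∫ x in Ω, G s x ≤
      (4 + R) * ((∫ x in Ω, u x ^ 2) + ∫ x in Ω, ‖fderiv ℝ u x‖ ^ 2) := by
    intro s hs
    have h0 : 0 < s := by linarith [hs.1]
    have b1 : ∫ x in Ω, G s x ≤ ∫ x in Ω, ((4 + R) * (s ^ 2 * u (s • x) ^ 2) +
        (4 + R) * (s ^ 2 * ‖fderiv ℝ u (s • x)‖ ^ 2)) := by
      apply setIntegral_mono_on (intOn h.bdd (by fun_prop)) (intOn h.bdd (by fun_prop)) h.meas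
      intro x hx
      have hxR : ‖x‖ ≤ R := by simpa using h.bd hx
      have l1 : |fderiv ℝ u (s • x) x| ≤ ‖fderiv ℝ u (s • x)‖ * R :=
        ((fderiv ℝ u (s • x)).le_opNorm x).trans (mul_le_mul_of_nonneg_left hxR (norm_nonneg _))
      simp only [hG]
      generalize fderiv ℝ u (s • x) x = y at *
      generalize hd : ‖fderiv ℝ u (s • x)‖ = d at *
      have hd0 : 0 ≤ d := hd ▸ norm_nonneg _
      generalize u (s • x) = v
      have l2 : 2 * v * y ≤ R * (v ^ 2 + d ^ 2) := by
        calc 2 * v * y ≤ |2 * v * y| := le_abs_self _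
          _ = 2 * |v| * |y| := by rw [abs_mul, abs_mul]; simp
          _ ≤ 2 * |v| * (d * R) := by gcongr
          _ = R * (2 * |v| * d) := by ring
          _ ≤ R * (|v| ^ 2 + d ^ 2) := by
            apply mul_le_mul_of_nonneg_left _ hR
            nlinarith [sq_nonneg (|v| - d)]
          _ = R * (v ^ 2 + d ^ 2) := by rw [sq_abs]
      have l3 : 2 * s ≤ 4 * s ^ 2 := by nlinarith [hs.1]
      have l4 := mul_le_mul_of_nonneg_right l3 (sq_nonneg v)
      have l5 := mul_le_mul_of_nonneg_left l2 (sq_nonneg s)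
      nlinarith [mul_nonneg (sq_nonneg s) (sq_nonneg d)]
    rw [integral_add (intOn h.bdd (by fun_prop)) (intOn h.bdd (by fun_prop)), integral_const_mul,
      integral_const_mul, integral_const_mul, integral_const_mul] at b1
    have m1 := mono s h0 hs.2 (fun x => u x ^ 2) (by fun_prop) (fun x => sq_nonneg _)
    have m2 := mono s h0 hs.2 (fun x => ‖fderiv ℝ u x‖ ^ 2) (by fun_prop) (fun x => sq_nonneg _)
    nlinarith
  have hfin := (convex_Icc (1/2:ℝ) 1).image_sub_le_mul_sub_of_deriv_le
    (fun s _ => (hder s).continuousAt.continuousWithinAt)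
    (fun s _ => (hder s).differentiableAt.differentiableWithinAt)
    (C := (4 + R) * ((∫ x in Ω, u x ^ 2) + ∫ x in Ω, ‖fderiv ℝ u x‖ ^ 2))
    (fun s hs => by rw [(hder s).deriv]; exact bound s (interior_subset hs))
    σ ⟨hσ, hσ1⟩ 1 ⟨by norm_num, le_rfl⟩ hσ1
  rw [ks σ (by linarith), ks 1 one_pos, one_smul] at hfin
  exact hfin

open scoped Topology Pointwise

lemma nEig_sand {R : ℝ} (hR : 0 ≤ R) {Ω Ω' : Set E2} (h : Adm R Ω) (h' : Adm R Ω') {κ : ℝ}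
    (hκ : 0 < κ) (hκ1 : κ ≤ 1) (hκ6 : 1 / 2 ≤ κ ^ 6) (s1 : ∀ x ∈ Ω', κ • x ∈ Ω)
    (s2 : ∀ x ∈ Ω, κ • x ∈ Ω') {ε : ℝ} (hε : ε = (4 + R) * (1 - κ ^ 2)) :
    nEig1 Ω * (1 - 3 * ε) ≤ nEig1 Ω' * (1 + 3 * ε * nEig1 Ω) := by
  have hμ0 := nEig1_nonneg Ω
  have hκ2 : κ ^ 2 ≤ 1 := pow_le_one₀ hκ.le hκ1
  have hε0 : 0 ≤ ε := by rw [hε]; exact mul_nonneg (by linarith) (by linarith)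
  have hσ : 1 / 2 ≤ κ ^ 2 := by
    have : κ ^ 6 ≤ κ ^ 2 := pow_le_pow_of_le_one hκ.le hκ1 (by norm_num)
    linarith
  have hpos : 0 < 1 + 3 * ε * nEig1 Ω := by positivity
  rw [← div_le_iff₀ hpos]
  apply le_nEig1 h'.op h'.bdd h'.disc h'.sym
  intro u hu hm
  rw [div_mul_eq_mul_div, div_le_iff₀ hpos]
  have cu := hu.continuous
  have cd := continuous_fderiv_of hu
  have hE := shell_est hR h' hu hσ hκ2
  have sub1 : κ • Ω ⊆ Ω' := by
    rintro _ ⟨x, hx, rfl⟩; exact s2 x hx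
  have sub2 : (κ ^ 2) • Ω' ⊆ κ • Ω := by
    rintro _ ⟨x, hx, rfl⟩
    refine ⟨κ • x, s1 x hx, ?_⟩
    simp only [smul_smul]; rw [sq]
  have mk : MeasurableSet (κ • Ω) := (h.op.smul₀ hκ.ne').measurableSet
  have bk : Bornology.IsBounded (κ • Ω) := h'.bdd.subset sub1
  have split : ∀ g : E2 → ℝ, Continuous g →
      ∫ x in Ω', g x = (∫ x in κ • Ω, g x) + ∫ x in Ω' \ κ • Ω, g x := by
    intro g hg
    rw [← setIntegral_union disjoint_sdiff_self_right (h'.meas.diff mk)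
      ((intOn h'.bdd hg).mono_set sub1) ((intOn h'.bdd hg).mono_set sdiff_subset),
      union_sdiff_cancel sub1]
  have vpos := h.vol_pos
  have vs := vol_sand h hκ s1
  obtain ⟨m, hmdef⟩ : ∃ m : ℝ, m = (∫ x in Ω, u (κ • x)) / (volume Ω).toReal := ⟨_, rfl⟩
  have hv : ContDiff ℝ (⊤ : ℕ∞) (fun x => u (κ • x) - m) := by fun_prop
  have hvm : ∫ x in Ω, (u (κ • x) - m) = 0 := by
    rw [integral_sub (intOn h.bdd (by fun_prop)) (intOn h.bdd (by fun_prop)), setIntegral_const,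
      smul_eq_mul, Measure.real, hmdef]
    field_simp; ring
  have hmain := nEig1_mul_le hv hvm
  have e1 : ∫ x in Ω, (u (κ • x) - m) ^ 2 = (∫ x in Ω, u (κ • x) ^ 2) -
      (∫ x in Ω, u (κ • x)) ^ 2 / (volume Ω).toReal := by
    have : ∀ x, (u (κ • x) - m) ^ 2 = u (κ • x) ^ 2 - 2 * m * u (κ • x) + m ^ 2 := by intro x; ring
    simp only [this]
    rw [integral_add (intOn h.bdd (by fun_prop)) (intOn h.bdd (by fun_prop)),
      integral_sub (intOn h.bdd (by fun_prop)) (intOn h.bdd (by fun_prop)), integral_const_mul,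
      setIntegral_const, smul_eq_mul, Measure.real, hmdef]
    field_simp; ring
  have e2 : ∫ x in Ω, ‖fderiv ℝ (fun x => u (κ • x) - m) x‖ ^ 2 = ∫ x in κ • Ω, ‖fderiv ℝ u x‖ ^ 2 := by
    rw [← scale_int Ω (fun x => ‖fderiv ℝ u x‖ ^ 2) hκ, ← integral_const_mul]
    congr 1
    funext x
    rw [fderiv_sub_const, fderiv_scale hu, norm_smul, mul_pow, Real.norm_eq_abs, sq_abs]
  rw [e1, e2] at hmain
  have g1 : ∫ x in κ • Ω, ‖fderiv ℝ u x‖ ^ 2 ≤ ∫ x in Ω', ‖fderiv ℝ u x‖ ^ 2 :=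
    setIntegral_mono_set (intOn h'.bdd (by fun_prop)) (Eventually.of_forall fun x => sq_nonneg _)
      (LE.le.eventuallyLE sub1)
  have g2 : ∫ x in (κ ^ 2) • Ω', u x ^ 2 ≤ ∫ x in κ • Ω, u x ^ 2 :=
    setIntegral_mono_set (intOn bk (by fun_prop)) (Eventually.of_forall fun x => sq_nonneg _)
      (LE.le.eventuallyLE sub2)
  have g3 := scale_int Ω (fun x => u x ^ 2) hκ
  have g4 := scale_int Ω u hκ
  have g5 := split (fun x => u x ^ 2) (by fun_prop)
  have g6 := split u cu
  rw [hm] at g6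
  have g7 := cs_set (h'.bdd.subset (sdiff_subset (t := κ • Ω))) cu
  have g8 : (volume (Ω' \ κ • Ω)).toReal ≤ (volume Ω').toReal :=
    ENNReal.toReal_mono (vol_fin h'.bdd) (measure_mono sdiff_subset)
  have p1 : 0 ≤ ∫ x in Ω, u (κ • x) ^ 2 := integral_nonneg fun x => sq_nonneg _
  have p2 : 0 ≤ ∫ x in Ω' \ κ • Ω, u x ^ 2 := integral_nonneg fun x => sq_nonneg _
  have p3 : 0 ≤ (volume (Ω' \ κ • Ω)).toReal := ENNReal.toReal_nonneg
  rw [show (4 + R) * ((∫ x in Ω', u x ^ 2) + ∫ x in Ω', ‖fderiv ℝ u x‖ ^ 2) * (1 - κ ^ 2) =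
    ε * ((∫ x in Ω', u x ^ 2) + ∫ x in Ω', ‖fderiv ℝ u x‖ ^ 2) by rw [hε]; ring] at hE
  generalize (∫ x in Ω', u x ^ 2) = V at *
  generalize (∫ x in Ω', ‖fderiv ℝ u x‖ ^ 2) = N at *
  generalize (∫ x in κ • Ω, ‖fderiv ℝ u x‖ ^ 2) = N' at *
  generalize (∫ x in (κ ^ 2) • Ω', u x ^ 2) = W2 at *
  generalize (∫ x in κ • Ω, u x ^ 2) = W at *
  generalize (∫ x in κ • Ω, u x) = a' at *
  generalize (∫ x in Ω' \ κ • Ω, u x) = b' at *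
  generalize (∫ x in Ω' \ κ • Ω, u x ^ 2) = B at *
  generalize (∫ x in Ω, u (κ • x) ^ 2) = b at *
  generalize (∫ x in Ω, u (κ • x)) = a at *
  generalize (volume Ω).toReal = v at *
  generalize (volume Ω').toReal = v' at *
  generalize (volume (Ω' \ κ • Ω)).toReal = v'' at *
  generalize nEig1 Ω = μ at *
  -- arithmetic
  have q1 : B ≤ V - W2 := by linarith
  have q2 : a ^ 2 / v ≤ 2 * (V - W2) := by
    rw [div_le_iff₀ vpos]
    have t1 : (κ ^ 2 * a) ^ 2 ≤ v' * B := by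
      have : (κ ^ 2 * a) ^ 2 = b' ^ 2 := by
        have : κ ^ 2 * a = - b' := by linarith
        rw [this]; ring
      rw [this]
      exact g7.trans (mul_le_mul_of_nonneg_right g8 p2)
    have t2 : κ ^ 2 * (κ ^ 2 * a) ^ 2 ≤ v * B := by
      calc κ ^ 2 * (κ ^ 2 * a) ^ 2 ≤ κ ^ 2 * (v' * B) := mul_le_mul_of_nonneg_left t1 (sq_nonneg _)
        _ = (κ ^ 2 * v') * B := by ring
        _ ≤ v * B := mul_le_mul_of_nonneg_right vs p2
    have t3 : κ ^ 2 * (κ ^ 2 * a) ^ 2 = κ ^ 6 * a ^ 2 := by ring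
    have t4 : (1 / 2) * a ^ 2 ≤ κ ^ 6 * a ^ 2 := mul_le_mul_of_nonneg_right hκ6 (sq_nonneg _)
    have t5 : v * B ≤ v * (V - W2) := mul_le_mul_of_nonneg_left q1 vpos.le
    linarith
  have q3 : V - (V - W2) ≤ b := by nlinarith
  have q4 : μ * (V - 3 * (V - W2)) ≤ N := by
    have : μ * (V - 3 * (V - W2)) ≤ μ * (b - a ^ 2 / v) :=
      mul_le_mul_of_nonneg_left (by linarith) hμ0
    linarith
  have q5 := mul_le_mul_of_nonneg_left hE hμ0
  nlinarith

lemma tendsto_div_aux {ι : Type*} {l : Filter ι} {f g : ι → ℝ} {a b : ℝ} (hf : Tendsto f l (𝓝 a))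
    (hg : Tendsto g l (𝓝 b)) (hb : b ≠ 0) : Tendsto (fun t => f t / g t) l (𝓝 (a / b)) :=
  hf.div hg hb

lemma tendsto_vol {ι : Type*} {l : Filter ι} {R : ℝ} {Ω0 : Set E2} {Ω : ι → Set E2} {κ : ι → ℝ}
    (h0 : Adm R Ω0) (hΩ : ∀ᶠ t in l, Adm R (Ω t)) (hκ : Tendsto κ l (𝓝 1))
    (s1 : ∀ᶠ t in l, ∀ x ∈ Ω t, κ t • x ∈ Ω0) (s2 : ∀ᶠ t in l, ∀ x ∈ Ω0, κ t • x ∈ Ω t) :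
    Tendsto (fun t => (volume (Ω t)).toReal) l (𝓝 (volume Ω0).toReal) := by
  have pos : ∀ᶠ t in l, 0 < κ t := hκ.eventually (lt_mem_nhds one_pos)
  have t1 : Tendsto (fun t => κ t ^ 2 * (volume Ω0).toReal) l (𝓝 (volume Ω0).toReal) := by
    simpa using (hκ.pow 2).mul_const (volume Ω0).toReal
  have t2 : Tendsto (fun t => (volume Ω0).toReal / κ t ^ 2) l (𝓝 (volume Ω0).toReal) := by
    simpa using tendsto_div_aux (tendsto_const_nhds (x := (volume Ω0).toReal)) (hκ.pow 2) (by norm_num)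
  refine tendsto_of_tendsto_of_tendsto_of_le_of_le' t1 t2 ?_ ?_
  · filter_upwards [pos, hΩ, s2] with t a b c
    exact vol_sand b a c
  · filter_upwards [pos, s1] with t a c
    rw [le_div_iff₀ (by positivity), mul_comm]
    exact vol_sand h0 a c

lemma tendsto_dEig {ι : Type*} {l : Filter ι} {R : ℝ} {Ω0 : Set E2} {Ω : ι → Set E2} {κ : ι → ℝ}
    (h0 : Adm R Ω0) (hΩ : ∀ᶠ t in l, Adm R (Ω t)) (hκ : Tendsto κ l (𝓝 1))
    (s1 : ∀ᶠ t in l, ∀ x ∈ Ω t, κ t • x ∈ Ω0) (s2 : ∀ᶠ t in l, ∀ x ∈ Ω0, κ t • x ∈ Ω t) :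
    Tendsto (fun t => dEig1 (Ω t)) l (𝓝 (dEig1 Ω0)) := by
  have pos : ∀ᶠ t in l, 0 < κ t := hκ.eventually (lt_mem_nhds one_pos)
  have t1 : Tendsto (fun t => κ t ^ 2 * dEig1 Ω0) l (𝓝 (dEig1 Ω0)) := by
    simpa using (hκ.pow 2).mul_const (dEig1 Ω0)
  have t2 : Tendsto (fun t => dEig1 Ω0 / κ t ^ 2) l (𝓝 (dEig1 Ω0)) := by
    simpa using tendsto_div_aux (tendsto_const_nhds (x := dEig1 Ω0)) (hκ.pow 2) (by norm_num)
  refine tendsto_of_tendsto_of_tendsto_of_le_of_le' t1 t2 ?_ ?_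
  · filter_upwards [pos, hΩ, s1] with t a b c
    exact dEig_sand b.op b.ne a c
  · filter_upwards [pos, s2] with t a c
    rw [le_div_iff₀ (by positivity), mul_comm]
    exact dEig_sand h0.op h0.ne a c

lemma tendsto_nEig {ι : Type*} {l : Filter ι} {R : ℝ} (hR : 0 ≤ R) {Ω0 : Set E2} {Ω : ι → Set E2}
    {κ : ι → ℝ}
    (h0 : Adm R Ω0) (hΩ : ∀ᶠ t in l, Adm R (Ω t)) (hκ : Tendsto κ l (𝓝 1)) (hκ1 : ∀ᶠ t in l, κ t ≤ 1)
    (s1 : ∀ᶠ t in l, ∀ x ∈ Ω t, κ t • x ∈ Ω0) (s2 : ∀ᶠ t in l, ∀ x ∈ Ω0, κ t • x ∈ Ω t) :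
    Tendsto (fun t => nEig1 (Ω t)) l (𝓝 (nEig1 Ω0)) := by
  have pos : ∀ᶠ t in l, 0 < κ t := hκ.eventually (lt_mem_nhds one_pos)
  have p6 : ∀ᶠ t in l, 1 / 2 ≤ κ t ^ 6 := by
    have : Tendsto (fun t => κ t ^ 6) l (𝓝 1) := by simpa using hκ.pow 6
    filter_upwards [this.eventually (lt_mem_nhds (show (1/2:ℝ) < 1 by norm_num))] with t ht
    exact ht.le
  have hε : Tendsto (fun t => (4 + R) * (1 - κ t ^ 2)) l (𝓝 0) := by
    simpa using ((hκ.pow 2).const_sub 1).const_mul (4 + R)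
  have n0 := nEig1_nonneg Ω0
  generalize hμ : nEig1 Ω0 = μ at *
  have hd2 : Tendsto (fun t => 1 - 3 * ((4 + R) * (1 - κ t ^ 2)) - 3 * ((4 + R) * (1 - κ t ^ 2)) * μ) l (𝓝 1) := by
    simpa using ((hε.const_mul 3).const_sub 1).sub ((hε.const_mul 3).mul_const μ)
  have t1 : Tendsto (fun t => μ * (1 - 3 * ((4 + R) * (1 - κ t ^ 2))) /
      (1 + 3 * ((4 + R) * (1 - κ t ^ 2)) * μ)) l (𝓝 μ) := by
    have a1 : Tendsto (fun t => μ * (1 - 3 * ((4 + R) * (1 - κ t ^ 2)))) l (𝓝 μ) := by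
      simpa using ((hε.const_mul 3).const_sub 1).const_mul μ
    have a2 : Tendsto (fun t => 1 + 3 * ((4 + R) * (1 - κ t ^ 2)) * μ) l (𝓝 1) := by
      simpa using ((hε.const_mul 3).mul_const μ).const_add 1
    simpa using tendsto_div_aux a1 a2 one_ne_zero
  have t2 : Tendsto (fun t => μ /
      (1 - 3 * ((4 + R) * (1 - κ t ^ 2)) - 3 * ((4 + R) * (1 - κ t ^ 2)) * μ)) l (𝓝 μ) := by
    simpa using tendsto_div_aux (tendsto_const_nhds (x := μ)) hd2 one_ne_zero
  have e0 : ∀ t, 0 < κ t → κ t ≤ 1 → 0 ≤ (4 + R) * (1 - κ t ^ 2) := by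
    intro t a b
    have : κ t ^ 2 ≤ 1 := pow_le_one₀ a.le b
    exact mul_nonneg (by linarith) (by linarith)
  refine tendsto_of_tendsto_of_tendsto_of_le_of_le' t1 t2 ?_ ?_
  · filter_upwards [pos, p6, hκ1, hΩ, s1, s2] with t a b c d e f
    have := e0 t a c
    rw [div_le_iff₀ (by positivity)]
    have := nEig_sand hR h0 d a c b e f rfl
    rwa [hμ] at this
  · filter_upwards [pos, p6, hκ1, hΩ, s1, s2, hd2.eventually (lt_mem_nhds one_pos)] with t a b c d e f g
    rw [le_div_iff₀ g]
    have := nEig_sand hR d h0 a c b f e rfl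
    rw [hμ] at this
    linarith

open scoped Topology

/-- open coordinate box -/
def boxS (a b c d : ℝ) : Set E2 := {x | (a < x 0 ∧ x 0 < b) ∧ (c < x 1 ∧ x 1 < d)}

lemma isOpen_boxS (a b c d : ℝ) : IsOpen (boxS a b c d) := by
  have h0 : Continuous fun x : E2 => x 0 := by fun_prop
  have h1 : Continuous fun x : E2 => x 1 := by fun_prop
  exact ((isOpen_lt continuous_const h0).inter (isOpen_lt h0 continuous_const)).inter
    ((isOpen_lt continuous_const h1).inter (isOpen_lt h1 continuous_const))

lemma vol_boxS {a b c d : ℝ} (hab : a ≤ b) (hcd : c ≤ d) :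
    (volume (boxS a b c d)).toReal = (b - a) * (d - c) := by
  have h1 := (PiLp.volume_preserving_toLp (Fin 2)).measure_preimage
    (isOpen_boxS a b c d).measurableSet.nullMeasurableSet
  have h2 : (WithLp.toLp 2 : (Fin 2 → ℝ) → E2) ⁻¹' boxS a b c d =
      Set.pi Set.univ (fun i => Ioo (![a, c] i) (![b, d] i)) := by
    ext y
    simp [boxS, Set.mem_pi, Fin.forall_fin_two]
  rw [← h1, h2, Real.volume_pi_Ioo]
  simp [Fin.prod_univ_two, ENNReal.toReal_mul, ENNReal.toReal_ofReal, sub_nonneg.2 hab,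
    sub_nonneg.2 hcd]

/-- the disc with a thin horizontal rectangle attached -/
def Omf (M w : ℝ) : Set E2 := Metric.ball 0 1 ∪ {x | |x 0| < M ∧ |x 1| < w}

lemma rect_eq (M w : ℝ) : {x : E2 | |x 0| < M ∧ |x 1| < w} = boxS (-M) M (-w) w := by
  ext x
  simp [boxS, abs_lt]

lemma abs_c0 (x : E2) : |x 0| ≤ ‖x‖ := by simpa using PiLp.norm_apply_le x 0
lemma abs_c1 (x : E2) : |x 1| ≤ ‖x‖ := by simpa using PiLp.norm_apply_le x 1
lemma norm_le_c (x : E2) : ‖x‖ ≤ |x 0| + |x 1| := by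
  rw [EuclideanSpace.norm_eq, Fin.sum_univ_two]
  apply Real.sqrt_le_iff.2
  refine ⟨by positivity, ?_⟩
  simp only [Real.norm_eq_abs]
  nlinarith [mul_nonneg (abs_nonneg (x 0)) (abs_nonneg (x 1))]

lemma Omf_bd {M w : ℝ} (hM : 1 ≤ M) (hw : 0 ≤ w) : ∀ x ∈ Omf M w, ‖x‖ < M + w := by
  rintro x (hx | ⟨h0, h1⟩)
  · have : ‖x‖ < 1 := by simpa using hx
    linarith
  · have := norm_le_c x
    linarith

lemma Omf_adm {M w R : ℝ} (hM : 1 ≤ M) (hw : 0 ≤ w) (hR : M + w ≤ R) : Adm R (Omf M w) where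
  op := Metric.isOpen_ball.union (by rw [rect_eq]; exact isOpen_boxS _ _ _ _)
  disc := subset_union_left
  bd := fun x hx => by
    have := Omf_bd hM hw x hx
    simp; linarith
  sym := fun x => by simp [Omf]
  star := by
    rintro x hx κ h0 h1
    rcases hx with hx | ⟨a, b⟩
    · left
      have : ‖x‖ < 1 := by simpa using hx
      have : κ * ‖x‖ < 1 := by nlinarith [norm_nonneg x]
      simpa [norm_smul, abs_of_nonneg h0] using this
    · right
      have e : ∀ i, (κ • x) i = κ * x i := fun i => by simp
      simp only [Set.mem_ofPred_eq, e, abs_mul, abs_of_nonneg h0]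
      exact ⟨by nlinarith [abs_nonneg (x 0)], by nlinarith [abs_nonneg (x 1)]⟩

lemma Omf_zero (M : ℝ) : Omf M 0 = unitDisc := by
  unfold Omf unitDisc
  have : {x : E2 | |x 0| < M ∧ |x 1| < 0} = ∅ := by
    ext x
    simp [not_lt.2 (abs_nonneg (x 1))]
  rw [this, union_empty]

lemma Omf_vol_le {M w : ℝ} (hM : 1 ≤ M) (hw : 0 ≤ w) :
    (volume (Omf M w)).toReal ≤ π + 4 * (w * M) := by
  have h := Omf_adm hM hw le_rfl
  have hb : Bornology.IsBounded {x : E2 | |x 0| < M ∧ |x 1| < w} := h.bdd.subset subset_union_right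
  have h1 : volume (Omf M w) ≤ volume unitDisc + volume {x : E2 | |x 0| < M ∧ |x 1| < w} :=
    measure_union_le _ _
  have h2 := ENNReal.toReal_mono (ENNReal.add_ne_top.2 ⟨vol_fin (h.bdd.subset h.disc), vol_fin hb⟩) h1
  rw [ENNReal.toReal_add (vol_fin (h.bdd.subset h.disc)) (vol_fin hb), vol_disc, rect_eq,
    vol_boxS (by linarith) (by linarith)] at h2
  linarith

lemma Omf_vol_ge {M w : ℝ} (hM : 1 ≤ M) (hw : 0 ≤ w) :
    π + 2 * (w * (M - 1)) ≤ (volume (Omf M w)).toReal := by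
  have h := Omf_adm hM hw le_rfl
  have hsub : boxS 1 M (-w) w ⊆ Omf M w := by
    rintro x ⟨⟨a, b⟩, c⟩
    exact Or.inr ⟨abs_lt.2 ⟨by linarith, b⟩, abs_lt.2 c⟩
  have hd : Disjoint unitDisc (boxS 1 M (-w) w) := by
    rw [Set.disjoint_left]
    rintro x hx ⟨⟨a, b⟩, c⟩
    have : ‖x‖ < 1 := by simpa [unitDisc] using hx
    have := abs_c0 x
    have := le_abs_self (x 0)
    linarith
  have h1 : volume unitDisc + volume (boxS 1 M (-w) w) ≤ volume (Omf M w) := by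
    rw [← measure_union hd (isOpen_boxS _ _ _ _).measurableSet]
    exact measure_mono (union_subset h.disc hsub)
  have h2 := ENNReal.toReal_mono (vol_fin h.bdd) h1
  rw [ENNReal.toReal_add (vol_fin (h.bdd.subset h.disc)) (vol_fin (h.bdd.subset hsub)), vol_disc,
    vol_boxS (by linarith) (by linarith)] at h2
  linarith

lemma Omf_x0 {M w : ℝ} (hM : 1 ≤ M) (hw : 0 ≤ w) :
    w * M ^ 3 / 4 ≤ ∫ x in Omf M w, (x 0) ^ 2 := by
  have h := Omf_adm hM hw le_rfl
  have hsub : boxS (M / 2) M (-w) w ⊆ Omf M w := by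
    rintro x ⟨⟨a, b⟩, c⟩
    exact Or.inr ⟨abs_lt.2 ⟨by linarith, b⟩, abs_lt.2 c⟩
  have h1 : ∫ x in boxS (M / 2) M (-w) w, (x 0) ^ 2 ≤ ∫ x in Omf M w, (x 0) ^ 2 :=
    setIntegral_mono_set (intOn h.bdd (by fun_prop)) (Eventually.of_forall fun x => sq_nonneg _)
      (LE.le.eventuallyLE hsub)
  have h2 : ∫ x in boxS (M / 2) M (-w) w, (M / 2) ^ 2 ≤ ∫ x in boxS (M / 2) M (-w) w, (x 0) ^ 2 := by
    apply setIntegral_mono_on (intOn (h.bdd.subset hsub) (by fun_prop))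
      (intOn (h.bdd.subset hsub) (by fun_prop)) (isOpen_boxS _ _ _ _).measurableSet
    rintro x ⟨⟨a, b⟩, c⟩
    exact pow_le_pow_left₀ (by linarith) a.le 2
  rw [setIntegral_const, Measure.real, vol_boxS (by linarith) (by linarith), smul_eq_mul] at h2
  nlinarith

lemma norm_fderiv_x0 (x : E2) : ‖fderiv ℝ (fun x : E2 => x 0) x‖ ≤ 1 := by
  have : fderiv ℝ (fun x : E2 => x 0) x = EuclideanSpace.proj (𝕜 := ℝ) 0 :=
    (EuclideanSpace.proj (𝕜 := ℝ) (0 : Fin 2)).fderiv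
  rw [this]
  apply ContinuousLinearMap.opNorm_le_bound _ zero_le_one
  intro y
  simpa using abs_c0 y

lemma Omf_neu {M w : ℝ} (hM : 1 ≤ M) (hw : 0 ≤ w) :
    nEig1 (Omf M w) * (w * M ^ 3 / 4) ≤ (volume (Omf M w)).toReal := by
  have h := Omf_adm hM hw le_rfl
  have h1 := nEig1_mul_le contDiff_x0 (integral_odd (Ω := Omf M w) (v := fun x => x 0) h.sym h.meas
    (fun x => by simp))
  have h2 : ∫ x in Omf M w, ‖fderiv ℝ (fun x : E2 => x 0) x‖ ^ 2 ≤ ∫ x in Omf M w, (1:ℝ) := by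
    apply setIntegral_mono_on (intOn h.bdd ?_) (intOn h.bdd (by fun_prop)) h.meas
    · intro x _
      exact pow_le_one₀ (norm_nonneg _) (norm_fderiv_x0 x)
    · exact ((contDiff_x0.continuous_fderiv (by simp)).norm).pow 2
  rw [setIntegral_const, Measure.real, smul_eq_mul, mul_one] at h2
  have h3 := mul_le_mul_of_nonneg_left (Omf_x0 hM hw) (nEig1_nonneg (Omf M w))
  linarith

lemma Omf_dir_le {M w : ℝ} (hM : 1 ≤ M) (hw : 0 ≤ w) : dEig1 (Omf M w) ≤ dEig1 unitDisc := by
  have h := Omf_adm hM hw le_rfl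
  have := dEig_sand (Ω := Omf M w) (Ω' := unitDisc) Metric.isOpen_ball ⟨0, by simp [unitDisc]⟩ one_pos
    (fun x hx => by rw [one_smul]; exact h.disc hx)
  simpa using this

lemma Omf_dir_ge {M w Λ : ℝ} (hM : 1 ≤ M) (hw : 0 < w) (hw1 : w ≤ 1) (hΛ : Λ = dEig1 unitDisc)
    (hΛ0 : 0 < Λ) (h1 : 16 * π ^ 3 * Λ ^ 2 * w ^ 2 * (M + 1) ≤ 1)
    (h2 : 4 * π ^ 2 * Λ * w ^ 2 * (M + 1) ^ 2 ≤ 1 / 2) :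
    Λ * (1 - 4 * π * Λ * w ^ 2 * (M + 1)) ≤ dEig1 (Omf M w) := by
  have h := Omf_adm hM hw.le le_rfl
  apply le_dEig1 h.op h.ne
  intro u hu hc hs
  have := dir_lower hu (ρ := M + 1) (w := w) (Λ := Λ) (by linarith) hw hw1
    (fun x hx => by
      have := Omf_bd hM hw.le x (hs hx)
      simp; linarith)
    (by
      intro r θ hr hsin hx
      rcases hs hx with hx | ⟨a, b⟩
      · rw [mem_ball_zero_iff, norm_smul_er (by linarith)] at hx
        linarith
      · have e : (r • er θ) 1 = r * Real.sin θ := by simp [er_one]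
        rw [e, abs_mul, abs_of_nonneg (by linarith)] at b
        nlinarith [abs_nonneg (Real.sin θ)])
    hΛ hΛ0 (m := 2 * π * w) (q := 2 * π * w * (M + 1)) rfl rfl
    (by nlinarith) (by nlinarith)
  have e : Λ * (2 * π * w * (M + 1)) * (2 * π * w) / π = 4 * π * Λ * w ^ 2 * (M + 1) := by
    field_simp
    ring
  rwa [e] at this

open scoped Topology

lemma cone_step {K : Set E2} (hK : Convex ℝ K) (ho : IsOpen K) {r0 M' ε : ℝ} (hr : 0 < r0)
    (hM : 0 ≤ M') (hε : ε = r0 / (M' + 3))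
    (hb : Metric.ball 0 r0 ⊆ K) {x y z : E2} (hx : r0 ≤ ‖x‖) (hyK : y ∈ closure K) (hyM : ‖y‖ ≤ M')
    (hyx : ‖y - x‖ < ε) (hz : z ∈ coneSet y (-(‖x‖⁻¹ • x)) ε) : z ∈ K := by
  obtain ⟨z1, z2, z3⟩ := hz
  have εpos : 0 < ε := by rw [hε]; positivity
  have hε' : ε * (M' + 3) = r0 := by rw [hε]; field_simp
  have xpos : 0 < ‖x‖ := lt_of_lt_of_le hr hx
  have hy1 : ‖x‖ - ‖y‖ ≤ ‖y - x‖ := by rw [← norm_neg (y - x), neg_sub]; exact norm_sub_norm_le x y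
  have hy2 : ‖y‖ - ‖x‖ ≤ ‖y - x‖ := norm_sub_norm_le y x
  have hye : ε < ‖y‖ := by nlinarith
  have ypos : 0 < ‖y‖ := by linarith
  set ξ := -(‖x‖⁻¹ • x) with hξ
  set v := z - y with hv
  have ξ1 : ‖ξ‖ = 1 := by
    rw [hξ, norm_neg, norm_smul, norm_inv, norm_norm, inv_mul_cancel₀ xpos.ne']
  set e := ‖v‖⁻¹ • v with he
  have e1 : ‖e‖ = 1 := by
    rw [he, norm_smul, norm_inv, norm_norm, inv_mul_cancel₀ z2.ne']
  have hin : Real.cos ε ≤ ⟪e, ξ⟫ := by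
    rw [he, real_inner_smul_left, inv_mul_eq_div, le_div_iff₀ z2]
    exact z1
  have hd : ‖e - ξ‖ ≤ ε := by
    have h1 : ‖e - ξ‖ ^ 2 ≤ ε ^ 2 := by
      rw [norm_sub_sq_real, e1, ξ1]
      have := Real.one_sub_sq_div_two_le_cos (x := ε)
      linarith
    exact (pow_le_pow_iff_left₀ (norm_nonneg _) εpos.le two_ne_zero).1 h1
  have hxξ : y - x = y + ‖x‖ • ξ := by
    rw [hξ, smul_neg, smul_smul, mul_inv_cancel₀ xpos.ne', one_smul, sub_eq_add_neg]
  have hp : y + ‖y‖ • e = (y - x) + (‖y‖ - ‖x‖) • ξ + ‖y‖ • (e - ξ) := by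
    rw [hxξ]
    module
  have hpn : ‖y + ‖y‖ • e‖ < r0 := by
    rw [hp]
    have h1 := norm_add_le ((y - x) + (‖y‖ - ‖x‖) • ξ) (‖y‖ • (e - ξ))
    have h2 := norm_add_le (y - x) ((‖y‖ - ‖x‖) • ξ)
    have h3 : ‖(‖y‖ - ‖x‖) • ξ‖ ≤ ‖y - x‖ := by
      rw [norm_smul, ξ1, mul_one, Real.norm_eq_abs]
      exact abs_le.2 ⟨by linarith, by linarith⟩
    have h4 : ‖‖y‖ • (e - ξ)‖ ≤ M' * ε := by
      rw [norm_smul, norm_norm]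
      exact mul_le_mul hyM hd (norm_nonneg _) hM
    nlinarith
  have hpK : y + ‖y‖ • e ∈ interior K := by
    rw [ho.interior_eq]
    exact hb (by simpa using hpn)
  have := hK.combo_interior_closure_mem_interior hpK hyK (a := ‖v‖ / ‖y‖) (b := 1 - ‖v‖ / ‖y‖)
    (by positivity) (by rw [sub_nonneg, div_le_one ypos]; linarith) (by ring)
  have ez : (‖v‖ / ‖y‖) • (y + ‖y‖ • e) + (1 - ‖v‖ / ‖y‖) • y = z := by
    have : ‖v‖ • e = v := by rw [he, smul_smul, mul_inv_cancel₀ z2.ne', one_smul]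
    rw [smul_add, smul_smul, div_mul_cancel₀ _ ypos.ne', this, hv]
    module
  rw [ez, ho.interior_eq] at this
  exact this

lemma cone_union {K1 K2 : Set E2} (h1 : Convex ℝ K1) (h2 : Convex ℝ K2) (o1 : IsOpen K1)
    (o2 : IsOpen K2) {r0 M' : ℝ} (hr : 0 < r0) (hM : 0 ≤ M') (b1 : Metric.ball 0 r0 ⊆ K1)
    (b2 : Metric.ball 0 r0 ⊆ K2) (c : K1 ∪ K2 ⊆ Metric.closedBall 0 M') :
    ∃ ε > 0, ConeProperty (K1 ∪ K2) ε := by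
  refine ⟨r0 / (M' + 3), by positivity, ?_⟩
  intro x hx
  have hxn : r0 ≤ ‖x‖ := by
    by_contra hlt
    have : x ∈ K1 ∪ K2 := Or.inl (b1 (by simpa using hlt))
    rw [(o1.union o2).frontier_eq] at hx
    exact hx.2 this
  have xpos : 0 < ‖x‖ := lt_of_lt_of_le hr hxn
  refine ⟨-(‖x‖⁻¹ • x), ?_, ?_⟩
  · rw [norm_neg, norm_smul, norm_inv, norm_norm, inv_mul_cancel₀ xpos.ne']
  · rintro y ⟨hy, hyx⟩ z hz
    have hyM : ‖y‖ ≤ M' := by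
      have := closure_minimal c Metric.isClosed_closedBall hy
      simpa using this
    rw [Metric.mem_ball, dist_eq_norm] at hyx
    rw [closure_union] at hy
    rcases hy with hy | hy
    · exact Or.inl (cone_step h1 o1 hr hM rfl b1 hxn hy hyM hyx hz)
    · exact Or.inr (cone_step h2 o2 hr hM rfl b2 hxn hy hyM hyx hz)

lemma convex_boxS (a b c d : ℝ) : Convex ℝ (boxS a b c d) := by
  have l : ∀ i : Fin 2, IsLinearMap ℝ (fun x : E2 => x i) := fun i =>
    ⟨fun x y => by simp, fun s x => by simp⟩
  exact ((convex_halfSpace_gt (l 0) a).inter (convex_halfSpace_lt (l 0) b)).inter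
    ((convex_halfSpace_gt (l 1) c).inter (convex_halfSpace_lt (l 1) d))

lemma Omf_cone {M w : ℝ} (hM : 1 ≤ M) (hw : 0 ≤ w) (hw1 : w ≤ 1) :
    ∃ ε > 0, ConeProperty (Omf M w) ε := by
  have h := Omf_adm hM hw le_rfl
  rcases hw.eq_or_lt with h0 | h0
  · rw [← h0, Omf_zero]
    have := cone_union (K1 := unitDisc) (K2 := unitDisc) (convex_ball 0 1) (convex_ball 0 1)
      Metric.isOpen_ball Metric.isOpen_ball one_pos zero_le_one subset_rfl subset_rfl
      (by rw [union_self]; exact Metric.ball_subset_closedBall)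
    rwa [union_self] at this
  · have e : Omf M w = Metric.ball 0 1 ∪ boxS (-M) M (-w) w := by rw [← rect_eq]; rfl
    have hbd := h.bd
    rw [e] at hbd ⊢
    refine cone_union (convex_ball 0 1) (convex_boxS _ _ _ _) Metric.isOpen_ball (isOpen_boxS _ _ _ _)
      h0 (by linarith : 0 ≤ M + w) (Metric.ball_subset_ball hw1) ?_ hbd
    intro x hx
    rw [mem_ball_zero_iff] at hx
    have := abs_c0 x
    have := abs_c1 x
    rw [← rect_eq]
    exact ⟨by linarith, by linarith⟩

/-- parameters along the path -/
def Mf (t : ℝ) : ℝ := 1 / (1 - t)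
def wf (c t : ℝ) : ℝ := c * t * (1 - t) ^ 2

lemma one_le_Mf {t : ℝ} (h0 : 0 ≤ t) (h1 : t < 1) : 1 ≤ Mf t := by
  unfold Mf
  rw [le_div_iff₀ (by linarith)]
  linarith

lemma wf_nonneg {c t : ℝ} (hc : 0 ≤ c) (h0 : 0 ≤ t) : 0 ≤ wf c t := by
  unfold wf; positivity

lemma wf_le {c t : ℝ} (hc : 0 ≤ c) (h0 : 0 ≤ t) (h1 : t < 1) : wf c t ≤ c := by
  unfold wf
  have : (1 - t) ^ 2 ≤ 1 := pow_le_one₀ (by linarith) (by linarith)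
  calc c * t * (1 - t) ^ 2 ≤ c * t * 1 := mul_le_mul_of_nonneg_left this (by positivity)
    _ ≤ c := by nlinarith

lemma wM_eq {c t : ℝ} (h1 : t < 1) : wf c t * Mf t = c * t * (1 - t) := by
  unfold wf Mf
  have : 1 - t ≠ 0 := by linarith
  field_simp

lemma path_dir_ge {c t Λ : ℝ} (hc : 0 < c) (hc1 : c ≤ 1 / 1000) (hΛ : Λ = dEig1 unitDisc)
    (hcΛ : c * Λ ≤ 1 / 1000) (h0 : 0 ≤ t) (h1 : t < 1) :
    π * Λ ≤ (volume (Omf (Mf t) (wf c t))).toReal * dEig1 (Omf (Mf t) (wf c t)) := by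
  have hΛn : 0 ≤ Λ := by rw [hΛ]; exact dEig1_nonneg _
  rcases hΛn.eq_or_lt with hz | hΛ0
  · rw [← hz, mul_zero]
    exact mul_nonneg ENNReal.toReal_nonneg (dEig1_nonneg _)
  rcases h0.eq_or_lt with ht | ht
  · rw [← ht]
    simp [wf, Omf_zero, vol_disc, hΛ]
  have hM := one_le_Mf h0 h1
  have hw0 : 0 < wf c t := by
    unfold wf
    have : 0 < 1 - t := by linarith
    positivity
  have hwc := wf_le hc.le h0 h1
  have wM := wM_eq (c := c) h1
  have L : Mf t - 1 = t * Mf t := by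
    unfold Mf
    have : 1 - t ≠ 0 := by linarith
    field_simp
    ring
  have V := Omf_vol_ge hM hw0.le
  set M := Mf t
  set w := wf c t
  have π4 := Real.pi_lt_four
  have π3 := Real.pi_gt_three
  -- w * (M+1) ≤ 2 * c * t
  have k1 : w * (M + 1) ≤ 2 * (c * t) := by
    have : w ≤ w * M := by nlinarith
    have : c * t * (1 - t) ≤ c * t := by
      have : 0 < c * t := by positivity
      nlinarith
    nlinarith
  have k1' : w * (M + 1) ≤ 2 * c := by nlinarith
  have k0 : 0 < w * (M + 1) := by positivity
  have kΛ : w * (M + 1) * Λ ≤ 1 / 500 := by nlinarith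
  have kΛt : w * (M + 1) * Λ ≤ t / 500 := by nlinarith
  have wΛ : w * Λ ≤ 1 / 1000 := by nlinarith
  have p2 : π ^ 2 ≤ 16 := by nlinarith
  have p3 : π ^ 3 ≤ 64 := by nlinarith
  have a1 : (w * (M + 1) * Λ) * (w * Λ) ≤ 1 / 500000 := by
    have := mul_le_mul kΛ wΛ (by positivity) (by norm_num)
    linarith
  have a2 : (w * (M + 1) * Λ) * (w * (M + 1)) ≤ 1 / 250000 := by
    have := mul_le_mul kΛ (k1'.trans (by linarith : 2 * c ≤ 1 / 500)) k0.le (by norm_num)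
    linarith
  have c1 : 16 * π ^ 3 * Λ ^ 2 * w ^ 2 * (M + 1) ≤ 1 := by
    have := mul_le_mul p3 a1 (by positivity) (by norm_num)
    linarith
  have c2 : 4 * π ^ 2 * Λ * w ^ 2 * (M + 1) ^ 2 ≤ 1 / 2 := by
    have := mul_le_mul p2 a2 (by positivity) (by norm_num)
    linarith
  have D := Omf_dir_ge hM hw0 (by linarith) hΛ hΛ0 c1 c2
  -- X = 4 π Λ w² (M+1)
  have X0 : 0 ≤ 4 * π * Λ * w ^ 2 * (M + 1) := by positivity
  have X1 : π * (4 * π * Λ * w ^ 2 * (M + 1)) ≤ w * (M - 1) := by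
    have s1 := mul_le_mul p2 kΛt (by positivity) (by norm_num)
    have s2 : t ≤ M - 1 := by rw [L]; nlinarith
    have s3 : 4 * (π ^ 2 * (w * (M + 1) * Λ)) ≤ M - 1 := by linarith
    have s4 := mul_le_mul_of_nonneg_left s3 hw0.le
    linarith
  have X2 : 4 * π * Λ * w ^ 2 * (M + 1) ≤ 1 / 2 := by
    have : 4 * π * Λ * w ^ 2 * (M + 1) = 4 * π * ((w * (M + 1) * Λ) * w) := by ring
    rw [this]
    have s : (w * (M + 1) * Λ) * w ≤ 1 / 500 * 1 :=
      mul_le_mul kΛ (by linarith) hw0.le (by norm_num)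
    nlinarith
  have Y0 : 0 ≤ w * (M - 1) := mul_nonneg hw0.le (by linarith)
  clear c1 c2 a1 a2 kΛ kΛt
  generalize 4 * π * Λ * w ^ 2 * (M + 1) = X at X0 X1 X2 D
  have f1 : π ≤ (π + 2 * (w * (M - 1))) * (1 - X) := by
    have f2 := mul_le_mul_of_nonneg_left X2 Y0
    have f3 : (π + 2 * (w * (M - 1))) * (1 - X) =
      π + 2 * (w * (M - 1)) - π * X - 2 * (w * (M - 1) * X) := by ring
    linarith
  calc π * Λ ≤ (π + 2 * (w * (M - 1))) * (1 - X) * Λ := mul_le_mul_of_nonneg_right f1 hΛn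
    _ = (π + 2 * (w * (M - 1))) * (Λ * (1 - X)) := by ring
    _ ≤ _ := mul_le_mul V D (mul_nonneg hΛn (by linarith)) ENNReal.toReal_nonneg

lemma path_vol_le {c t : ℝ} (hc : 0 < c) (h0 : 0 ≤ t) (h1 : t < 1) :
    (volume (Omf (Mf t) (wf c t))).toReal ≤ π + 4 * (c * t * (1 - t)) := by
  have := Omf_vol_le (one_le_Mf h0 h1) (wf_nonneg hc.le h0)
  rwa [wM_eq h1] at this

lemma path_neu_le {c t : ℝ} (hc : 0 < c) (hc1 : c ≤ 1 / 1000) (h0 : 0 ≤ t) (h1 : t < 1) :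
    (volume (Omf (Mf t) (wf c t))).toReal * nEig1 (Omf (Mf t) (wf c t)) ≤ π * nEig1 unitDisc := by
  have h := Omf_adm (one_le_Mf h0 h1) (wf_nonneg hc.le h0) le_rfl
  have hw := wf_le hc.le h0 h1
  have hv := path_vol_le hc h0 h1
  refine neu_upper h.op h.bdd h.disc h.sym (wf_nonneg hc.le h0) (by linarith) ?_ ?_
  · rintro x (hx | ⟨a, b⟩) hn
    · rw [mem_ball_zero_iff] at hx
      linarith
    · exact b.le
  · have : c * t * (1 - t) ≤ 1 / 1000 * 1 * 1 := by gcongr; linarith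
    linarith

lemma path_dir_le {c t : ℝ} (hc : 0 < c) (h0 : 0 ≤ t) (h1 : t < 1) :
    (volume (Omf (Mf t) (wf c t))).toReal * dEig1 (Omf (Mf t) (wf c t)) ≤
      (π + 4 * (c * t * (1 - t))) * dEig1 unitDisc := by
  have := path_vol_le hc h0 h1
  exact mul_le_mul this (Omf_dir_le (one_le_Mf h0 h1) (wf_nonneg hc.le h0)) (dEig1_nonneg _)
    (ENNReal.toReal_nonneg.trans this)

lemma path_neu_lim {c t : ℝ} (hc : 0 < c) (hc1 : c ≤ 1 / 1000) (h0 : 1 / 2 ≤ t) (h1 : t < 1) :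
    (volume (Omf (Mf t) (wf c t))).toReal * nEig1 (Omf (Mf t) (wf c t)) ≤ 200 / c * (1 - t) := by
  have h00 : 0 ≤ t := by linarith
  have a := Omf_neu (one_le_Mf h00 h1) (wf_nonneg hc.le h00)
  have hv := path_vol_le hc h00 h1
  have n0 := nEig1_nonneg (Omf (Mf t) (wf c t))
  have p : 0 < 1 - t := by linarith
  have e : wf c t * Mf t ^ 3 / 4 = c * t / (4 * (1 - t)) := by
    unfold wf Mf
    field_simp
  rw [e] at a
  have : c * t * (1 - t) ≤ 1 / 1000 * 1 * 1 := by gcongr; linarith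
  have v5 : (volume (Omf (Mf t) (wf c t))).toReal ≤ 5 := by
    have := Real.pi_lt_four
    linarith
  have v0 : 0 ≤ (volume (Omf (Mf t) (wf c t))).toReal := ENNReal.toReal_nonneg
  generalize (volume (Omf (Mf t) (wf c t))).toReal = V at *
  generalize nEig1 (Omf (Mf t) (wf c t)) = μ at *
  have b : μ ≤ 40 / c * (1 - t) := by
    have a2 : μ * (c * t / (4 * (1 - t))) ≤ 5 := a.trans v5
    rw [mul_div_assoc', div_le_iff₀ (by positivity)] at a2
    rw [div_mul_eq_mul_div, le_div_iff₀ hc]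
    have : μ * c * (1 / 2) ≤ μ * c * t := mul_le_mul_of_nonneg_left h0 (by positivity)
    linarith
  calc V * μ ≤ 5 * (40 / c * (1 - t)) := mul_le_mul v5 b n0 (by norm_num)
    _ = _ := by ring

open scoped Topology

lemma Omf_scale {M w M' w' κ : ℝ} (h0 : 0 ≤ κ) (h1 : κ ≤ 1) (hM : κ * M ≤ M') (hw : κ * w ≤ w')
    (hκ : 0 < κ) : ∀ x ∈ Omf M w, κ • x ∈ Omf M' w' := by
  rintro x (hx | ⟨a, b⟩)
  · left
    rw [mem_ball_zero_iff] at hx ⊢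
    rw [norm_smul, Real.norm_of_nonneg h0]
    nlinarith [norm_nonneg x]
  · right
    have e : ∀ i, (κ • x) i = κ * x i := fun i => by simp
    simp only [Set.mem_ofPred_eq, e, abs_mul, abs_of_nonneg h0]
    exact ⟨lt_of_lt_of_le (mul_lt_mul_of_pos_left a hκ) hM,
      lt_of_lt_of_le (mul_lt_mul_of_pos_left b hκ) hw⟩

lemma continuousAt_Mf {t : ℝ} (h : t < 1) : ContinuousAt Mf t := by
  unfold Mf
  exact continuousAt_const.div (by fun_prop) (by linarith)

lemma continuous_wf (c : ℝ) : Continuous (wf c) := by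
  unfold wf
  fun_prop

/-- the common hypotheses of the three continuity lemmas along the path -/
lemma path_kappa {c t0 : ℝ} (hc : 0 < c) (hc1 : c ≤ 1 / 1000) (h0 : 0 ≤ t0) (h1 : t0 < 1) :
    ∃ κ : ℝ → ℝ, Tendsto κ (𝓝[Ico 0 1] t0) (𝓝 1) ∧ (∀ᶠ t in 𝓝[Ico 0 1] t0, κ t ≤ 1) ∧
      (∀ᶠ t in 𝓝[Ico 0 1] t0, ∀ x ∈ Omf (Mf t) (wf c t), κ t • x ∈ Omf (Mf t0) (wf c t0)) ∧
      (∀ᶠ t in 𝓝[Ico 0 1] t0, ∀ x ∈ Omf (Mf t0) (wf c t0), κ t • x ∈ Omf (Mf t) (wf c t)) := by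
  have hin : ∀ᶠ t in 𝓝[Ico (0:ℝ) 1] t0, t ∈ Ico (0:ℝ) 1 := self_mem_nhdsWithin
  have cM : Tendsto Mf (𝓝[Ico 0 1] t0) (𝓝 (Mf t0)) :=
    (continuousAt_Mf h1).tendsto.mono_left nhdsWithin_le_nhds
  have cw : Tendsto (wf c) (𝓝[Ico 0 1] t0) (𝓝 (wf c t0)) :=
    (continuous_wf c).continuousAt.tendsto.mono_left nhdsWithin_le_nhds
  have M0 := one_le_Mf h0 h1
  rcases h0.eq_or_lt with ht | ht
  · subst ht
    have e0 : Omf (Mf 0) (wf c 0) = unitDisc := by simp [wf, Omf_zero]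
    have eM : Mf 0 = 1 := by simp [Mf]
    have ew : wf c 0 = 0 := by simp [wf]
    rw [e0]
    refine ⟨fun t => 1 / (Mf t + wf c t), ?_, ?_, ?_, ?_⟩
    · have := tendsto_div_aux (tendsto_const_nhds (x := (1:ℝ))) (cM.add cw) (by rw [eM, ew]; norm_num)
      simpa [eM, ew] using this
    · filter_upwards [hin] with t ht
      have a := one_le_Mf ht.1 ht.2
      have b := wf_nonneg hc.le ht.1
      rw [div_le_one (by linarith)]
      linarith
    · filter_upwards [hin] with t ht x hx
      have a := one_le_Mf ht.1 ht.2
      have b := wf_nonneg hc.le ht.1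
      have := Omf_bd a b x hx
      have p : 0 < Mf t + wf c t := by linarith
      unfold unitDisc
      rw [mem_ball_zero_iff, norm_smul, Real.norm_of_nonneg (by positivity), one_div,
        inv_mul_lt_iff₀ p]
      linarith
    · filter_upwards [hin] with t ht x hx
      have a := one_le_Mf ht.1 ht.2
      have b := wf_nonneg hc.le ht.1
      have p : 0 < Mf t + wf c t := by linarith
      left
      have hx : ‖x‖ < 1 := by simpa [unitDisc] using hx
      rw [mem_ball_zero_iff, norm_smul, Real.norm_of_nonneg (by positivity), one_div,
        inv_mul_lt_iff₀ p]
      linarith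
  · have wpos : ∀ {t : ℝ}, 0 < t → t < 1 → 0 < wf c t := by
      intro t a b
      unfold wf
      have : 0 < 1 - t := by linarith
      positivity
    have w0 := wpos ht h1
    have hpos : ∀ᶠ t in 𝓝[Ico (0:ℝ) 1] t0, 0 < t :=
      nhdsWithin_le_nhds (lt_mem_nhds ht)
    have key : ∀ {t : ℝ}, 0 < t → t < 1 →
        let κ := min (min (Mf t / Mf t0) (Mf t0 / Mf t)) (min (wf c t / wf c t0) (wf c t0 / wf c t))
        0 < κ ∧ κ ≤ 1 ∧ κ * Mf t ≤ Mf t0 ∧ κ * wf c t ≤ wf c t0 ∧ κ * Mf t0 ≤ Mf t ∧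
          κ * wf c t0 ≤ wf c t := by
      intro t a b κ
      have pM : 0 < Mf t := by linarith [one_le_Mf a.le b]
      have pM0 : 0 < Mf t0 := by linarith
      have pw := wpos a b
      have i1 : κ ≤ Mf t / Mf t0 := (min_le_left _ _).trans (min_le_left _ _)
      have i2 : κ ≤ Mf t0 / Mf t := (min_le_left _ _).trans (min_le_right _ _)
      have i3 : κ ≤ wf c t / wf c t0 := (min_le_right _ _).trans (min_le_left _ _)
      have i4 : κ ≤ wf c t0 / wf c t := (min_le_right _ _).trans (min_le_right _ _)
      refine ⟨by positivity, ?_, (le_div_iff₀ pM).1 i2, (le_div_iff₀ pw).1 i4,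
        (le_div_iff₀ pM0).1 i1, (le_div_iff₀ w0).1 i3⟩
      rcases le_total (Mf t) (Mf t0) with h | h
      · exact i1.trans ((div_le_one pM0).2 h)
      · exact i2.trans ((div_le_one pM).2 h)
    refine ⟨fun t => min (min (Mf t / Mf t0) (Mf t0 / Mf t))
      (min (wf c t / wf c t0) (wf c t0 / wf c t)), ?_, ?_, ?_, ?_⟩
    · have mne : Mf t0 ≠ 0 := by linarith
      have r1 := tendsto_div_aux cM (tendsto_const_nhds (x := Mf t0)) mne
      have r2 := tendsto_div_aux (tendsto_const_nhds (x := Mf t0)) cM mne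
      have r3 := tendsto_div_aux cw (tendsto_const_nhds (x := wf c t0)) w0.ne'
      have r4 := tendsto_div_aux (tendsto_const_nhds (x := wf c t0)) cw w0.ne'
      rw [div_self mne] at r1 r2
      rw [div_self w0.ne'] at r3 r4
      simpa using (r1.min r2).min (r3.min r4)
    · filter_upwards [hin, hpos] with t a b
      exact (key b a.2).2.1
    · filter_upwards [hin, hpos] with t a b
      obtain ⟨k0, k1, k2, k3, k4, k5⟩ := key b a.2
      exact Omf_scale k0.le k1 k2 k3 k0
    · filter_upwards [hin, hpos] with t a b
      obtain ⟨k0, k1, k2, k3, k4, k5⟩ := key b a.2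
      exact Omf_scale k0.le k1 k4 k5 k0

lemma path_cont {c : ℝ} (hc : 0 < c) (hc1 : c ≤ 1 / 1000) :
    ContinuousOn (fun t => ((volume (Omf (Mf t) (wf c t))).toReal * dEig1 (Omf (Mf t) (wf c t)),
      (volume (Omf (Mf t) (wf c t))).toReal * nEig1 (Omf (Mf t) (wf c t)))) (Ico (0:ℝ) 1) := by
  intro t0 ht0
  obtain ⟨κ, k1, k2, k3, k4⟩ := path_kappa hc hc1 ht0.1 ht0.2
  have M0 := one_le_Mf ht0.1 ht0.2
  have a0 : Adm (Mf t0 + 2) (Omf (Mf t0) (wf c t0)) :=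
    Omf_adm M0 (wf_nonneg hc.le ht0.1) (by linarith [wf_le hc.le ht0.1 ht0.2])
  have aa : ∀ᶠ t in 𝓝[Ico (0:ℝ) 1] t0, Adm (Mf t0 + 2) (Omf (Mf t) (wf c t)) := by
    have cM : Tendsto Mf (𝓝[Ico 0 1] t0) (𝓝 (Mf t0)) :=
      (continuousAt_Mf ht0.2).tendsto.mono_left nhdsWithin_le_nhds
    filter_upwards [self_mem_nhdsWithin,
      cM.eventually (gt_mem_nhds (show Mf t0 < Mf t0 + 1 by linarith))] with t ht h
    exact Omf_adm (one_le_Mf ht.1 ht.2) (wf_nonneg hc.le ht.1) (by linarith [wf_le hc.le ht.1 ht.2])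
  have v := tendsto_vol a0 aa k1 k3 k4
  have d := tendsto_dEig a0 aa k1 k3 k4
  have n := tendsto_nEig (by linarith) a0 aa k1 k2 k3 k4
  exact (v.mul d).prodMk_nhds (v.mul n)

/-- For every `η > 0` there is a continuous path inside `𝓔`, starting at the point
`A = (π λ₁(𝔻), π μ₁(𝔻))` of the unit disc, staying in the rectangle
`[π λ₁(𝔻), π λ₁(𝔻) + η] × [0, π μ₁(𝔻)]`, and converging to the point `C = (π λ₁(𝔻), 0)`. -/
theorem path_to_bottom (η : ℝ) (hη : 0 < η) :
    ∃ γ : ℝ → ℝ × ℝ,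
      ContinuousOn γ (Set.Ico 0 1) ∧
      γ 0 = (π * dEig1 unitDisc, π * nEig1 unitDisc) ∧
      (∀ t ∈ Set.Ico (0:ℝ) 1, γ t ∈ diagE) ∧
      (∀ t ∈ Set.Ico (0:ℝ) 1,
        γ t ∈ Set.Icc (π * dEig1 unitDisc) (π * dEig1 unitDisc + η) ×ˢ
              Set.Icc (0:ℝ) (π * nEig1 unitDisc)) ∧
      Tendsto γ (nhdsWithin 1 (Set.Iio 1)) (nhds (π * dEig1 unitDisc, 0)) := by
  have hΛ := dEig1_nonneg unitDisc
  set Λ := dEig1 unitDisc with hΛd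
  obtain ⟨c, hc, hc1, hcΛ, hcη⟩ : ∃ c : ℝ, 0 < c ∧ c ≤ 1 / 1000 ∧ c * Λ ≤ 1 / 1000 ∧ 4 * c * Λ ≤ η := by
    have p : 0 < min (1 / 1000) (η / 4) := lt_min (by norm_num) (by linarith)
    have q1 : min (1 / 1000) (η / 4) ≤ 1 / 1000 := min_le_left _ _
    have q2 : min (1 / 1000) (η / 4) ≤ η / 4 := min_le_right _ _
    generalize min (1 / 1000) (η / 4) = m at *
    have s1 : m / (1 + Λ) ≤ m := div_le_self p.le (by linarith)
    have s2 : m / (1 + Λ) * Λ ≤ m := by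
      rw [div_mul_eq_mul_div, div_le_iff₀ (by linarith)]
      nlinarith
    exact ⟨m / (1 + Λ), by positivity, by linarith, by linarith, by linarith⟩
  refine ⟨_, path_cont hc hc1, ?_, ?_, ?_, ?_⟩
  · simp [wf, Omf_zero, vol_disc, hΛd]
  · intro t ht
    have hw := wf_nonneg hc.le ht.1
    have h := Omf_adm (one_le_Mf ht.1 ht.2) hw le_rfl
    exact ⟨_, h.ne, h.op, h.bdd,
      Omf_cone (one_le_Mf ht.1 ht.2) hw (by linarith [wf_le hc.le ht.1 ht.2]), rfl⟩
  · intro t ht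
    refine ⟨⟨path_dir_ge hc hc1 hΛd hcΛ ht.1 ht.2, ?_⟩,
      mul_nonneg ENNReal.toReal_nonneg (nEig1_nonneg _), path_neu_le hc hc1 ht.1 ht.2⟩
    refine (path_dir_le hc ht.1 ht.2).trans ?_
    rw [← hΛd]
    have : c * t * (1 - t) ≤ c := by
      have := mul_le_mul_of_nonneg_left (show t * (1 - t) ≤ 1 by nlinarith [ht.1, ht.2]) hc.le
      linarith
    nlinarith
  · have hin : ∀ᶠ t in nhdsWithin (1:ℝ) (Set.Iio 1), t < 1 := self_mem_nhdsWithin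
    have hin2 : ∀ᶠ t in nhdsWithin (1:ℝ) (Set.Iio 1), 1 / 2 < t :=
      nhdsWithin_le_nhds (lt_mem_nhds (by norm_num))
    have tid : Tendsto (fun t : ℝ => t) (nhdsWithin (1:ℝ) (Set.Iio 1)) (nhds 1) :=
      tendsto_id.mono_left nhdsWithin_le_nhds
    apply Tendsto.prodMk_nhds
    · have up : Tendsto (fun t => (π + 4 * (c * t * (1 - t))) * Λ) (nhdsWithin 1 (Set.Iio 1))
          (nhds (π * Λ)) := by
        have h : Continuous (fun t => (π + 4 * (c * t * (1 - t))) * Λ) := by fun_prop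
        have := (h.tendsto 1).mono_left (nhdsWithin_le_nhds (s := Set.Iio (1:ℝ)))
        simpa using this
      refine tendsto_of_tendsto_of_tendsto_of_le_of_le' tendsto_const_nhds up ?_ ?_
      · filter_upwards [hin, hin2] with t a b
        exact path_dir_ge hc hc1 hΛd hcΛ (by linarith) a
      · filter_upwards [hin, hin2] with t a b
        exact path_dir_le hc (by linarith) a
    · have up : Tendsto (fun t : ℝ => 200 / c * (1 - t)) (nhdsWithin 1 (Set.Iio 1)) (nhds 0) := by
        simpa using (tid.const_sub 1).const_mul (200 / c)
      refine tendsto_of_tendsto_of_tendsto_of_le_of_le' tendsto_const_nhds up ?_ ?_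
      · filter_upwards with t
        exact mul_nonneg ENNReal.toReal_nonneg (nEig1_nonneg _)
      · filter_upwards [hin, hin2] with t a b
        exact path_neu_lim hc hc1 b.le a
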